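/- Let η_+(t) = h_H(t) · t e^{−t²/2} for some H ≥ 5, let δ ∈ ℝ, and let G_δ be the Mellin transform of η_+(t)e(δt). Let χ be a primitive Dirichlet character mod q, q ≥ 1. Assume all nontrivial zeros ρ of L(s,χ) with |Im(ρ)| ≤ T₀ satisfy Re(ρ) = 1/2, where T₀ ≥ H + max(4π²|δ|, 100). Then, with T₀' = T₀ − H, ∑_{ρ nontrivial, |Im(ρ)| > T₀} |G_δ(ρ)| ≤ (9.462 √T₀' e^{−0.1598 T₀'} + 11.287 |δ| e^{−0.1065 (T₀'/(πδ))²}) · log(qT₀/2π). -/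

import Mathlib

open MeasureTheory Set

/-- `e(t) = e^{2πit}`. -/
noncomputable def e2pi (t : ℝ) : ℂ := Complex.exp (2 * Real.pi * Complex.I * t)

/-- `h(t) = t²(2-t)³ e^{t-1/2}` on `[0,2]`, and `0` elsewhere. -/
noncomputable def hcut (t : ℝ) : ℝ :=
  if t ∈ Set.Icc (0:ℝ) 2 then t^2 * (2 - t)^3 * Real.exp (t - 1/2) else 0

/-- The kernel `F_H(y) = sin(H log y)/(π log y)`. -/
noncomputable def FH (H y : ℝ) : ℝ := Real.sin (H * Real.log y) / (Real.pi * Real.log y)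

/-- `h_H = h ∗_M F_H`, the band-limited approximation to `h`. -/
noncomputable def hH (H t : ℝ) : ℝ := ∫ y in Set.Ioi (0:ℝ), hcut (t / y) * FH H y / y

/-- `η₊(t) = h_H(t) · t e^{-t²/2}`. -/
noncomputable def etaPlus (H t : ℝ) : ℝ := hH H t * (t * Real.exp (-t^2 / 2))

/-!
Because the kernel `F_H` is band-limited, `h_H` is the inverse Mellin transform of `Mh` truncated to
`[-iH, iH]`. So `G_δ(s)` is an average over `|r| ≤ H`, with weight `Mh(ir)`, of the integrals
`∫ t ^ (s - ir) e^{-t²/2} e(δt) dt`, and rotating the ray of integration by an angle `θ < π/4`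
towards the side of `s` gains a factor `e^{-θ(|Im s| - H)}` against a Gaussian moment.

The zeros in a window of height `3` are counted by dividing `L(s, χ)`, localised by a Gaussian, by
Blaschke factors of the strip `-5/2 < Re s < 7/2` and comparing with its size at `2 + iT`. The
functional equation controls the left edge, and it also pairs `ρ` with `1 - conj ρ`, which makes the
product of the two Blaschke factors small wherever `ρ` lies in the critical strip. The same pairing
improves the Mellin bound, since `t ^ σ + t ^ (1 - σ) ≤ 1 + t`.

Summing over windows leaves a choice of `θ`: the constant `0.28245` when `δ` is small compared with
`√(T₀ - H)`, and `0.1883 (T₀ - H) / (πδ)²` otherwise.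
-/

namespace HighZeros

open Complex DirichletCharacter
open scoped ComplexConjugate Real

section FunctionalEquation

variable {q : ℕ}

lemma inv_apply_eq_conj (χ : DirichletCharacter ℂ q) (a : ZMod q) : χ⁻¹ a = conj (χ a) :=
  (MulChar.star_apply' χ a).symm

lemma even_inv {χ : DirichletCharacter ℂ q} (h : χ.Even) : χ⁻¹.Even := by
  rw [DirichletCharacter.Even, inv_apply_eq_conj, h, map_one]

lemma odd_inv {χ : DirichletCharacter ℂ q} (h : χ.Odd) : χ⁻¹.Odd := by
  rw [DirichletCharacter.Odd, inv_apply_eq_conj, h, map_neg, map_one]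

lemma Gammaℝ_conj (s : ℂ) : Gammaℝ (conj s) = conj (Gammaℝ s) := by
  have hpow : (π : ℂ) ^ (-conj s / 2) = conj ((π : ℂ) ^ (-s / 2)) := by
    rw [show -conj s / 2 = conj (-s / 2) by simp [map_ofNat],
      cpow_conj _ _ (by simpa [arg_ofReal_of_nonneg Real.pi_pos.le] using Real.pi_pos.ne),
      conj_ofReal]
  have hGamma : Gamma (conj s / 2) = conj (Gamma (s / 2)) := by
    rw [← Gamma_conj, map_div₀, map_ofNat]
  rw [Gammaℝ_def, Gammaℝ_def, map_mul, hpow, hGamma]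

lemma gammaFactor_inv_conj (χ : DirichletCharacter ℂ q) (s : ℂ) :
    gammaFactor χ⁻¹ (conj s) = conj (gammaFactor χ s) := by
  rcases χ.even_or_odd with h | h
  · rw [h.gammaFactor_def, (even_inv h).gammaFactor_def, Gammaℝ_conj]
  · rw [h.gammaFactor_def, (odd_inv h).gammaFactor_def, ← Gammaℝ_conj, map_add, map_one]

lemma gammaFactor_ne_zero_of_re_pos (χ : DirichletCharacter ℂ q) {s : ℂ} (hs : 0 < s.re) :
    gammaFactor χ s ≠ 0 := by
  rcases χ.even_or_odd with h | h <;> rw [h.gammaFactor_def]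
  · exact Gammaℝ_ne_zero_of_re_pos hs
  · exact Gammaℝ_ne_zero_of_re_pos (by rw [add_re, one_re]; linarith)

lemma Gammaℝ_ne_zero_of_im_ne_zero {s : ℂ} (hs : s.im ≠ 0) : Gammaℝ s ≠ 0 := by
  rw [Ne, Gammaℝ_eq_zero_iff]
  rintro ⟨n, rfl⟩
  simp at hs

lemma gammaFactor_ne_zero_of_im_ne_zero (χ : DirichletCharacter ℂ q) {s : ℂ} (hs : s.im ≠ 0) :
    gammaFactor χ s ≠ 0 := by
  rcases χ.even_or_odd with h | h <;> rw [h.gammaFactor_def]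
  · exact Gammaℝ_ne_zero_of_im_ne_zero hs
  · exact Gammaℝ_ne_zero_of_im_ne_zero (by simpa using hs)

variable [NeZero q]

lemma completedLFunction_eq_LFunction_mul_gammaFactor (χ : DirichletCharacter ℂ q) {s : ℂ}
    (hs : s ≠ 0) (hγ : gammaFactor χ s ≠ 0) :
    completedLFunction χ s = LFunction χ s * gammaFactor χ s := by
  rw [LFunction_eq_completed_div_gammaFactor χ s (.inl hs), div_mul_cancel₀ _ hγ]

lemma completedLFunction_eq_zero_iff_of_re_pos (χ : DirichletCharacter ℂ q) {s : ℂ}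
    (hs : 0 < s.re) : completedLFunction χ s = 0 ↔ LFunction χ s = 0 := by
  have hγ := gammaFactor_ne_zero_of_re_pos χ hs
  rw [completedLFunction_eq_LFunction_mul_gammaFactor χ (ne_zero_of_re_pos hs) hγ,
    mul_eq_zero_iff_right hγ]

lemma analyticOnNhd_LFunction (χ : DirichletCharacter ℂ q) :
    AnalyticOnNhd ℂ (LFunction χ) {1}ᶜ :=
  DifferentiableOn.analyticOnNhd
    (fun s hs ↦ (differentiableAt_LFunction χ s (.inl hs)).differentiableWithinAt)
    isOpen_compl_singleton

lemma LFunction_inv_conj_of_one_lt_re (χ : DirichletCharacter ℂ q) {s : ℂ} (hs : 1 < s.re) :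
    LFunction χ⁻¹ (conj s) = conj (LFunction χ s) := by
  rw [LFunction_eq_LSeries _ hs, LFunction_eq_LSeries _ (by simpa using hs), LSeries, LSeries,
    conj_tsum]
  refine tsum_congr fun n ↦ ?_
  rcases eq_or_ne n 0 with rfl | hn
  · simp
  · rw [LSeries.term_of_ne_zero hn, LSeries.term_of_ne_zero hn, map_div₀, inv_apply_eq_conj,
      cpow_conj _ _ (by rw [natCast_arg]; exact Real.pi_pos.ne), conj_natCast]

lemma LFunction_inv_conj (χ : DirichletCharacter ℂ q) {s : ℂ} (hs : s ≠ 1) :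
    LFunction χ⁻¹ (conj s) = conj (LFunction χ s) := by
  have conj_ne_one {z : ℂ} (hz : z ≠ 1) : conj z ≠ 1 := by
    rwa [Ne, ← map_one conj, (starRingEnd ℂ).injective.eq_iff]
  have h_analytic : AnalyticOnNhd ℂ (fun z ↦ conj (LFunction χ (conj z))) {1}ᶜ := by
    refine DifferentiableOn.analyticOnNhd (fun z hz ↦ ?_) isOpen_compl_singleton
    have h := (differentiableAt_LFunction χ (conj z) (.inl (conj_ne_one hz))).conj_conj
    rw [conj_conj] at h
    exact h.differentiableWithinAt
  have h_connected : IsPreconnected ({1}ᶜ : Set ℂ) :=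
    (isConnected_compl_singleton_of_one_lt_rank (by simp) 1).isPreconnected
  have h_near_two : LFunction χ⁻¹ =ᶠ[nhds 2] fun z ↦ conj (LFunction χ (conj z)) := by
    have : {z : ℂ | 1 < z.re} ∈ nhds (2 : ℂ) :=
      (isOpen_lt continuous_const continuous_re).mem_nhds (by simp)
    filter_upwards [this] with z hz
    simpa using LFunction_inv_conj_of_one_lt_re χ (s := conj z) (by simpa using hz)
  have h_eq := (analyticOnNhd_LFunction χ⁻¹).eqOn_of_preconnected_of_eventuallyEq h_analytic
    h_connected (by simp) h_near_two (conj_ne_one hs)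
  simpa using h_eq

lemma completedLFunction_inv_conj (χ : DirichletCharacter ℂ q) {s : ℂ} (hs : s.im ≠ 0) :
    completedLFunction χ⁻¹ (conj s) = conj (completedLFunction χ s) := by
  have hs0 : s ≠ 0 := by rintro rfl; simp at hs
  have hs1 : s ≠ 1 := by rintro rfl; simp at hs
  rw [completedLFunction_eq_LFunction_mul_gammaFactor χ hs0
      (gammaFactor_ne_zero_of_im_ne_zero χ hs),
    completedLFunction_eq_LFunction_mul_gammaFactor χ⁻¹ (by simpa using hs0)
      (gammaFactor_ne_zero_of_im_ne_zero _ (by simpa using hs)),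
    LFunction_inv_conj χ hs1, gammaFactor_inv_conj, map_mul]

lemma LFunction_one_sub_conj_eq_zero {χ : DirichletCharacter ℂ q} (hχ : χ.IsPrimitive) {ρ : ℂ}
    (hρ : LFunction χ ρ = 0) (h0 : 0 < ρ.re) (h1 : ρ.re < 1) :
    LFunction χ (1 - conj ρ) = 0 := by
  have hρ1 : ρ ≠ 1 := by rintro rfl; simp at h1
  have h_conj : LFunction χ⁻¹ (conj ρ) = 0 := by rw [LFunction_inv_conj χ hρ1, hρ, map_zero]
  rw [← completedLFunction_eq_zero_iff_of_re_pos _ (by simpa using h0)] at h_conj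
  rw [← completedLFunction_eq_zero_iff_of_re_pos _ (by simpa using h1),
    hχ.completedLFunction_one_sub, h_conj, mul_zero]

/- Apply the functional equation at `conj s` and at `1 - s` with `s = 2 + i`: conjugation
identifies the norms of the two sides, which leaves `‖rootNumber χ‖ ^ 2 = 1`. -/
lemma norm_rootNumber {χ : DirichletCharacter ℂ q} (hχ : χ.IsPrimitive) :
    ‖rootNumber χ‖ = 1 := by
  have hq : (0 : ℝ) < q := Nat.cast_pos.mpr (NeZero.pos q)
  have h_ne : ‖completedLFunction χ (2 + I)‖ ≠ 0 := by
    rw [norm_ne_zero_iff, Ne, completedLFunction_eq_zero_iff_of_re_pos χ (by simp)]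
    exact LFunction_ne_zero_of_one_le_re χ (.inr fun h ↦ by simpa using congrArg im h) (by simp)
  have h_right : ‖completedLFunction χ (2 + I)‖
      = (q : ℝ) ^ (-3 / 2 : ℝ) * ‖rootNumber χ‖ * ‖completedLFunction χ⁻¹ (1 - (2 + I))‖ := by
    have h := congrArg norm (hχ.completedLFunction_one_sub (1 - (2 + I)))
    rw [sub_sub_cancel, norm_mul, norm_mul, norm_natCast_cpow_of_pos (NeZero.pos q)] at h
    rw [h]; congr 3; norm_num
  have h_left : ‖completedLFunction χ (1 - conj (2 + I))‖
      = (q : ℝ) ^ (3 / 2 : ℝ) * ‖rootNumber χ‖ * ‖completedLFunction χ (2 + I)‖ := by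
    have h := congrArg norm (hχ.completedLFunction_one_sub (conj (2 + I)))
    rw [norm_mul, norm_mul, norm_natCast_cpow_of_pos (NeZero.pos q),
      completedLFunction_inv_conj χ (by simp), norm_conj] at h
    rw [h]; congr 3; norm_num
  have h_conj : ‖completedLFunction χ⁻¹ (1 - (2 + I))‖
      = ‖completedLFunction χ (1 - conj (2 + I))‖ := by
    rw [← norm_conj (completedLFunction χ (1 - conj (2 + I))),
      ← completedLFunction_inv_conj χ (by simp), map_sub, map_one, conj_conj]
  have h_pow : (q : ℝ) ^ (-3 / 2 : ℝ) * (q : ℝ) ^ (3 / 2 : ℝ) = 1 := by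
    rw [← Real.rpow_add hq]; norm_num
  have h_sq : ‖rootNumber χ‖ ^ 2 = 1 := by
    refine mul_right_cancel₀ h_ne ?_
    calc ‖rootNumber χ‖ ^ 2 * ‖completedLFunction χ (2 + I)‖
        = ((q : ℝ) ^ (-3 / 2 : ℝ) * (q : ℝ) ^ (3 / 2 : ℝ))
            * (‖rootNumber χ‖ ^ 2 * ‖completedLFunction χ (2 + I)‖) := by rw [h_pow, one_mul]
      _ = (q : ℝ) ^ (-3 / 2 : ℝ) * ‖rootNumber χ‖ * ‖completedLFunction χ⁻¹ (1 - (2 + I))‖ := by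
        rw [h_conj, h_left]; ring
      _ = 1 * ‖completedLFunction χ (2 + I)‖ := by rw [← h_right, one_mul]
  exact (pow_eq_one_iff_of_nonneg (norm_nonneg _) two_ne_zero).mp h_sq

end FunctionalEquation

section VerticalLines

lemma norm_LSeries_le_tsum {f : ℕ → ℂ} (hf : ∀ n, ‖f n‖ ≤ 1) {σ : ℝ} (hσ : 1 < σ) {s : ℂ}
    (hs : σ ≤ s.re) : ‖LSeries f s‖ ≤ ∑' n : ℕ, 1 / (n : ℝ) ^ σ := by
  refine tsum_of_norm_bounded (Real.summable_one_div_nat_rpow.mpr hσ).hasSum fun n ↦ ?_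
  rw [LSeries.norm_term_eq]
  split_ifs with hn
  · positivity
  · have hn1 : (1 : ℝ) ≤ n := by exact_mod_cast Nat.one_le_iff_ne_zero.mpr hn
    gcongr
    exact hf n

lemma tsum_one_div_nat_rpow_seven_halves_le : ∑' n : ℕ, 1 / (n : ℝ) ^ (7 / 2 : ℝ) ≤ 1.161 := by
  have h_comb := (hasSum_zeta_four.mul_left 0.8618).add (hasSum_zeta_two.mul_left 0.1382)
  have h_sqrt (n : ℕ) (hn : n ≠ 0) : √(n : ℝ) ≤ 0.8618 + 0.1382 * (n : ℝ) ^ 2 := by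
    rw [Real.sqrt_le_left (by positivity)]
    obtain rfl | h2 : n = 1 ∨ 2 ≤ n := by lia
    · norm_num
    · have : (2 : ℝ) ≤ n := by exact_mod_cast h2
      nlinarith [sq_nonneg ((n : ℝ) ^ 2 - 4), mul_nonneg (sub_nonneg.mpr this) n.cast_nonneg]
  have h_term (n : ℕ) : 1 / (n : ℝ) ^ (7 / 2 : ℝ)
      ≤ 0.8618 * (1 / (n : ℝ) ^ 4) + 0.1382 * (1 / (n : ℝ) ^ 2) := by
    rcases eq_or_ne n 0 with rfl | hn
    · norm_num
    have hn0 : (0 : ℝ) < n := by exact_mod_cast Nat.pos_of_ne_zero hn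
    have h_pow : (n : ℝ) ^ (7 / 2 : ℝ) * √(n : ℝ) = (n : ℝ) ^ 4 := by
      rw [Real.sqrt_eq_rpow, ← Real.rpow_add hn0]; norm_num
    calc 1 / (n : ℝ) ^ (7 / 2 : ℝ) = √(n : ℝ) / (n : ℝ) ^ 4 := by
          rw [← h_pow]; field_simp
      _ ≤ (0.8618 + 0.1382 * (n : ℝ) ^ 2) / (n : ℝ) ^ 4 := by gcongr; exact h_sqrt n hn
      _ = _ := by field_simp
  have hπ := Real.pi_lt_d4
  have hπ2 : π ^ 2 ≤ 9.86972 := by nlinarith [Real.pi_pos]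
  have hπ4 : π ^ 4 ≤ 97.4114 := by nlinarith [Real.pi_pos, sq_nonneg π]
  calc ∑' n : ℕ, 1 / (n : ℝ) ^ (7 / 2 : ℝ)
      ≤ 0.8618 * (π ^ 4 / 90) + 0.1382 * (π ^ 2 / 6) := by
        rw [← h_comb.tsum_eq]
        exact (Real.summable_one_div_nat_rpow.mpr (by norm_num)).tsum_le_tsum h_term
          h_comb.summable
    _ ≤ 1.161 := by linarith

lemma norm_Gammaℝ_add_six_le {s : ℂ} (h1 : -5 / 2 ≤ s.re) (h2 : s.re ≤ -3 / 2) (hs : s ≠ -2) :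
    ‖Gammaℝ (s + 6)‖ ≤ (√(s.im ^ 2 + 25 / 4) / (2 * π)) ^ 3 * ‖Gammaℝ s‖ := by
  have hπ := Real.pi_pos
  have hs0 : s ≠ 0 := by rintro rfl; norm_num at h2
  have hs2 : s + 2 ≠ 0 := fun h ↦ hs (eq_neg_of_add_eq_zero_left h)
  have hs4 : s + 2 + 2 ≠ 0 := fun h ↦ by
    have := congrArg re h
    simp only [add_re, re_ofNat, zero_re] at this
    linarith
  have h_norm (z : ℂ) (hz : z.im = s.im) (hz1 : -5 / 2 ≤ z.re) (hz2 : z.re ≤ 5 / 2) :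
      ‖z‖ ≤ √(s.im ^ 2 + 25 / 4) := by
    rw [norm_def, normSq_apply, hz]
    exact Real.sqrt_le_sqrt (by nlinarith)
  have h_s := h_norm s rfl h1 (by linarith)
  have h_s2 := h_norm (s + 2) (by simp) (by simp; linarith) (by simp; linarith)
  have h_s4 := h_norm (s + 2 + 2) (by simp) (by simp; linarith) (by simp; linarith)
  rw [show s + 6 = s + 2 + 2 + 2 by ring, Gammaℝ_add_two hs4, Gammaℝ_add_two hs2,
    Gammaℝ_add_two hs0]
  simp only [norm_mul, norm_div, norm_real, Complex.norm_two, Real.norm_of_nonneg hπ.le]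
  calc _ = ‖s‖ * ‖s + 2‖ * ‖s + 2 + 2‖ / (2 * π) ^ 3 * ‖Gammaℝ s‖ := by field_simp
    _ ≤ √(s.im ^ 2 + 25 / 4) * √(s.im ^ 2 + 25 / 4) * √(s.im ^ 2 + 25 / 4) / (2 * π) ^ 3
        * ‖Gammaℝ s‖ := by gcongr
    _ = _ := by ring

variable {q : ℕ}

lemma gammaFactor_ne_zero_of_re_eq_neg_five_halves (χ : DirichletCharacter ℂ q) {s : ℂ}
    (hs : s.re = -5 / 2) : gammaFactor χ s ≠ 0 := by
  have h_Gamma {z : ℂ} (hz : z.re = -5 / 2 ∨ z.re = -3 / 2) : Gammaℝ z ≠ 0 := by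
    rw [Ne, Gammaℝ_eq_zero_iff]
    rintro ⟨n, rfl⟩
    have h_int : (4 * n : ℝ) = 5 ∨ (4 * n : ℝ) = 3 := by
      simp only [neg_re, mul_re, re_ofNat, natCast_re, im_ofNat, zero_mul, sub_zero] at hz
      exact hz.imp (by intro h; linarith) (by intro h; linarith)
    norm_cast at h_int
    lia
  rcases χ.even_or_odd with h | h <;> rw [h.gammaFactor_def]
  · exact h_Gamma (.inl hs)
  · exact h_Gamma (.inr (by rw [add_re, hs, one_re]; norm_num))

lemma norm_gammaFactor_inv_one_sub_le (χ : DirichletCharacter ℂ q) {s : ℂ}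
    (hs : s.re = -5 / 2) : ‖gammaFactor χ⁻¹ (1 - s)‖
      ≤ (√(s.im ^ 2 + 25 / 4) / (2 * π)) ^ 3 * ‖gammaFactor χ s‖ := by
  have h_conj : 1 - s = conj (s + 6) := by
    apply Complex.ext
    · simp only [sub_re, one_re, conj_re, add_re, re_ofNat]; linarith
    · simp
  have hs_ne {z : ℂ} (hz : z.re ≠ -2) : z ≠ -2 := by rintro rfl; simp at hz
  rw [h_conj, gammaFactor_inv_conj, norm_conj]
  rcases χ.even_or_odd with h | h <;> rw [h.gammaFactor_def, h.gammaFactor_def]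
  · exact norm_Gammaℝ_add_six_le hs.ge (by linarith) (hs_ne (by linarith))
  · have hs1 : (s + 1).re = -3 / 2 := by rw [add_re, hs, one_re]; norm_num
    have := norm_Gammaℝ_add_six_le (s := s + 1) (by linarith) hs1.le (hs_ne (by linarith))
    rwa [add_im, one_im, add_zero, add_right_comm] at this

variable [NeZero q]

lemma norm_LFunction_le_of_seven_halves_le_re (χ : DirichletCharacter ℂ q) {s : ℂ}
    (hs : 7 / 2 ≤ s.re) : ‖LFunction χ s‖ ≤ 1.161 := by
  rw [LFunction_eq_LSeries χ (by linarith)]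
  exact (norm_LSeries_le_tsum (fun n ↦ χ.norm_le_one n) (by norm_num) hs).trans
    tsum_one_div_nat_rpow_seven_halves_le

lemma six_div_pi_sq_le_norm_LFunction (χ : DirichletCharacter ℂ q) {s : ℂ} (hs : 2 ≤ s.re) :
    6 / π ^ 2 ≤ ‖LFunction χ s‖ := by
  have hs1 : 1 < s.re := by linarith
  set χμ : ℕ → ℂ := (fun n : ℕ ↦ χ n) * fun n : ℕ ↦ (ArithmeticFunction.moebius n : ℂ)
  have h_coeff (n : ℕ) : ‖χμ n‖ ≤ 1 := by
    simp only [χμ, Pi.mul_apply, norm_mul, norm_intCast]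
    exact mul_le_one₀ (χ.norm_le_one n) (abs_nonneg _)
      (by exact_mod_cast ArithmeticFunction.abs_moebius_le_one)
  have h_inv : ‖LSeries χμ s‖ ≤ π ^ 2 / 6 := by
    refine (norm_LSeries_le_tsum h_coeff one_lt_two hs).trans_eq ?_
    simpa using hasSum_zeta_two.tsum_eq
  have h_mul : ‖LFunction χ s‖ * ‖LSeries χμ s‖ = 1 := by
    rw [LFunction_eq_LSeries χ hs1, ← norm_mul, DirichletCharacter.LSeries.mul_mu_eq_one χ hs1,
      norm_one]
  have : 1 ≤ ‖LFunction χ s‖ * (π ^ 2 / 6) := by rw [← h_mul]; gcongr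
  rw [div_le_iff₀ (by positivity)]
  linarith

lemma norm_LFunction_le_of_re_eq_neg_five_halves {χ : DirichletCharacter ℂ q}
    (hχ : χ.IsPrimitive) {s : ℂ} (hs : s.re = -5 / 2) :
    ‖LFunction χ s‖ ≤ 1.161 * (q * √(s.im ^ 2 + 25 / 4) / (2 * π)) ^ 3 := by
  have hs0 : s ≠ 0 := by rintro rfl; norm_num at hs
  have h_re : (1 - s).re = 7 / 2 := by rw [sub_re, hs, one_re]; norm_num
  have h_pow : ‖(q : ℂ) ^ (1 - s - 1 / 2)‖ = (q : ℝ) ^ 3 := by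
    have : (1 - s - 1 / 2).re = (3 : ℕ) := by rw [sub_re, h_re]; norm_num
    rw [norm_natCast_cpow_of_pos (NeZero.pos q), this, Real.rpow_natCast]
  have h_fe := hχ.completedLFunction_one_sub (1 - s)
  rw [sub_sub_cancel, completedLFunction_eq_LFunction_mul_gammaFactor χ⁻¹
    (ne_zero_of_re_pos (by linarith))
    (gammaFactor_ne_zero_of_re_pos χ⁻¹ (by linarith))] at h_fe
  rw [LFunction_eq_completed_div_gammaFactor χ s (.inl hs0), h_fe, norm_div, norm_mul, norm_mul,
    norm_mul, h_pow, norm_rootNumber hχ, mul_one,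
    div_le_iff₀ (norm_pos_iff.mpr (gammaFactor_ne_zero_of_re_eq_neg_five_halves χ hs))]
  calc (q : ℝ) ^ 3 * (‖LFunction χ⁻¹ (1 - s)‖ * ‖gammaFactor χ⁻¹ (1 - s)‖)
      ≤ (q : ℝ) ^ 3 * (1.161 *
          ((√(s.im ^ 2 + 25 / 4) / (2 * π)) ^ 3 * ‖gammaFactor χ s‖)) := by
        gcongr
        · exact norm_LFunction_le_of_seven_halves_le_re χ⁻¹ h_re.ge
        · exact norm_gammaFactor_inv_one_sub_le χ hs
    _ = _ := by ring

end VerticalLines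

section GrowthInStrips

lemma exists_norm_mellin_le {f : ℝ → ℂ} {a b : ℝ} (ha : MellinConvergent f a)
    (hb : MellinConvergent f b) : ∃ C, ∀ s : ℂ, a ≤ s.re → s.re ≤ b → ‖mellin f s‖ ≤ C := by
  refine ⟨∫ t in Ioi (0 : ℝ), (‖(t : ℂ) ^ ((a : ℂ) - 1) • f t‖ + ‖(t : ℂ) ^ ((b : ℂ) - 1) • f t‖),
    fun s has hsb ↦ norm_integral_le_of_norm_le (ha.norm.add hb.norm) ?_⟩
  filter_upwards [ae_restrict_mem measurableSet_Ioi] with t (ht : 0 < t)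
  simp only [norm_smul, norm_cpow_eq_rpow_re_of_pos ht, sub_re, ofReal_re, one_re]
  rw [← add_mul]
  gcongr
  rcases le_total 1 t with h | h
  · have := Real.rpow_le_rpow_of_exponent_le h (sub_le_sub_right hsb 1)
    linarith [Real.rpow_nonneg ht.le (a - 1)]
  · have := Real.rpow_le_rpow_of_exponent_ge ht h (sub_le_sub_right has 1)
    linarith [Real.rpow_nonneg ht.le (b - 1)]

lemma exists_norm_completedHurwitzZetaEven₀_le (x : UnitAddCircle) (a b : ℝ) :
    ∃ C, ∀ s : ℂ, a ≤ s.re → s.re ≤ b → ‖HurwitzZeta.completedHurwitzZetaEven₀ x s‖ ≤ C := by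
  have h := (HurwitzZeta.hurwitzEvenFEPair x).isStrongFEPair_toStrongFEPair
  obtain ⟨C, hC⟩ := exists_norm_mellin_le (h.hasMellin ((a / 2 : ℝ) : ℂ)).1
    (h.hasMellin ((b / 2 : ℝ) : ℂ)).1
  refine ⟨C / 2, fun s has hsb ↦ ?_⟩
  rw [HurwitzZeta.completedHurwitzZetaEven₀, norm_div, Complex.norm_two]
  gcongr
  exact hC (s / 2) (by rw [div_ofNat_re]; linarith) (by rw [div_ofNat_re]; linarith)

lemma exists_norm_completedHurwitzZetaOdd_le (x : UnitAddCircle) (a b : ℝ) :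
    ∃ C, ∀ s : ℂ, a ≤ s.re → s.re ≤ b → ‖HurwitzZeta.completedHurwitzZetaOdd x s‖ ≤ C := by
  have h := HurwitzZeta.isStrong_hurwitzOddFEPair x
  obtain ⟨C, hC⟩ := exists_norm_mellin_le (h.hasMellin (((a + 1) / 2 : ℝ) : ℂ)).1
    (h.hasMellin (((b + 1) / 2 : ℝ) : ℂ)).1
  refine ⟨C / 2, fun s has hsb ↦ ?_⟩
  rw [HurwitzZeta.completedHurwitzZetaOdd, h.Λ_eq, norm_div, Complex.norm_two]
  gcongr
  exact hC ((s + 1) / 2) (by rw [div_ofNat_re, add_re, one_re]; linarith)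
    (by rw [div_ofNat_re, add_re, one_re]; linarith)

lemma norm_Gamma_le_norm_Gamma_add_nat {z : ℂ} (hz : 1 ≤ |z.im|) (n : ℕ) :
    ‖Gamma z‖ ≤ ‖Gamma (z + n)‖ := by
  induction n with
  | zero => simp
  | succ n ih =>
    have h_one_le : 1 ≤ ‖z + n‖ := hz.trans (by simpa using abs_im_le_norm (z + n))
    have h_ne : z + n ≠ 0 := norm_pos_iff.mp (one_pos.trans_le h_one_le)
    rw [Nat.cast_succ, ← add_assoc, Gamma_add_one _ h_ne, norm_mul]
    exact ih.trans (le_mul_of_one_le_left (norm_nonneg _) h_one_le)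

lemma exists_norm_Gamma_le (a b : ℝ) :
    ∃ C, ∀ z : ℂ, a ≤ z.re → z.re ≤ b → 1 ≤ |z.im| → ‖Gamma z‖ ≤ C := by
  have h_conv (x : ℝ) (hx : 0 < x) :
      MellinConvergent (fun x : ℝ ↦ ((Real.exp (-x) : ℝ) : ℂ)) x := by
    refine (GammaIntegral_convergent (s := x) (by simpa using hx)).congr_fun (fun t _ ↦ ?_)
      measurableSet_Ioi
    simp [mul_comm]
  obtain ⟨n, hn⟩ := exists_nat_gt (-a)
  obtain ⟨C, hC⟩ := exists_norm_mellin_le (h_conv (a + n) (by linarith))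
    (h_conv (max (b + n) 1) (by positivity))
  refine ⟨C, fun z haz hzb hz ↦ (norm_Gamma_le_norm_Gamma_add_nat hz n).trans ?_⟩
  have h_re : (z + n).re = z.re + n := by simp
  rw [Gamma_eq_integral (by linarith), GammaIntegral_eq_mellin]
  exact hC _ (by linarith) (le_max_of_le_left (by linarith))

lemma norm_sin_le (z : ℂ) : ‖sin z‖ ≤ Real.exp |z.im| := by
  have h_exp (w : ℂ) (hw : w.re ≤ |z.im|) : ‖exp w‖ ≤ Real.exp |z.im| := by
    rw [norm_exp]
    exact Real.exp_le_exp.mpr hw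
  rw [sin, norm_div, norm_mul, norm_I, mul_one, Complex.norm_two, div_le_iff₀ two_pos]
  linarith [norm_sub_le (exp (-z * I)) (exp (z * I)),
    h_exp (-z * I) (by simpa using le_abs_self _), h_exp (z * I) (by simpa using neg_le_abs _)]

lemma inv_Gamma_eq_Gamma_one_sub_mul_sin {z : ℂ} (hz : z.im ≠ 0) :
    (Gamma z)⁻¹ = Gamma (1 - z) * sin (π * z) / π := by
  have hπ : (π : ℂ) ≠ 0 := by exact_mod_cast Real.pi_ne_zero
  have h_Gamma : Gamma z ≠ 0 := Gamma_ne_zero fun n h ↦ hz (by simp [h])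
  have h_sin : sin (π * z) ≠ 0 := by
    rw [Ne, sin_eq_zero_iff]
    rintro ⟨k, hk⟩
    rw [mul_comm, mul_left_inj' hπ] at hk
    simp [hk] at hz
  have h_refl := Gamma_mul_Gamma_one_sub z
  rw [eq_div_iff h_sin] at h_refl
  rw [eq_div_iff hπ, inv_mul_eq_iff_eq_mul₀ h_Gamma, ← mul_assoc, h_refl]

lemma exists_norm_inv_Gamma_le (a b : ℝ) : ∃ C, ∀ z : ℂ, a ≤ z.re → z.re ≤ b → 1 ≤ |z.im| →
    ‖(Gamma z)⁻¹‖ ≤ C * Real.exp (π * |z.im|) := by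
  obtain ⟨C, hC⟩ := exists_norm_Gamma_le (1 - b) (1 - a)
  refine ⟨C, fun z haz hzb hz ↦ ?_⟩
  have h_Gamma : ‖Gamma (1 - z)‖ ≤ C :=
    hC _ (by rw [sub_re, one_re]; linarith) (by rw [sub_re, one_re]; linarith) (by simpa using hz)
  have h_sin : ‖sin (π * z)‖ ≤ Real.exp (π * |z.im|) := by
    simpa [abs_mul, abs_of_pos Real.pi_pos] using norm_sin_le (π * z)
  have hz0 : z.im ≠ 0 := abs_pos.mp (one_pos.trans_le hz)
  rw [inv_Gamma_eq_Gamma_one_sub_mul_sin hz0, norm_div, norm_mul, norm_real,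
    Real.norm_of_nonneg Real.pi_pos.le]
  refine (div_le_self (by positivity) (by linarith [Real.pi_gt_three])).trans ?_
  exact mul_le_mul h_Gamma h_sin (norm_nonneg _) ((norm_nonneg _).trans h_Gamma)

lemma exists_norm_inv_Gammaℝ_le (a b : ℝ) : ∃ C, ∀ s : ℂ, a ≤ s.re → s.re ≤ b → 2 ≤ |s.im| →
    ‖(Gammaℝ s)⁻¹‖ ≤ C * Real.exp (π * |s.im|) := by
  obtain ⟨C, hC⟩ := exists_norm_inv_Gamma_le (a / 2) (b / 2)
  refine ⟨π ^ (b / 2) * C, fun s has hsb hs ↦ ?_⟩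
  have h_im : |(s / 2).im| = |s.im| / 2 := by rw [div_ofNat_im, abs_div, abs_two]
  have h_Gamma := hC (s / 2) (by rw [div_ofNat_re]; linarith) (by rw [div_ofNat_re]; linarith)
    (by rw [h_im]; linarith)
  have hC0 : 0 ≤ C := by
    by_contra! hC0
    exact (norm_nonneg _).not_gt
      (h_Gamma.trans_lt (mul_neg_of_neg_of_pos hC0 (Real.exp_pos _)))
  rw [Gammaℝ_def, mul_inv, norm_mul, norm_inv, norm_cpow_eq_rpow_re_of_pos Real.pi_pos,
    ← Real.rpow_neg Real.pi_pos.le, mul_assoc]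
  gcongr
  · linarith [Real.pi_gt_three]
  · rw [div_ofNat_re, neg_re]; linarith
  · refine h_Gamma.trans ?_
    rw [h_im]
    gcongr
    linarith [abs_nonneg s.im]

variable {q : ℕ} [NeZero q]

lemma norm_natCast_cpow_neg_le (s : ℂ) {a : ℝ} (hs : a ≤ s.re) :
    ‖(q : ℂ) ^ (-s)‖ ≤ (q : ℝ) ^ (-a) := by
  rw [norm_natCast_cpow_of_pos (NeZero.pos q), neg_re]
  exact Real.rpow_le_rpow_of_exponent_le (by exact_mod_cast NeZero.pos q) (by linarith)

lemma norm_sum_mul_le {ι : Type*} [Fintype ι] (f g : ι → ℂ) {C : ι → ℝ}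
    (hg : ∀ i, ‖g i‖ ≤ C i) : ‖∑ i, f i * g i‖ ≤ ∑ i, ‖f i‖ * C i :=
  norm_sum_le_of_le _ fun i _ ↦ by rw [norm_mul]; gcongr; exact hg i

lemma exists_norm_completedLFunction_le (χ : DirichletCharacter ℂ q) (a b : ℝ) :
    ∃ C, ∀ s : ℂ, a ≤ s.re → s.re ≤ b → 1 ≤ |s.im| → ‖completedLFunction χ s‖ ≤ C := by
  choose Ceven h_even using fun x ↦ exists_norm_completedHurwitzZetaEven₀_le x a b
  choose Codd h_odd using fun x ↦ exists_norm_completedHurwitzZetaOdd_le x a b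
  set Q := (q : ℝ) ^ (-a)
  refine ⟨Q * ∑ j : ZMod q, ‖χ j‖ * Ceven (ZMod.toAddCircle j)
    + Q * ∑ j : ZMod q, ‖χ j‖ * Codd (ZMod.toAddCircle j) + Q * ‖χ 0‖ + Q * ‖∑ j, χ j‖,
    fun s has hsb hs ↦ ?_⟩
  have h_pow : ‖(q : ℂ) ^ (-s)‖ ≤ Q := norm_natCast_cpow_neg_le s has
  have h_div (c w : ℂ) (hw : 1 ≤ ‖w‖) : ‖(q : ℂ) ^ (-s) * c / w‖ ≤ Q * ‖c‖ := by
    rw [norm_div, norm_mul]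
    exact (div_le_self (by positivity) hw).trans (by gcongr)
  have h_mul (c : ℂ) (B : ℝ) (hc : ‖c‖ ≤ B) : ‖(q : ℂ) ^ (-s) * c‖ ≤ Q * B := by
    rw [norm_mul]; gcongr
  have h_s : 1 ≤ ‖s‖ := hs.trans (abs_im_le_norm s)
  have h_one_sub : 1 ≤ ‖1 - s‖ := hs.trans (by simpa using abs_im_le_norm (1 - s))
  rw [DirichletCharacter.completedLFunction, ZMod.completedLFunction_eq, ZMod.completedLFunction₀]
  refine norm_sub_le_of_le (norm_sub_le_of_le (norm_add_le_of_le ?_ ?_) ?_) ?_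
  · exact h_mul _ _ (norm_sum_mul_le _ _ fun j ↦ h_even _ s has hsb)
  · exact h_mul _ _ (norm_sum_mul_le _ _ fun j ↦ h_odd _ s has hsb)
  · exact h_div _ _ h_s
  · exact h_div _ _ h_one_sub

lemma exists_norm_LFunction_le (χ : DirichletCharacter ℂ q) (a b : ℝ) :
    ∃ C, ∀ s : ℂ, a ≤ s.re → s.re ≤ b → 2 ≤ |s.im| →
      ‖LFunction χ s‖ ≤ C * Real.exp (π * |s.im|) := by
  obtain ⟨CΛ, hΛ⟩ := exists_norm_completedLFunction_le χ a b
  obtain ⟨CΓ, hΓ⟩ := exists_norm_inv_Gammaℝ_le a (b + 1)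
  refine ⟨CΛ * CΓ, fun s has hsb hs ↦ ?_⟩
  have hs0 : s ≠ 0 := by rintro rfl; norm_num at hs
  have h_factor : ‖(gammaFactor χ s)⁻¹‖ ≤ CΓ * Real.exp (π * |s.im|) := by
    rcases χ.even_or_odd with h | h <;> rw [h.gammaFactor_def]
    · exact hΓ s has (by linarith) hs
    · simpa using hΓ (s + 1) (by simp; linarith) (by simpa using hsb) (by simpa using hs)
  have h_completed := hΛ s has hsb (by linarith)
  rw [LFunction_eq_completed_div_gammaFactor χ s (.inl hs0), div_eq_mul_inv, norm_mul, mul_assoc]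
  exact mul_le_mul h_completed h_factor (norm_nonneg _) ((norm_nonneg _).trans h_completed)

end GrowthInStrips

section Blaschke

open Filter Topology Asymptotics

lemma norm_sin_sq (z : ℂ) : ‖sin z‖ ^ 2 = (Real.cosh (2 * z.im) - Real.cos (2 * z.re)) / 2 := by
  have h_sin : sin z = ((Real.sin z.re * Real.cosh z.im : ℝ) : ℂ)
      + ((Real.cos z.re * Real.sinh z.im : ℝ) : ℂ) * I := by
    rw [Complex.sin_eq]; push_cast; ring
  rw [h_sin, ← normSq_eq_norm_sq, normSq_add_mul_I, Real.cosh_two_mul, Real.cos_two_mul,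
    mul_pow, mul_pow, Real.sin_sq, Real.cosh_sq]
  ring

lemma diffContOnCl_dslope {U : Set ℂ} (hU : IsOpen U) {f : ℂ → ℂ} (hf : DiffContOnCl ℂ f U)
    {ρ : ℂ} (hρ : ρ ∈ U) : DiffContOnCl ℂ (dslope f ρ) U where
  differentiableOn := (differentiableOn_dslope (hU.mem_nhds hρ)).mpr hf.differentiableOn
  continuousOn := (continuousOn_dslope (mem_of_superset (hU.mem_nhds hρ) subset_closure)).mpr
    ⟨hf.continuousOn, hf.differentiableAt hU hρ⟩

lemma exists_diffContOnCl_eq_mul {U : Set ℂ} (hU : IsOpen U) {f B : ℂ → ℂ}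
    (hf : DiffContOnCl ℂ f U) (hB : DiffContOnCl ℂ B U) {ρ : ℂ} (hρ : ρ ∈ U) (hfρ : f ρ = 0)
    (hBρ : B ρ = 0) (hB' : deriv B ρ ≠ 0) (hB0 : ∀ s ∈ closure U, s ≠ ρ → B s ≠ 0) :
    ∃ f₁, DiffContOnCl ℂ f₁ U ∧ ∀ s ∈ closure U, f s = f₁ s * B s := by
  have h_ne (s : ℂ) (hs : s ∈ closure U) : dslope B ρ s ≠ 0 := by
    rcases eq_or_ne s ρ with rfl | hsρ
    · rwa [dslope_same]
    · rw [dslope_of_ne _ hsρ, slope_def_field, hBρ, sub_zero]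
      exact div_ne_zero (hB0 s hs hsρ) (sub_ne_zero.mpr hsρ)
  refine ⟨fun s ↦ dslope f ρ s / dslope B ρ s, ?_, fun s hs ↦ ?_⟩
  · simpa only [div_eq_mul_inv, smul_eq_mul, Pi.inv_apply] using
      (diffContOnCl_dslope hU hf hρ).smul ((diffContOnCl_dslope hU hB hρ).inv h_ne)
  · have hf_eq : f s = dslope f ρ s * (s - ρ) := by
      simpa [hfρ, mul_comm] using (sub_smul_dslope f ρ s).symm
    have hB_eq : B s = dslope B ρ s * (s - ρ) := by
      simpa [hBρ, mul_comm] using (sub_smul_dslope B ρ s).symm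
    have := h_ne s hs
    rw [hB_eq, hf_eq]
    field_simp

/-- The Blaschke factor of the strip `a < Re s < b` with zero `ρ`: it vanishes only at `ρ` and is
unimodular on the two boundary lines. -/
noncomputable def stripBlaschke (a b : ℝ) (ρ s : ℂ) : ℂ :=
  sin ((π / (2 * (b - a)) : ℝ) * (s - ρ)) / sin ((π / (2 * (b - a)) : ℝ) * (s + conj ρ - 2 * a))

variable {a b : ℝ} {ρ s : ℂ}

lemma norm_stripBlaschke_sq (a b : ℝ) (ρ s : ℂ) : ‖stripBlaschke a b ρ s‖ ^ 2 =
    (Real.cosh (π / (b - a) * (s.im - ρ.im)) - Real.cos (π / (b - a) * (s.re - ρ.re))) /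
    (Real.cosh (π / (b - a) * (s.im - ρ.im)) -
      Real.cos (π / (b - a) * (s.re + ρ.re - 2 * a))) := by
  have h_angle (x : ℝ) : 2 * (π / (2 * (b - a)) * x) = π / (b - a) * x := by
    rw [mul_comm 2 (b - a), ← div_div]; ring
  rw [stripBlaschke, norm_div, div_pow, norm_sin_sq, norm_sin_sq,
    div_div_div_cancel_right₀ two_ne_zero]
  simp only [re_ofReal_mul, im_ofReal_mul, h_angle]
  congr <;> simp [← sub_eq_add_neg]

lemma isOpen_re_preimage_Ioo (a b : ℝ) : IsOpen (re ⁻¹' Ioo a b) :=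
  isOpen_Ioo.preimage continuous_re

lemma closure_re_preimage_Ioo (hab : a < b) : closure (re ⁻¹' Ioo a b) = re ⁻¹' Icc a b := by
  rw [closure_preimage_re, closure_Ioo hab.ne]

lemma cos_lt_one_of_mem_Ioo {x : ℝ} (h0 : 0 < x) (h1 : x < 2 * π) : Real.cos x < 1 := by
  refine (Real.cos_le_one x).lt_of_ne fun h ↦ h0.ne' ?_
  exact (Real.cos_eq_one_iff_of_lt_of_lt (by linarith) h1).mp h

lemma sin_stripBlaschke_denom_ne_zero (hρ : ρ ∈ re ⁻¹' Ioo a b) (hs : s ∈ re ⁻¹' Icc a b) :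
    sin ((π / (2 * (b - a)) : ℝ) * (s + conj ρ - 2 * a)) ≠ 0 := by
  obtain ⟨hρa : a < ρ.re, hρb : ρ.re < b⟩ := hρ
  obtain ⟨hsa : a ≤ s.re, hsb : s.re ≤ b⟩ := hs
  have hab : 0 < b - a := by linarith
  rw [← norm_ne_zero_iff, ← pow_ne_zero_iff two_ne_zero, norm_sin_sq, re_ofReal_mul]
  refine (half_pos (sub_pos.mpr ((cos_lt_one_of_mem_Ioo ?_ ?_).trans_le
    (Real.one_le_cosh _)))).ne'
  · have : 0 < s.re + ρ.re - 2 * a := by linarith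
    simp only [add_re, sub_re, conj_re, mul_re, re_ofNat, im_ofNat, ofReal_re, zero_mul, sub_zero]
    positivity
  · have : (s.re + ρ.re - 2 * a) / (b - a) < 2 := by rw [div_lt_iff₀ hab]; linarith
    calc 2 * (π / (2 * (b - a)) * (s + conj ρ - 2 * a).re)
        = π * ((s.re + ρ.re - 2 * a) / (b - a)) := by simp; field_simp
      _ < 2 * π := by nlinarith [Real.pi_pos]

lemma diffContOnCl_stripBlaschke (hρ : ρ ∈ re ⁻¹' Ioo a b) :
    DiffContOnCl ℂ (stripBlaschke a b ρ) (re ⁻¹' Ioo a b) := by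
  have h_num : Differentiable ℂ fun s ↦ sin ((π / (2 * (b - a)) : ℝ) * (s - ρ)) := by fun_prop
  have h_den : Differentiable ℂ fun s ↦ sin ((π / (2 * (b - a)) : ℝ) * (s + conj ρ - 2 * a)) := by
    fun_prop
  simpa only [stripBlaschke, div_eq_mul_inv, smul_eq_mul] using!
    h_num.diffContOnCl.smul (h_den.diffContOnCl.inv fun s hs ↦
      sin_stripBlaschke_denom_ne_zero hρ (closure_re_preimage_Ioo (hρ.1.trans hρ.2) ▸ hs))

lemma stripBlaschke_self (a b : ℝ) (ρ : ℂ) : stripBlaschke a b ρ ρ = 0 := by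
  simp [stripBlaschke]

lemma deriv_stripBlaschke_ne_zero (hρ : ρ ∈ re ⁻¹' Ioo a b) :
    deriv (stripBlaschke a b ρ) ρ ≠ 0 := by
  have hab : 0 < b - a := by linarith [hρ.1, hρ.2]
  have h_den := sin_stripBlaschke_denom_ne_zero hρ (preimage_mono Ioo_subset_Icc_self hρ)
  set κ : ℂ := ((π / (2 * (b - a)) : ℝ) : ℂ) with hκ
  have hκ0 : κ ≠ 0 := by rw [hκ, ofReal_ne_zero]; positivity
  have h_num' : HasDerivAt (fun s ↦ sin (κ * (s - ρ))) κ ρ := by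
    simpa using (((hasDerivAt_id ρ).sub_const ρ).const_mul κ).csin
  have h_den' : DifferentiableAt ℂ (fun s ↦ sin (κ * (s + conj ρ - 2 * a))) ρ := by fun_prop
  have h_quot := h_num'.fun_div h_den'.hasDerivAt h_den
  rw [show stripBlaschke a b ρ = fun s ↦ sin (κ * (s - ρ)) / sin (κ * (s + conj ρ - 2 * a)) from
    rfl, h_quot.deriv]
  simpa using ⟨hκ0, h_den⟩

lemma stripBlaschke_ne_zero (hρ : ρ ∈ re ⁻¹' Ioo a b) (hs : s ∈ re ⁻¹' Icc a b) (hsρ : s ≠ ρ) :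
    stripBlaschke a b ρ s ≠ 0 := by
  refine div_ne_zero (fun h_zero ↦ hsρ ?_) (sin_stripBlaschke_denom_ne_zero hρ hs)
  obtain ⟨hρa : a < ρ.re, hρb : ρ.re < b⟩ := hρ
  obtain ⟨hsa : a ≤ s.re, hsb : s.re ≤ b⟩ := hs
  have hab : 0 < b - a := by linarith
  have hκ : 0 < π / (2 * (b - a)) := by positivity
  have h_sq := norm_sin_sq ((π / (2 * (b - a)) : ℝ) * (s - ρ))
  rw [h_zero, norm_zero, re_ofReal_mul, im_ofReal_mul, sub_re, sub_im] at h_sq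
  have h_cosh := Real.one_le_cosh (2 * (π / (2 * (b - a)) * (s.im - ρ.im)))
  have h_cos := Real.cos_le_one (2 * (π / (2 * (b - a)) * (s.re - ρ.re)))
  have h_lt : π / (2 * (b - a)) * |s.re - ρ.re| < π := by
    have : |s.re - ρ.re| < 2 * (b - a) := abs_lt.mpr ⟨by linarith, by linarith⟩
    calc _ < π / (2 * (b - a)) * (2 * (b - a)) := by gcongr
      _ = π := by field_simp
  rw [← abs_of_pos hκ, ← abs_mul, abs_lt] at h_lt
  have h_re := (Real.cos_eq_one_iff_of_lt_of_lt (by linarith) (by linarith)).mp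
    (by linarith : Real.cos (2 * (π / (2 * (b - a)) * (s.re - ρ.re))) = 1)
  have h_im : 2 * (π / (2 * (b - a)) * (s.im - ρ.im)) = 0 := by
    by_contra h
    linarith [Real.one_lt_cosh.mpr h]
  refine Complex.ext (sub_eq_zero.mp ?_) (sub_eq_zero.mp ?_)
  · exact (mul_eq_zero.mp ((mul_eq_zero.mp h_re).resolve_left two_ne_zero)).resolve_left hκ.ne'
  · exact (mul_eq_zero.mp ((mul_eq_zero.mp h_im).resolve_left two_ne_zero)).resolve_left hκ.ne'

lemma norm_stripBlaschke_of_re_eq (hρ : ρ ∈ re ⁻¹' Ioo a b) (hs : s.re = a ∨ s.re = b) :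
    ‖stripBlaschke a b ρ s‖ = 1 := by
  have hab : a < b := hρ.1.trans hρ.2
  have h_mem : s ∈ re ⁻¹' Icc a b := by
    rcases hs with hs | hs <;> simp [hs, hab.le]
  have hsρ : s ≠ ρ := by
    rintro rfl
    rcases hs with hs | hs <;> simp [hs] at hρ
  have h_cos : Real.cos (π / (b - a) * (s.re - ρ.re))
      = Real.cos (π / (b - a) * (s.re + ρ.re - 2 * a)) := by
    have : b - a ≠ 0 := (sub_pos.mpr hab).ne'
    rcases hs with hs | hs <;> rw [hs, ← Real.cos_neg]
    · ring_nf
    · rw [← Real.cos_add_two_pi]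
      congr 1
      field_simp
      ring
  have h_sq := norm_stripBlaschke_sq a b ρ s
  rw [h_cos] at h_sq
  refine (pow_eq_one_iff_of_nonneg (norm_nonneg _) two_ne_zero).mp (h_sq.trans (div_self ?_))
  exact fun h ↦ stripBlaschke_ne_zero hρ h_mem hsρ (by simpa [h] using h_sq)

lemma half_le_norm_stripBlaschke (hρ : ρ ∈ re ⁻¹' Ioo a b) (h : b - a ≤ |s.im - ρ.im|) :
    1 / 2 ≤ ‖stripBlaschke a b ρ s‖ := by
  have hab : 0 < b - a := by linarith [hρ.1, hρ.2]
  have h_arg : π ≤ |π / (b - a) * (s.im - ρ.im)| := by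
    rw [abs_mul, abs_of_pos (by positivity), div_mul_eq_mul_div, le_div_iff₀ hab]
    gcongr
  have h_cosh : 5 / 3 ≤ Real.cosh (π / (b - a) * (s.im - ρ.im)) := by
    rw [← Real.cosh_abs]
    linarith [Real.sinh_lt_cosh |π / (b - a) * (s.im - ρ.im)|, Real.pi_gt_three,
      Real.self_le_sinh_iff.mpr (abs_nonneg (π / (b - a) * (s.im - ρ.im)))]
  have h_num := Real.cos_le_one (π / (b - a) * (s.re - ρ.re))
  have h_den := Real.neg_one_le_cos (π / (b - a) * (s.re + ρ.re - 2 * a))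
  have h_den' := Real.cos_le_one (π / (b - a) * (s.re + ρ.re - 2 * a))
  refine (pow_le_pow_iff_left₀ (by norm_num) (norm_nonneg _) two_ne_zero).mp ?_
  rw [norm_stripBlaschke_sq, le_div_iff₀ (by linarith)]
  linarith

lemma isBigO_of_eq_mul_stripBlaschke {f f₁ : ℂ → ℂ} (hρ : ρ ∈ re ⁻¹' Ioo a b)
    (hf : ∀ s ∈ re ⁻¹' Ioo a b, f s = f₁ s * stripBlaschke a b ρ s) :
    f₁ =O[comap (_root_.abs ∘ im) atTop ⊓ 𝓟 (re ⁻¹' Ioo a b)] f := by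
  refine IsBigO.of_bound 2 (eventually_inf_principal.mpr ?_)
  filter_upwards [tendsto_comap.eventually (eventually_ge_atTop (|ρ.im| + (b - a)))] with s hs hs'
  have h_im : b - a ≤ |s.im - ρ.im| := by
    have := abs_sub_abs_le_abs_sub s.im ρ.im
    simp only [Function.comp_apply] at hs
    linarith
  rw [hf s hs', norm_mul]
  nlinarith [norm_nonneg (f₁ s), half_le_norm_stripBlaschke hρ h_im]

theorem norm_le_mul_prod_norm_stripBlaschke {f : ℂ → ℂ} {M : ℝ} (Z : Finset ℂ) (hab : a < b)
    (hf : DiffContOnCl ℂ f (re ⁻¹' Ioo a b))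
    (h_growth : ∃ c < π / (b - a), ∃ B,
      f =O[comap (_root_.abs ∘ im) atTop ⊓ 𝓟 (re ⁻¹' Ioo a b)]
        fun z ↦ Real.exp (B * Real.exp (c * |z.im|)))
    (h_edge : ∀ s : ℂ, s.re = a ∨ s.re = b → ‖f s‖ ≤ M)
    (hZ : ∀ ρ ∈ Z, ρ ∈ re ⁻¹' Ioo a b ∧ f ρ = 0) (hs : s ∈ re ⁻¹' Icc a b) :
    ‖f s‖ ≤ M * ∏ ρ ∈ Z, ‖stripBlaschke a b ρ s‖ := by
  induction Z using Finset.cons_induction generalizing f with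
  | empty =>
    simpa using PhragmenLindelof.vertical_strip hf h_growth (fun s h ↦ h_edge s (.inl h))
      (fun s h ↦ h_edge s (.inr h)) hs.1 hs.2
  | cons ρ Z hρZ ih =>
    obtain ⟨hρ, hfρ⟩ := hZ ρ (Finset.mem_cons_self ρ Z)
    have h_cl := closure_re_preimage_Ioo hab
    obtain ⟨f₁, hf₁, h_eq⟩ := exists_diffContOnCl_eq_mul (isOpen_re_preimage_Ioo a b) hf
      (diffContOnCl_stripBlaschke hρ) hρ hfρ (stripBlaschke_self a b ρ)
      (deriv_stripBlaschke_ne_zero hρ) (h_cl ▸ fun s hs ↦ stripBlaschke_ne_zero hρ hs)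
    rw [h_cl] at h_eq
    have h_growth₁ := isBigO_of_eq_mul_stripBlaschke hρ fun s hs ↦
      h_eq s (preimage_mono Ioo_subset_Icc_self hs)
    have h_edge₁ (s : ℂ) (hs : s.re = a ∨ s.re = b) : ‖f₁ s‖ ≤ M := by
      have h_mem : s ∈ re ⁻¹' Icc a b := by
        rcases hs with hs | hs <;> simp [hs, hab.le]
      simpa [h_eq s h_mem, norm_stripBlaschke_of_re_eq hρ hs] using h_edge s hs
    have hZ₁ (τ : ℂ) (hτ : τ ∈ Z) : τ ∈ re ⁻¹' Ioo a b ∧ f₁ τ = 0 := by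
      obtain ⟨hτ_mem, hfτ⟩ := hZ τ (Finset.mem_cons_of_mem hτ)
      have hτ_Icc := preimage_mono Ioo_subset_Icc_self hτ_mem
      have hτρ : τ ≠ ρ := ne_of_mem_of_not_mem hτ hρZ
      exact ⟨hτ_mem, (mul_eq_zero.mp ((h_eq τ hτ_Icc).symm.trans hfτ)).resolve_right
        (stripBlaschke_ne_zero hρ hτ_Icc hτρ)⟩
    obtain ⟨c, hc, B, hB⟩ := h_growth
    rw [h_eq s hs, norm_mul, Finset.prod_cons, mul_left_comm, mul_comm]
    gcongr
    exact ih hf₁ ⟨c, hc, B, h_growth₁.trans hB⟩ h_edge₁ hZ₁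

end Blaschke

section PairEstimate

lemma exp_le_sextic {x : ℝ} (h0 : 0 ≤ x) (h1 : x ≤ 1) : Real.exp x ≤
    1 + x + x ^ 2 / 2 + x ^ 3 / 6 + x ^ 4 / 24 + x ^ 5 / 120 + x ^ 6 / 600 := by
  have h := Real.exp_bound' h0 h1 (n := 6) (by norm_num)
  norm_num [Finset.sum_range_succ, Nat.factorial] at h
  linarith [pow_nonneg h0 6]

lemma quintic_le_exp {x : ℝ} (h0 : 0 ≤ x) :
    1 + x + x ^ 2 / 2 + x ^ 3 / 6 + x ^ 4 / 24 + x ^ 5 / 120 ≤ Real.exp x := by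
  have h := Real.sum_le_exp_of_nonneg h0 6
  norm_num [Finset.sum_range_succ, Nat.factorial] at h
  linarith

lemma cosh_pi_div_four_le : Real.cosh (π / 4) ≤ 1.3247 := by
  have h_mono : Real.cosh (π / 4) ≤ Real.cosh 0.7854 := by
    rw [Real.cosh_le_cosh, abs_of_pos (by positivity), abs_of_pos (by norm_num)]
    linarith [Real.pi_lt_d4]
  have h_exp := exp_le_sextic (x := 0.7854) (by norm_num) (by norm_num)
  have h_exp_neg : Real.exp (-0.7854) ≤ 0.45602 := by
    have := quintic_le_exp (x := 0.7854) (by norm_num)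
    rw [Real.exp_neg, inv_le_comm₀ (Real.exp_pos _) (by norm_num)]
    norm_num at this ⊢
    linarith
  rw [Real.cosh_eq 0.7854] at h_mono
  norm_num at h_exp h_exp_neg h_mono ⊢
  linarith

lemma sqrt_three_div_two_le_sin {x : ℝ} (h0 : π / 3 ≤ x) (h1 : x ≤ 2 * π / 3) :
    √3 / 2 ≤ Real.sin x := by
  rw [← Real.cos_pi_div_six, ← Real.cos_sub_pi_div_two, ← Real.cos_abs (x - π / 2)]
  refine Real.cos_le_cos_of_nonneg_of_le_pi (abs_nonneg _) (by linarith [Real.pi_pos]) ?_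
  exact abs_le.mpr ⟨by linarith, by linarith⟩

lemma mul_sub_cos_sin_le {C α : ℝ} (hC1 : 1 ≤ C) (hC2 : C ≤ 1.3247) (hα1 : π / 6 ≤ α)
    (hα2 : α ≤ π / 3) :
    (C - Real.cos α) * (C - Real.sin α) ≤ 0.095 * ((C + Real.sin α) * (C + Real.cos α)) := by
  have h_cos : 0 ≤ Real.cos α :=
    Real.cos_nonneg_of_mem_Icc ⟨by linarith [Real.pi_pos], by linarith [Real.pi_pos]⟩
  have h_sin : 0 ≤ Real.sin α :=
    Real.sin_nonneg_of_mem_Icc ⟨by linarith [Real.pi_pos], by linarith [Real.pi_pos]⟩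
  have h_sq := Real.sin_sq_add_cos_sq α
  have h_sin_two : 0.866 ≤ 2 * Real.sin α * Real.cos α := by
    have h_sqrt : 1.732 ≤ √3 := Real.le_sqrt_of_sq_le (by norm_num)
    rw [← Real.sin_two_mul]
    linarith [sqrt_three_div_two_le_sin (x := 2 * α) (by linarith) (by linarith)]
  set p := Real.cos α + Real.sin α with hp
  have h_prod : Real.cos α * Real.sin α = (p ^ 2 - 1) / 2 := by rw [hp]; linarith
  have hp1 : 1.366 ≤ p := by nlinarith
  have hp2 : p ≤ 1.41422 := by nlinarith [sq_nonneg (Real.cos α - Real.sin α)]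
  suffices 0.905 * C ^ 2 + 0.4525 * (p ^ 2 - 1) ≤ 1.095 * C * p by
    rw [hp] at this h_prod
    linarith
  nlinarith [mul_nonneg (sub_nonneg.mpr hC1) (sub_nonneg.mpr hC2),
    mul_nonneg (sub_nonneg.mpr hp1) (sub_nonneg.mpr hp2),
    mul_nonneg (sub_nonneg.mpr hC1) (sub_nonneg.mpr hp1),
    mul_nonneg (sub_nonneg.mpr hC1) (sub_nonneg.mpr hp2),
    mul_nonneg (sub_nonneg.mpr hC2) (sub_nonneg.mpr hp1)]

/- Reflection in the critical line turns the angle `α = π (2 - Re ρ) / 6` into `π / 2 - α`, which is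
what makes the estimate for the pair uniform in `Re ρ`. -/
lemma norm_stripBlaschke_sq_mul_reflection_le {ρ s : ℂ} (h0 : 0 < ρ.re) (h1 : ρ.re < 1)
    (hs : s.re = 2) (him : |ρ.im - s.im| ≤ 3 / 2) :
    ‖stripBlaschke (-5 / 2) (7 / 2) ρ s‖ ^ 2 *
      ‖stripBlaschke (-5 / 2) (7 / 2) (1 - conj ρ) s‖ ^ 2 ≤ 0.095 := by
  have hπ := Real.pi_pos
  set α := π / 6 * (2 - ρ.re) with hα
  set C := Real.cosh (π / 6 * (s.im - ρ.im)) with hC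
  have hα1 : π / 6 ≤ α := by nlinarith
  have hα2 : α ≤ π / 3 := by nlinarith
  have h_norm : ‖stripBlaschke (-5 / 2) (7 / 2) ρ s‖ ^ 2
      = (C - Real.cos α) / (C + Real.sin α) := by
    rw [norm_stripBlaschke_sq, hs, show π / (7 / 2 - -5 / 2) = π / 6 by ring, ← hC, ← hα,
      show π / 6 * (2 + ρ.re - 2 * (-5 / 2)) = π / 2 - α + π by rw [hα]; ring,
      Real.cos_add_pi, Real.cos_pi_div_two_sub, sub_neg_eq_add]
  have h_norm_refl : ‖stripBlaschke (-5 / 2) (7 / 2) (1 - conj ρ) s‖ ^ 2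
      = (C - Real.sin α) / (C + Real.cos α) := by
    have h_re : (1 - conj ρ).re = 1 - ρ.re := by simp
    have h_im : (1 - conj ρ).im = ρ.im := by simp
    rw [norm_stripBlaschke_sq, h_re, h_im, hs, show π / (7 / 2 - -5 / 2) = π / 6 by ring, ← hC,
      show π / 6 * (2 - (1 - ρ.re)) = π / 2 - α by rw [hα]; ring,
      show π / 6 * (2 + (1 - ρ.re) - 2 * (-5 / 2)) = α + π by rw [hα]; ring,
      Real.cos_add_pi, Real.cos_pi_div_two_sub, sub_neg_eq_add]
  have hC1 : 1 ≤ C := Real.one_le_cosh _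
  have hC2 : C ≤ 1.3247 := by
    refine le_trans (Real.cosh_le_cosh.mpr ?_) cosh_pi_div_four_le
    rw [abs_mul, abs_of_pos (by positivity : 0 < π / 6), abs_of_pos (by positivity : 0 < π / 4),
      abs_sub_comm]
    nlinarith
  have h_cos : 0 < Real.cos α := Real.cos_pos_of_mem_Ioo ⟨by linarith, by linarith⟩
  have h_sin : 0 < Real.sin α := Real.sin_pos_of_pos_of_lt_pi (by linarith) (by linarith)
  rw [h_norm, h_norm_refl, div_mul_div_comm, div_le_iff₀ (by positivity)]
  exact mul_sub_cos_sin_le hC1 hC2 hα1 hα2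

lemma prod_norm_stripBlaschke_le (Z : Finset ℂ) {s : ℂ} (hs : s.re = 2)
    (hZ : ∀ ρ ∈ Z, 0 < ρ.re ∧ ρ.re < 1 ∧ |ρ.im - s.im| ≤ 3 / 2)
    (h_refl : ∀ ρ ∈ Z, 1 - conj ρ ∈ Z) :
    (∏ ρ ∈ Z, ‖stripBlaschke (-5 / 2) (7 / 2) ρ s‖) ^ 4 ≤ 0.095 ^ Z.card := by
  have h_prod_refl : ∏ ρ ∈ Z, ‖stripBlaschke (-5 / 2) (7 / 2) (1 - conj ρ) s‖
      = ∏ ρ ∈ Z, ‖stripBlaschke (-5 / 2) (7 / 2) ρ s‖ :=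
    Finset.prod_nbij' (fun ρ ↦ 1 - conj ρ) (fun ρ ↦ 1 - conj ρ) h_refl h_refl (by simp) (by simp)
      fun _ _ ↦ rfl
  calc (∏ ρ ∈ Z, ‖stripBlaschke (-5 / 2) (7 / 2) ρ s‖) ^ 4
      = ∏ ρ ∈ Z, (‖stripBlaschke (-5 / 2) (7 / 2) ρ s‖ ^ 2 *
          ‖stripBlaschke (-5 / 2) (7 / 2) (1 - conj ρ) s‖ ^ 2) := by
        rw [Finset.prod_mul_distrib, Finset.prod_pow, Finset.prod_pow, h_prod_refl]; ring
    _ ≤ ∏ _ρ ∈ Z, 0.095 := Finset.prod_le_prod (fun _ _ ↦ by positivity) fun ρ hρ ↦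
        norm_stripBlaschke_sq_mul_reflection_le (hZ ρ hρ).1 (hZ ρ hρ).2.1 hs (hZ ρ hρ).2.2
    _ = 0.095 ^ Z.card := Finset.prod_const _

end PairEstimate

section ZeroCount

open Filter Topology Asymptotics

variable {q : ℕ} [NeZero q] {χ : DirichletCharacter ℂ q}

lemma exists_differentiable_eq_sub_one_mul_LFunction (χ : DirichletCharacter ℂ q) :
    ∃ g : ℂ → ℂ, Differentiable ℂ g ∧ ∀ s, s ≠ 1 → g s = (s - 1) * LFunction χ s := by
  rcases eq_or_ne χ 1 with rfl | hχ
  · exact ⟨LFunctionTrivChar₁ q, differentiable_LFunctionTrivChar₁ q, fun s hs ↦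
      Function.update_of_ne hs _ _⟩
  · exact ⟨fun s ↦ (s - 1) * LFunction χ s,
      (differentiable_id.sub_const 1).mul (differentiable_LFunction hχ), fun _ _ ↦ rfl⟩

variable {g : ℂ → ℂ}

lemma norm_div_sub_six_le (hg : ∀ s, s ≠ 1 → g s = (s - 1) * LFunction χ s)
    {s : ℂ} (hs1 : s ≠ 1) (hs : s.re ≤ 7 / 2) :
    ‖g s / (s - 6)‖ ≤ ‖LFunction χ s‖ := by
  have hs6 : 0 < ‖s - 6‖ := by
    rw [norm_pos_iff, sub_ne_zero]; rintro rfl; norm_num at hs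
  have h_le : ‖s - 1‖ ≤ ‖s - 6‖ := by
    rw [norm_def, norm_def]
    refine Real.sqrt_le_sqrt ?_
    simp only [normSq_apply, sub_re, sub_im, one_re, one_im, re_ofNat, im_ofNat]
    nlinarith
  rw [hg s hs1, norm_div, norm_mul, div_le_iff₀ hs6, mul_comm]
  gcongr

lemma le_norm_div_sub_six (hg : ∀ s, s ≠ 1 → g s = (s - 1) * LFunction χ s)
    {s : ℂ} (hs : s.re = 2) (him : 105 ≤ |s.im|) :
    0.999 * ‖LFunction χ s‖ ≤ ‖g s / (s - 6)‖ := by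
  have hs1 : s ≠ 1 := by rintro rfl; norm_num at hs
  have hs6 : 0 < ‖s - 6‖ := by
    rw [norm_pos_iff, sub_ne_zero]; rintro rfl; norm_num at hs
  have h_sq : 105 ^ 2 ≤ s.im ^ 2 := by rw [← sq_abs s.im]; gcongr
  have h_le : 0.999 * ‖s - 6‖ ≤ ‖s - 1‖ := by
    refine (pow_le_pow_iff_left₀ (by positivity) (by positivity) two_ne_zero).mp ?_
    simp only [mul_pow, ← normSq_eq_norm_sq, normSq_apply, sub_re, sub_im, one_re, one_im,
      re_ofNat, im_ofNat, hs]
    norm_num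
    nlinarith
  rw [hg s hs1, norm_div, norm_mul, le_div_iff₀ hs6, mul_right_comm]
  gcongr

/-- The function to which the Blaschke estimate is applied when counting zeros near height `T`.
Here `g` is the entire function `(s - 1) L(s, χ)` and `D = q |T| / 2π`. The factor `1 / (s - 6)`
undoes the growth of `s - 1`, the power of `D` balances the two edges of the strip
`-5/2 ≤ Re s ≤ 7/2`, and the Gaussian factor localises at height `T`. -/
noncomputable def localizedLFunction (g : ℂ → ℂ) (D T : ℝ) (s : ℂ) : ℂ :=
  g s / (s - 6) * (D : ℂ) ^ ((s - 7 / 2) / 2) * exp (0.0043 * (s - T * I + 1 / 2) ^ 2)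

variable {D T : ℝ}

lemma norm_localizedLFunction (hD : 0 < D) (g : ℂ → ℂ) (T : ℝ) (s : ℂ) :
    ‖localizedLFunction g D T s‖ = ‖g s / (s - 6)‖ * D ^ ((s.re - 7 / 2) / 2) *
      Real.exp (0.0043 * ((s.re + 1 / 2) ^ 2 - (s.im - T) ^ 2)) := by
  have h_pow : ((s - 7 / 2) / 2).re = (s.re - 7 / 2) / 2 := by simp
  have h_gauss : (0.0043 * (s - T * I + 1 / 2) ^ 2 : ℂ).re
      = 0.0043 * ((s.re + 1 / 2) ^ 2 - (s.im - T) ^ 2) := by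
    rw [show (0.0043 : ℂ) = ((0.0043 : ℝ) : ℂ) by push_cast; rfl, re_ofReal_mul, pow_two, mul_re]
    simp [pow_two]
  rw [localizedLFunction, norm_mul, norm_mul, norm_cpow_eq_rpow_re_of_pos hD, norm_exp, h_pow,
    h_gauss]

lemma diffContOnCl_localizedLFunction (hD : 0 < D) (hg' : Differentiable ℂ g) (T : ℝ) :
    DiffContOnCl ℂ (localizedLFunction g D T) (re ⁻¹' Ioo (-5 / 2) (7 / 2)) := by
  refine DifferentiableOn.diffContOnCl fun s hs ↦ DifferentiableAt.differentiableWithinAt ?_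
  rw [closure_re_preimage_Ioo (by norm_num)] at hs
  have hs6 : s - 6 ≠ 0 := by
    rw [sub_ne_zero]; rintro rfl; norm_num at hs
  have hgs := hg' s
  have h_pow : DifferentiableAt ℂ (fun s : ℂ ↦ (D : ℂ) ^ ((s - 7 / 2) / 2)) s :=
    DifferentiableAt.const_cpow (by fun_prop) (.inl (ofReal_ne_zero.mpr hD.ne'))
  unfold localizedLFunction
  fun_prop (disch := assumption)

lemma isBigO_localizedLFunction (hg : ∀ s, s ≠ 1 → g s = (s - 1) * LFunction χ s)
    (hD : 0 < D) (T : ℝ) :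
    localizedLFunction g D T
      =O[comap (_root_.abs ∘ im) atTop ⊓ 𝓟 (re ⁻¹' Ioo (-5 / 2) (7 / 2))]
      fun s ↦ Real.exp (2 * π * Real.exp (1 / 2 * |s.im|)) := by
  obtain ⟨C, hC⟩ := exists_norm_LFunction_le χ (-5 / 2) (7 / 2)
  refine IsBigO.of_bound (C * Real.exp (3 * |Real.log D|) * Real.exp (0.0043 * 16))
    (eventually_inf_principal.mpr ?_)
  filter_upwards [tendsto_comap.eventually (eventually_ge_atTop 2)] with s (hs : 2 ≤ |s.im|) hs'
  obtain ⟨hs_left : -5 / 2 < s.re, hs_right : s.re < 7 / 2⟩ := hs'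
  have hs1 : s ≠ 1 := by rintro rfl; norm_num at hs
  have hL := (norm_div_sub_six_le hg hs1 hs_right.le).trans (hC s hs_left.le hs_right.le hs)
  have hC0 : 0 ≤ C := nonneg_of_mul_nonneg_left ((norm_nonneg _).trans hL) (Real.exp_pos _)
  have h_exp : Real.exp (π * |s.im|) ≤ Real.exp (2 * π * Real.exp (1 / 2 * |s.im|)) := by
    refine Real.exp_le_exp.mpr ?_
    nlinarith [Real.add_one_le_exp (1 / 2 * |s.im|), Real.pi_pos]
  have h_pow : D ^ ((s.re - 7 / 2) / 2) ≤ Real.exp (3 * |Real.log D|) := by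
    rw [Real.rpow_def_of_pos hD, Real.exp_le_exp, mul_comm]
    refine (le_abs_self _).trans ?_
    rw [abs_mul]
    gcongr
    exact abs_le.mpr ⟨by linarith, by linarith⟩
  have h_gauss : Real.exp (0.0043 * ((s.re + 1 / 2) ^ 2 - (s.im - T) ^ 2))
      ≤ Real.exp (0.0043 * 16) := by
    refine Real.exp_le_exp.mpr ?_
    nlinarith [sq_nonneg (s.im - T)]
  rw [norm_localizedLFunction hD, Real.norm_of_nonneg (Real.exp_pos _).le]
  calc ‖g s / (s - 6)‖ * D ^ ((s.re - 7 / 2) / 2)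
        * Real.exp (0.0043 * ((s.re + 1 / 2) ^ 2 - (s.im - T) ^ 2))
      ≤ C * Real.exp (2 * π * Real.exp (1 / 2 * |s.im|)) * Real.exp (3 * |Real.log D|)
        * Real.exp (0.0043 * 16) := by
        gcongr
        exact hL.trans (by gcongr)
    _ = _ := by ring

lemma sqrt_div_abs_pow_three_le_exp {x T : ℝ} (hT : 105 ≤ |T|) :
    (√((T + x) ^ 2 + 25 / 4) / |T|) ^ 3 ≤ Real.exp (0.0043 * (12 + x ^ 2)) := by
  have hT2 : 105 ^ 2 ≤ T ^ 2 := by rw [← sq_abs T]; gcongr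
  have hT0 : T ≠ 0 := by rintro rfl; norm_num at hT
  set y := 2 * (x / T) + (x ^ 2 + 25 / 4) / T ^ 2 with hy
  have h_sq : (√((T + x) ^ 2 + 25 / 4) / |T|) ^ 2 = 1 + y := by
    rw [div_pow, Real.sq_sqrt (by positivity), sq_abs, hy]
    field_simp
    ring
  have h_base : √((T + x) ^ 2 + 25 / 4) / |T| ≤ Real.exp (y / 2) := by
    refine (pow_le_pow_iff_left₀ (by positivity) (by positivity) two_ne_zero).mp ?_
    rw [h_sq, ← Real.exp_nat_mul, Nat.cast_two, mul_div_cancel₀ y two_ne_zero, add_comm]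
    exact Real.add_one_le_exp y
  have hy_le : 3 / 2 * y ≤ 0.0043 * (12 + x ^ 2) := by
    have h_lin : x / T ≤ |x| / 105 := (le_abs_self _).trans (by rw [abs_div]; gcongr)
    have h_quad : (x ^ 2 + 25 / 4) / T ^ 2 ≤ (x ^ 2 + 25 / 4) / 105 ^ 2 := by gcongr
    rw [hy]
    nlinarith [sq_nonneg (|x| - 3.43), sq_abs x]
  calc (√((T + x) ^ 2 + 25 / 4) / |T|) ^ 3 ≤ Real.exp (y / 2) ^ 3 := by gcongr
    _ = Real.exp (3 / 2 * y) := by rw [← Real.exp_nat_mul]; congr 1; push_cast; ring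
    _ ≤ Real.exp (0.0043 * (12 + x ^ 2)) := Real.exp_le_exp.mpr hy_le

lemma norm_localizedLFunction_edge_le (hg : ∀ s, s ≠ 1 → g s = (s - 1) * LFunction χ s)
    (hT : 105 ≤ |T|) (hχ : χ.IsPrimitive) {s : ℂ} (hs : s.re = -5 / 2 ∨ s.re = 7 / 2) :
    ‖localizedLFunction g (q * |T| / (2 * π)) T s‖ ≤ 1.161 * Real.exp (0.0043 * 16) := by
  have hq : (0 : ℝ) < q := Nat.cast_pos.mpr (NeZero.pos q)
  have : 0 < |T| := by linarith
  have hD : 0 < q * |T| / (2 * π) := by positivity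
  have hs1 : s ≠ 1 := by rintro rfl; norm_num at hs
  have hgL := norm_div_sub_six_le hg hs1 (by rcases hs with hs | hs <;> linarith)
  rw [norm_localizedLFunction hD]
  rcases hs with hs | hs
  · have h_left := hgL.trans (norm_LFunction_le_of_re_eq_neg_five_halves hχ hs)
    have h_loc := sqrt_div_abs_pow_three_le_exp (x := s.im - T) hT
    rw [add_sub_cancel] at h_loc
    rw [hs, show ((-5 / 2 : ℝ) - 7 / 2) / 2 = -(3 : ℕ) by norm_num, Real.rpow_neg hD.le,
      Real.rpow_natCast]
    calc _ ≤ 1.161 * (q * √(s.im ^ 2 + 25 / 4) / (2 * π)) ^ 3 * ((q * |T| / (2 * π)) ^ 3)⁻¹ *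
          Real.exp (0.0043 * ((-5 / 2 + 1 / 2) ^ 2 - (s.im - T) ^ 2)) := by gcongr
      _ = 1.161 * ((√(s.im ^ 2 + 25 / 4) / |T|) ^ 3 *
          Real.exp (0.0043 * ((-5 / 2 + 1 / 2) ^ 2 - (s.im - T) ^ 2))) := by field_simp
      _ ≤ 1.161 * (Real.exp (0.0043 * (12 + (s.im - T) ^ 2)) *
          Real.exp (0.0043 * ((-5 / 2 + 1 / 2) ^ 2 - (s.im - T) ^ 2))) := by gcongr
      _ = 1.161 * Real.exp (0.0043 * 16) := by rw [← Real.exp_add]; congr 2; ring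
  · rw [hs, sub_self, zero_div, Real.rpow_zero, mul_one]
    gcongr
    · exact hgL.trans (norm_LFunction_le_of_seven_halves_le_re χ hs.ge)
    · nlinarith [sq_nonneg (s.im - T)]

lemma le_norm_localizedLFunction (hg : ∀ s, s ≠ 1 → g s = (s - 1) * LFunction χ s)
    (hD : 0 < D) {s : ℂ} (hs : s.re = 2) (him : 105 ≤ |s.im|) :
    0.999 * (6 / π ^ 2) * D ^ (-(3 / 4) : ℝ) * Real.exp (0.0043 * 6.25)
      ≤ ‖localizedLFunction g D s.im s‖ := by
  have hL : 0.999 * (6 / π ^ 2) ≤ ‖g s / (s - 6)‖ := by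
    refine le_trans ?_ (le_norm_div_sub_six hg hs him)
    gcongr
    exact six_div_pi_sq_le_norm_LFunction χ hs.ge
  rw [norm_localizedLFunction hD, hs, sub_self, show ((2 : ℝ) - 7 / 2) / 2 = -(3 / 4) by norm_num]
  gcongr
  norm_num

lemma le_exp_neg_four_mul : (0.095 : ℝ) ≤ Real.exp (-(4 * 0.588)) := by
  have h_exp := exp_le_sextic (x := 0.352) (by norm_num) (by norm_num)
  have h_exp_one := Real.exp_one_lt_d9
  rw [Real.exp_neg, le_inv_comm₀ (by norm_num) (Real.exp_pos _),
    show (4 * 0.588 : ℝ) = 1 + 1 + 0.352 by norm_num, Real.exp_add, Real.exp_add]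
  calc Real.exp 1 * Real.exp 1 * Real.exp 0.352
      ≤ 2.7182818286 * 2.7182818286 * (1 + 0.352 + 0.352 ^ 2 / 2 + 0.352 ^ 3 / 6 + 0.352 ^ 4 / 24
        + 0.352 ^ 5 / 120 + 0.352 ^ 6 / 600) := by gcongr
    _ ≤ 0.095⁻¹ := by norm_num

lemma le_exp_neg_of_pow_four_le {P : ℝ} {n : ℕ} (hP : 0 ≤ P) (h : P ^ 4 ≤ 0.095 ^ n) :
    P ≤ Real.exp (-(0.588 * n)) := by
  refine (pow_le_pow_iff_left₀ hP (by positivity) four_ne_zero).mp (h.trans ?_)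
  calc (0.095 : ℝ) ^ n ≤ Real.exp (-(4 * 0.588)) ^ n := by gcongr; exact le_exp_neg_four_mul
    _ = Real.exp (-(0.588 * n)) ^ 4 := by
      rw [← Real.exp_nat_mul, ← Real.exp_nat_mul]; congr 1; push_cast; ring

lemma log_zero_count_const_le : Real.log (1.161 / (0.999 * (6 / π ^ 2))) ≤ 0.65 := by
  rw [Real.log_le_iff_le_exp (by positivity), div_le_iff₀ (by positivity), ← mul_assoc,
    mul_div_assoc', le_div_iff₀ (by positivity)]
  have h_exp := quintic_le_exp (x := 0.65) (by norm_num)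
  have hπ : π ^ 2 ≤ 9.8697 := by nlinarith [Real.pi_lt_d4, Real.pi_pos]
  norm_num at h_exp ⊢
  linarith

lemma le_log_of_localized_bounds (hD : 0 < D) {n : ℝ}
    (h : 0.999 * (6 / π ^ 2) * D ^ (-(3 / 4) : ℝ) * Real.exp (0.0043 * 6.25)
      ≤ 1.161 * Real.exp (0.0043 * 16) * Real.exp (-(0.588 * n))) :
    0.588 * n ≤ 0.75 * Real.log D + 0.7 := by
  have h_const := log_zero_count_const_le
  have h_log := Real.log_le_log (by positivity) h
  rw [Real.log_div (by norm_num) (by positivity),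
    Real.log_mul (by positivity) (by positivity)] at h_const
  iterate 5 rw [Real.log_mul (by positivity) (by positivity)] at h_log
  rw [Real.log_rpow hD, Real.log_exp, Real.log_exp, Real.log_exp] at h_log
  linarith

lemma card_zeros_le (hT : 105 ≤ |T|) (hχ : χ.IsPrimitive) (Z : Finset ℂ)
    (hZ : ∀ ρ ∈ Z, LFunction χ ρ = 0 ∧ 0 < ρ.re ∧ ρ.re < 1 ∧ |ρ.im - T| ≤ 3 / 2)
    (h_refl : ∀ ρ ∈ Z, 1 - conj ρ ∈ Z) :
    0.588 * (Z.card : ℝ) ≤ 0.75 * Real.log (q * |T| / (2 * π)) + 0.7 := by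
  obtain ⟨g, hg', hg⟩ := exists_differentiable_eq_sub_one_mul_LFunction χ
  have hq : (0 : ℝ) < q := Nat.cast_pos.mpr (NeZero.pos q)
  have : 0 < |T| := by linarith
  have hD : 0 < q * |T| / (2 * π) := by positivity
  set c : ℂ := 2 + T * I with hc
  have hc_re : c.re = 2 := by simp [hc]
  have hc_im : c.im = T := by simp [hc]
  have h_zeros (ρ : ℂ) (hρ : ρ ∈ Z) : ρ ∈ re ⁻¹' Ioo (-5 / 2) (7 / 2) ∧
      localizedLFunction g (q * |T| / (2 * π)) T ρ = 0 := by
    obtain ⟨hLρ, h0, h1, -⟩ := hZ ρ hρ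
    have hρ1 : ρ ≠ 1 := by rintro rfl; norm_num at h1
    exact ⟨⟨by linarith, by linarith⟩, by simp [localizedLFunction, hg ρ hρ1, hLρ]⟩
  have h_upper := norm_le_mul_prod_norm_stripBlaschke (s := c) Z (by norm_num)
    (diffContOnCl_localizedLFunction hD hg' T)
    ⟨1 / 2, by rw [lt_div_iff₀ (by norm_num)]; linarith [Real.pi_gt_three], 2 * π,
      isBigO_localizedLFunction hg hD T⟩
    (fun s hs ↦ norm_localizedLFunction_edge_le hg hT hχ hs) h_zeros
    (by rw [mem_preimage, hc_re]; norm_num)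
  have h_prod := le_exp_neg_of_pow_four_le (Finset.prod_nonneg fun _ _ ↦ norm_nonneg _)
    (prod_norm_stripBlaschke_le Z hc_re (fun ρ hρ ↦ hc_im ▸ (hZ ρ hρ).2) h_refl)
  have h_lower := le_norm_localizedLFunction hg hD hc_re (hc_im.symm ▸ hT)
  rw [hc_im] at h_lower
  exact le_log_of_localized_bounds hD
    (h_lower.trans (h_upper.trans (mul_le_mul_of_nonneg_left h_prod (by positivity))))

end ZeroCount

section RotatedGaussianIntegral

lemma integrableOn_rpow_mul_exp_quadratic {c p : ℝ} (hc : 0 < c) (hp : -1 < p) (B : ℝ) :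
    IntegrableOn (fun t : ℝ ↦ t ^ p * Real.exp (-c * t ^ 2 / 2 + B * t)) (Ioi 0) := by
  have h_gauss := (integrableOn_rpow_mul_exp_neg_mul_sq (b := c / 4) (by positivity) hp).const_mul
    (Real.exp (B ^ 2 / c))
  refine h_gauss.mono' (Measurable.aestronglyMeasurable (by fun_prop)) ?_
  filter_upwards [ae_restrict_mem measurableSet_Ioi] with t (ht : 0 < t)
  have hp0 : 0 ≤ t ^ p := Real.rpow_nonneg ht.le p
  rw [Real.norm_of_nonneg (by positivity), mul_left_comm, ← Real.exp_add]
  refine mul_le_mul_of_nonneg_left (Real.exp_le_exp.mpr ?_) hp0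
  have h_square : B ^ 2 / c + -(c / 4) * t ^ 2 - (-c * t ^ 2 / 2 + B * t)
      = (B - c * t / 2) ^ 2 / c := by
    field_simp
    ring
  have : 0 ≤ (B - c * t / 2) ^ 2 / c := by positivity
  linarith

/-- The moment `∫ t ^ σ * exp (-c t² / 2 + b t)` over `(0, ∞)` of a shifted Gaussian. -/
noncomputable def gaussianMoment (c b σ : ℝ) : ℝ :=
  ∫ t in Ioi (0 : ℝ), t ^ σ * Real.exp (-c * t ^ 2 / 2 + b * t)

/-- The integrand `t ^ s * exp (-(w t)² / 2) * e(δ w t)`: up to the factor `w ^ (s + 1)`, this is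
the pull-back of `u ^ s * exp (-u² / 2) * e(δ u) du` to the ray through `w`. -/
noncomputable def rotatedKernel (δ : ℝ) (s w : ℂ) (t : ℝ) : ℂ :=
  (t : ℂ) ^ s * cexp (-(w ^ 2 * (t : ℂ) ^ 2) / 2 + 2 * π * I * δ * w * t)

/-- The sector `|arg w| < π / 4`, on which `exp (-(w t)² / 2)` decays as `t → ∞`. -/
def gaussianSector : Set ℂ := {w | |w.im| < w.re}

lemma isOpen_gaussianSector : IsOpen gaussianSector := by
  apply isOpen_lt <;> fun_prop

lemma convex_gaussianSector : Convex ℝ gaussianSector := by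
  have h_eq : gaussianSector = {w | 0 < w.re - w.im} ∩ {w | 0 < w.re + w.im} := by
    ext w
    simp only [gaussianSector, mem_ofPred_eq, mem_inter_iff, abs_lt]
    constructor <;> rintro ⟨h1, h2⟩ <;> constructor <;> linarith
  rw [h_eq]
  exact (convex_halfSpace_gt (reLm - imLm).isLinear 0).inter
    (convex_halfSpace_gt (reLm + imLm).isLinear 0)

lemma re_pos_of_mem_gaussianSector {w : ℂ} (hw : w ∈ gaussianSector) : 0 < w.re :=
  (abs_nonneg w.im).trans_lt hw

lemma re_sq_sub_im_sq_pos {w : ℂ} (hw : w ∈ gaussianSector) : 0 < w.re ^ 2 - w.im ^ 2 :=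
  sub_pos.mpr <| sq_lt_sq.mpr <| lt_of_lt_of_le hw (le_abs_self w.re)

variable (δ : ℝ)

lemma norm_rotatedKernel (s w : ℂ) {t : ℝ} (ht : 0 < t) :
    ‖rotatedKernel δ s w t‖
      = t ^ s.re * Real.exp (-(w.re ^ 2 - w.im ^ 2) * t ^ 2 / 2 + (-2 * π * δ * w.im) * t) := by
  have h_re : (-(w ^ 2 * (t : ℂ) ^ 2) / 2 + 2 * π * I * δ * w * t).re
      = -(w.re ^ 2 - w.im ^ 2) * t ^ 2 / 2 + (-2 * π * δ * w.im) * t := by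
    have h_split : -(w ^ 2 * (t : ℂ) ^ 2) / 2 + 2 * π * I * δ * w * t
        = ((-(w.re ^ 2 - w.im ^ 2) * t ^ 2 / 2 + (-2 * π * δ * w.im) * t : ℝ) : ℂ)
          + ((-(w.re * w.im) * t ^ 2 + 2 * π * δ * w.re * t : ℝ) : ℂ) * I := by
      conv_lhs => rw [← re_add_im w]
      push_cast
      ring_nf
      simp only [I_sq]
      ring
    rw [h_split, add_re, re_ofReal_mul, ofReal_re, I_re, mul_zero, add_zero]
  rw [rotatedKernel, norm_mul, norm_cpow_eq_rpow_re_of_pos ht, norm_exp, h_re]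

lemma measurable_rotatedKernel (s w : ℂ) : Measurable (rotatedKernel δ s w) := by
  unfold rotatedKernel
  fun_prop

lemma integrableOn_rotatedKernel {s w : ℂ} (hs : -1 < s.re) (hw : w ∈ gaussianSector) :
    IntegrableOn (rotatedKernel δ s w) (Ioi 0) := by
  refine (integrableOn_rpow_mul_exp_quadratic (re_sq_sub_im_sq_pos hw) hs
    (-2 * π * δ * w.im)).mono' (measurable_rotatedKernel δ s w).aestronglyMeasurable ?_
  filter_upwards [ae_restrict_mem measurableSet_Ioi] with t ht
  rw [norm_rotatedKernel δ s w ht]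

lemma hasDerivAt_rotatedKernel (s w : ℂ) (t : ℝ) :
    HasDerivAt (rotatedKernel δ s · t)
      (rotatedKernel δ s w t * (-(w * (t : ℂ) ^ 2) + 2 * π * I * δ * t)) w := by
  have h_exponent : HasDerivAt (fun w : ℂ ↦ -(w ^ 2 * (t : ℂ) ^ 2) / 2 + 2 * π * I * δ * w * t)
      (-(w * (t : ℂ) ^ 2) + 2 * π * I * δ * t) w := by
    have h_quadratic := (((hasDerivAt_id w).pow 2).mul_const ((t : ℂ) ^ 2)).neg.div_const 2
    have h_linear := ((hasDerivAt_id w).const_mul (2 * π * I * δ : ℂ)).mul_const (t : ℂ)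
    refine (h_quadratic.add h_linear).congr_deriv ?_
    simp only [id]
    push_cast
    ring
  refine (h_exponent.cexp.const_mul ((t : ℂ) ^ s)).congr_deriv ?_
  rw [rotatedKernel]
  ring

lemma norm_deriv_rotatedKernel_le (s : ℂ) {w : ℂ} {c M t : ℝ} (ht : 0 < t)
    (hc : c ≤ w.re ^ 2 - w.im ^ 2) (hM : ‖w‖ ≤ M) :
    ‖rotatedKernel δ s w t * (-(w * (t : ℂ) ^ 2) + 2 * π * I * δ * t)‖
      ≤ M * (t ^ (s.re + 2) * Real.exp (-c * t ^ 2 / 2 + 2 * π * |δ| * M * t))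
        + 2 * π * |δ| * (t ^ (s.re + 1) * Real.exp (-c * t ^ 2 / 2 + 2 * π * |δ| * M * t)) := by
  have h_factor : ‖-(w * (t : ℂ) ^ 2) + 2 * π * I * δ * t‖ ≤ M * t ^ 2 + 2 * π * |δ| * t := by
    refine (norm_add_le _ _).trans ?_
    simp only [norm_neg, norm_mul, norm_pow, norm_real, Real.norm_eq_abs, abs_of_pos ht, norm_I,
      mul_one, abs_of_pos Real.pi_pos, norm_ofNat]
    gcongr
  have h_linear : -2 * π * δ * w.im ≤ 2 * π * |δ| * M := by
    calc -2 * π * δ * w.im ≤ |-2 * π * δ * w.im| := le_abs_self _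
      _ = 2 * π * |δ| * |w.im| := by
        simp only [abs_mul, abs_neg, Nat.abs_ofNat, abs_of_pos Real.pi_pos]
      _ ≤ 2 * π * |δ| * M := by
        gcongr
        exact (abs_im_le_norm w).trans hM
  have : 0 ≤ t ^ s.re := Real.rpow_nonneg ht.le s.re
  rw [norm_mul, norm_rotatedKernel δ s w ht, Real.rpow_add ht, Real.rpow_add_one ht.ne',
    Real.rpow_two]
  calc t ^ s.re * Real.exp (-(w.re ^ 2 - w.im ^ 2) * t ^ 2 / 2 + -2 * π * δ * w.im * t)
        * ‖-(w * (t : ℂ) ^ 2) + 2 * π * I * δ * t‖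
      ≤ t ^ s.re * Real.exp (-c * t ^ 2 / 2 + 2 * π * |δ| * M * t)
        * (M * t ^ 2 + 2 * π * |δ| * t) := by gcongr
    _ = _ := by ring

variable {s : ℂ}

lemma differentiableAt_integral_rotatedKernel (hs : -1 < s.re) {w₀ : ℂ}
    (hw₀ : w₀ ∈ gaussianSector) :
    DifferentiableAt ℂ (fun w ↦ ∫ t in Ioi 0, rotatedKernel δ s w t) w₀ := by
  set c := (w₀.re ^ 2 - w₀.im ^ 2) / 2 with hc_def
  have hc : 0 < c := half_pos (re_sq_sub_im_sq_pos hw₀)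
  set M := ‖w₀‖ + 1 with hM_def
  have h_nhds : {w : ℂ | c < w.re ^ 2 - w.im ^ 2} ∩ {w | ‖w‖ < M} ∈ nhds w₀ := by
    refine IsOpen.mem_nhds ?_ ⟨?_, by simp [hM_def]⟩
    · exact (isOpen_lt (by fun_prop) (by fun_prop)).inter (isOpen_lt (by fun_prop) (by fun_prop))
    · rw [mem_ofPred_eq]
      linarith
  have h_dom := ((integrableOn_rpow_mul_exp_quadratic hc (p := s.re + 2) (by linarith)
    (2 * π * |δ| * M)).const_mul M).add ((integrableOn_rpow_mul_exp_quadratic hc (p := s.re + 1)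
    (by linarith) (2 * π * |δ| * M)).const_mul (2 * π * |δ|))
  refine (hasDerivAt_integral_of_dominated_loc_of_deriv_le h_nhds
    (.of_forall fun w ↦ (measurable_rotatedKernel δ s w).aestronglyMeasurable)
    (integrableOn_rotatedKernel δ hs hw₀) (Measurable.aestronglyMeasurable ?_) ?_ h_dom
    (.of_forall fun t w _ ↦ hasDerivAt_rotatedKernel δ s w t)).2.differentiableAt
  · have := measurable_rotatedKernel δ s w₀
    fun_prop
  · filter_upwards [ae_restrict_mem measurableSet_Ioi] with t ht w hw
    exact norm_deriv_rotatedKernel_le δ s ht hw.1.le hw.2.le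

lemma cpow_mul_integral_rotatedKernel_ofReal {x : ℝ} (hx : 0 < x) :
    (x : ℂ) ^ (s + 1) * ∫ t in Ioi 0, rotatedKernel δ s x t
      = ∫ t in Ioi 0, rotatedKernel δ s 1 t := by
  have h_subst := integral_comp_mul_left_Ioi (rotatedKernel δ s 1) 0 hx
  have h_scale : ∫ t in Ioi 0, rotatedKernel δ s 1 (x * t)
      = (x : ℂ) ^ s * ∫ t in Ioi 0, rotatedKernel δ s x t := by
    rw [← integral_const_mul]
    refine setIntegral_congr_fun measurableSet_Ioi fun t (ht : 0 < t) ↦ ?_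
    simp only [rotatedKernel]
    rw [ofReal_mul, mul_cpow_ofReal_nonneg hx.le ht.le, mul_assoc]
    congr 3
    ring
  have hx0 : (x : ℂ) ≠ 0 := ofReal_ne_zero.mpr hx.ne'
  rw [mul_zero, h_scale] at h_subst
  rw [cpow_add _ _ hx0, cpow_one, mul_right_comm, h_subst, real_smul, ofReal_inv,
    mul_right_comm, inv_mul_cancel₀ hx0, one_mul]

lemma cpow_mul_integral_rotatedKernel (hs : -1 < s.re) {w : ℂ} (hw : w ∈ gaussianSector) :
    w ^ (s + 1) * ∫ t in Ioi 0, rotatedKernel δ s w t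
      = ∫ t in Ioi 0, rotatedKernel δ s 1 t := by
  have h_analytic : AnalyticOnNhd ℂ
      (fun w ↦ w ^ (s + 1) * ∫ t in Ioi 0, rotatedKernel δ s w t) gaussianSector :=
    DifferentiableOn.analyticOnNhd (fun w hw ↦ ((differentiableAt_id.cpow_const
      (Or.inl (re_pos_of_mem_gaussianSector hw))).mul
      (differentiableAt_integral_rotatedKernel δ hs hw)).differentiableWithinAt)
      isOpen_gaussianSector
  have h_coe : Filter.Tendsto ((↑) : ℝ → ℂ) (nhdsWithin 1 {1}ᶜ) (nhdsWithin 1 {1}ᶜ) := by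
    refine tendsto_nhdsWithin_iff.mpr ⟨?_, ?_⟩
    · exact (continuous_ofReal.tendsto' 1 1 ofReal_one).mono_left nhdsWithin_le_nhds
    · filter_upwards [self_mem_nhdsWithin] with x hx
      simpa using hx
  have h_freq : ∃ᶠ z in nhdsWithin (1 : ℂ) {1}ᶜ,
      z ^ (s + 1) * ∫ t in Ioi 0, rotatedKernel δ s z t
        = ∫ t in Ioi 0, rotatedKernel δ s 1 t := by
    refine h_coe.frequently (Filter.Eventually.frequently ?_)
    filter_upwards [nhdsWithin_le_nhds (lt_mem_nhds one_pos)] with x hx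
    exact cpow_mul_integral_rotatedKernel_ofReal δ hx
  exact h_analytic.eqOn_of_preconnected_of_frequently_eq analyticOnNhd_const
    convex_gaussianSector.isPreconnected (by simp [gaussianSector]) h_freq hw

lemma norm_integral_rotatedKernel_one_le (hs : -1 < s.re) {θ : ℝ} (hθ : |θ| < π / 4) :
    ‖∫ t in Ioi 0, rotatedKernel δ s 1 t‖
      ≤ Real.exp (-θ * s.im)
        * gaussianMoment (Real.cos (2 * θ)) (-2 * π * δ * Real.sin θ) s.re := by
  obtain ⟨hθ_lo, hθ_hi⟩ := abs_lt.mp hθ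
  set w : ℂ := cexp (θ * I)
  have hw_re : w.re = Real.cos θ := exp_ofReal_mul_I_re θ
  have hw_im : w.im = Real.sin θ := exp_ofReal_mul_I_im θ
  have h_cos_two : Real.cos (2 * θ) = w.re ^ 2 - w.im ^ 2 := by
    rw [hw_re, hw_im, Real.cos_two_mul']
  have hw : w ∈ gaussianSector := by
    have h_cos : 0 ≤ w.re := hw_re ▸ Real.cos_nonneg_of_mem_Icc ⟨by linarith, by linarith⟩
    have h_pos : 0 < Real.cos (2 * θ) := Real.cos_pos_of_mem_Ioo ⟨by linarith, by linarith⟩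
    exact abs_lt_of_sq_lt_sq (by linarith) h_cos
  have h_norm_cpow : ‖w ^ (s + 1)‖ = Real.exp (-θ * s.im) := by
    have h_log : log w = θ * I := log_exp (by simp; linarith) (by simp; linarith)
    rw [cpow_def_of_ne_zero (exp_ne_zero _), h_log, norm_exp]
    simp
  rw [← cpow_mul_integral_rotatedKernel δ hs hw, norm_mul, h_norm_cpow]
  gcongr
  refine (norm_integral_le_integral_norm _).trans_eq ?_
  refine setIntegral_congr_fun measurableSet_Ioi fun t ht ↦ ?_
  simp only [norm_rotatedKernel δ s w ht, h_cos_two, hw_im]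

end RotatedGaussianIntegral

section BandLimitedSmoothing

/-- The Mellin transform of `hcut` on the imaginary axis, `r ↦ Mh(ir)`; truncated to `[-H, H]` it
is the Mellin transform of `hH H`. -/
noncomputable def hcutMellin (r : ℝ) : ℂ := mellin (fun u : ℝ ↦ (hcut u : ℂ)) (I * r)

/-- The Mellin transform `G_δ` of `t ↦ η₊(t) e(δ t)`. -/
noncomputable def Gdelta (H δ : ℝ) (s : ℂ) : ℂ :=
  mellin (fun t ↦ (etaPlus H t : ℂ) * e2pi (δ * t)) s

lemma hcut_of_mem {u : ℝ} (hu : u ∈ Icc (0 : ℝ) 2) :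
    hcut u = u ^ 2 * (2 - u) ^ 3 * Real.exp (u - 1 / 2) := if_pos hu

lemma hcut_of_two_lt {u : ℝ} (hu : 2 < u) : hcut u = 0 := if_neg fun h ↦ hu.not_ge h.2

lemma measurable_hcut : Measurable hcut :=
  Measurable.ite measurableSet_Icc (by fun_prop) (by fun_prop)

lemma norm_hcut_le (u : ℝ) : ‖hcut u‖ ≤ 8 * Real.exp (3 / 2) * u ^ 2 := by
  unfold hcut
  split_ifs with hu
  · have h_nonneg : 0 ≤ 2 - u := by linarith [hu.2]
    have h_cube : (2 - u) ^ 3 ≤ 2 ^ 3 := pow_le_pow_left₀ h_nonneg (by linarith [hu.1]) 3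
    have h_exp : Real.exp (u - 1 / 2) ≤ Real.exp (3 / 2) :=
      Real.exp_le_exp.mpr (by linarith [hu.2])
    rw [Real.norm_of_nonneg (by positivity)]
    calc u ^ 2 * (2 - u) ^ 3 * Real.exp (u - 1 / 2) ≤ u ^ 2 * 2 ^ 3 * Real.exp (3 / 2) := by gcongr
      _ = 8 * Real.exp (3 / 2) * u ^ 2 := by ring
  · rw [norm_zero]
    positivity

lemma integrableOn_hcut_div_div {t : ℝ} (ht : 0 < t) :
    IntegrableOn (fun y : ℝ ↦ hcut (t / y) / y) (Ioi 0) := by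
  have h_meas : Measurable fun y : ℝ ↦ hcut (t / y) := measurable_hcut.comp (by fun_prop)
  have h_local : LocallyIntegrableOn (fun y : ℝ ↦ hcut (t / y)) (Ioi 0) := by
    refine LocallyIntegrableOn.mono (f := fun y ↦ 8 * Real.exp (3 / 2) * (t / y) ^ 2) ?_
      h_meas.aestronglyMeasurable (.of_forall fun y ↦ ?_)
    · refine ContinuousOn.locallyIntegrableOn (fun y (hy : 0 < y) ↦ ?_) measurableSet_Ioi
      exact ContinuousAt.continuousWithinAt (by fun_prop (disch := exact hy.ne'))
    · exact (norm_hcut_le _).trans (le_abs_self _)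
  have h_top : (fun y : ℝ ↦ hcut (t / y)) =O[Filter.atTop] (· ^ (-2 : ℝ)) := by
    refine .of_bound (8 * Real.exp (3 / 2) * t ^ 2) ?_
    filter_upwards [Filter.eventually_gt_atTop 0] with y hy
    refine (norm_hcut_le _).trans_eq ?_
    rw [Real.norm_of_nonneg (Real.rpow_nonneg hy.le _), Real.rpow_neg hy.le, Real.rpow_two]
    ring
  have h_zero : (fun y : ℝ ↦ hcut (t / y)) =O[nhdsWithin 0 (Ioi 0)] (· ^ (-(-1) : ℝ)) := by
    refine Asymptotics.IsBigO.congr' (Asymptotics.isBigO_zero _ _) ?_ .rfl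
    filter_upwards [Ioo_mem_nhdsGT (half_pos ht)] with y hy
    exact (hcut_of_two_lt ((lt_div_iff₀ hy.1).mpr (by linarith [hy.2]))).symm
  refine (mellin_convergent_of_isBigO_scalar (s := 0) h_local h_top two_pos h_zero
    (by norm_num)).congr_fun (fun y _ ↦ ?_) measurableSet_Ioi
  simp only [zero_sub, Real.rpow_neg_one, inv_mul_eq_div]

lemma integral_cpow_neg_I_mul_eq_FH (H : ℝ) {y : ℝ} (hy : 0 < y) (hy1 : y ≠ 1) :
    ∫ r in (-H)..H, (y : ℂ) ^ (-(I * r)) = 2 * π * (FH H y : ℂ) := by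
  set L := Real.log y with hL_def
  have hL : (L : ℂ) ≠ 0 := ofReal_ne_zero.mpr (Real.log_ne_zero_of_pos_of_ne_one hy hy1)
  have h_cpow (r : ℝ) : (y : ℂ) ^ (-(I * r)) = cexp (-I * L * r) := by
    rw [cpow_def_of_ne_zero (ofReal_ne_zero.mpr hy.ne'), ← ofReal_log hy.le, ← hL_def]
    ring_nf
  have h_sin : Complex.sin (H * L) = (cexp (-(H * L) * I) - cexp (H * L * I)) * I / 2 := rfl
  simp_rw [h_cpow]
  rw [integral_exp_mul_complex (by simp [hL]), FH, ← hL_def]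
  push_cast
  rw [h_sin, show -I * L * H = -(H * L) * I by ring, show -I * L * -H = H * L * I by ring]
  field_simp
  rw [I_sq]
  ring

lemma integral_hcut_div_mul_cpow {t : ℝ} (ht : 0 < t) (r : ℝ) :
    ∫ y in Ioi (0 : ℝ), ((hcut (t / y) / y : ℝ) : ℂ) * (y : ℂ) ^ (-(I * r))
      = (t : ℂ) ^ (-(I * r)) * hcutMellin r := by
  have h_inv := mellin_comp_inv (fun y : ℝ ↦ (hcut (t * y) : ℂ)) (-(I * r))
  rw [neg_neg, mellin_comp_mul_left (fun y : ℝ ↦ (hcut y : ℂ)) (I * r) ht] at h_inv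
  rw [hcutMellin, ← smul_eq_mul ((t : ℂ) ^ (-(I * r))), ← h_inv, mellin]
  refine setIntegral_congr_fun measurableSet_Ioi fun y (hy : 0 < y) ↦ ?_
  simp only [smul_eq_mul]
  rw [cpow_sub _ _ (ofReal_ne_zero.mpr hy.ne'), cpow_one, ← div_eq_mul_inv t y]
  push_cast
  ring

lemma integrable_mul_cpow_prod {f g : ℝ → ℂ} {S : Set ℝ} (hf : IntegrableOn f S)
    (hg : IntegrableOn g (Ioi 0)) :
    Integrable (fun p : ℝ × ℝ ↦ f p.1 * (g p.2 * (p.2 : ℂ) ^ (-(I * p.1))))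
      ((volume.restrict S).prod (volume.restrict (Ioi 0))) := by
  have h_unimodular : ∀ᵐ p : ℝ × ℝ ∂(volume.restrict S).prod (volume.restrict (Ioi 0)),
      ‖(p.2 : ℂ) ^ (-(I * p.1))‖ ≤ 1 := by
    have h_pos : ∀ᵐ p : ℝ × ℝ ∂(volume.restrict S).prod (volume.restrict (Ioi 0)), 0 < p.2 :=
      Measure.quasiMeasurePreserving_snd.ae (ae_restrict_mem measurableSet_Ioi)
    filter_upwards [h_pos] with p hp
    rw [norm_cpow_eq_rpow_re_of_pos hp]
    simp
  refine ((hf.mul_prod hg).mul_bdd (Measurable.aestronglyMeasurable (by fun_prop))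
    h_unimodular).congr (.of_forall fun p ↦ ?_)
  ring

lemma integrable_hcut_mul_cpow_prod {t : ℝ} (ht : 0 < t) (H : ℝ) :
    Integrable (fun p : ℝ × ℝ ↦ ((hcut (t / p.2) / p.2 : ℝ) : ℂ) * (p.2 : ℂ) ^ (-(I * p.1)))
      ((volume.restrict (Ioc (-H) H)).prod (volume.restrict (Ioi 0))) := by
  have h_hcut : IntegrableOn (fun y : ℝ ↦ ((hcut (t / y) / y : ℝ) : ℂ)) (Ioi 0) :=
    (integrableOn_hcut_div_div ht).ofReal
  have h_one : IntegrableOn (fun _ : ℝ ↦ (1 : ℂ)) (Ioc (-H) H) :=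
    integrableOn_const measure_Ioc_lt_top.ne
  simpa only [one_mul] using integrable_mul_cpow_prod h_one h_hcut

lemma integrableOn_hcutMellin (H : ℝ) : IntegrableOn hcutMellin (Ioc (-H) H) := by
  refine (integrable_hcut_mul_cpow_prod one_pos H).integral_prod_left.congr
    (.of_forall fun r ↦ ?_)
  simp only [integral_hcut_div_mul_cpow one_pos r, ofReal_one, one_cpow, one_mul]

lemma two_pi_mul_hH {H : ℝ} (hH0 : 0 ≤ H) {t : ℝ} (ht : 0 < t) :
    2 * π * (hH H t : ℂ) = ∫ r in Ioc (-H) H, (t : ℂ) ^ (-(I * r)) * hcutMellin r := by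
  simp_rw [← integral_hcut_div_mul_cpow ht]
  rw [integral_integral_swap (integrable_hcut_mul_cpow_prod ht H), hH,
    ← integral_complex_ofReal, ← integral_const_mul]
  refine integral_congr_ae ?_
  have h_ne_one : ∀ᵐ y : ℝ ∂(volume.restrict (Ioi (0 : ℝ))), y ≠ 1 :=
    ae_restrict_of_ae (Measure.ae_ne volume 1)
  filter_upwards [ae_restrict_mem measurableSet_Ioi, h_ne_one] with y hy hy1
  rw [integral_const_mul, ← intervalIntegral.integral_of_le (by linarith),
    integral_cpow_neg_I_mul_eq_FH H hy hy1]
  push_cast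
  ring

lemma rotatedKernel_sub_I_mul (δ : ℝ) (s : ℂ) (r : ℝ) {t : ℝ} (ht : 0 < t) :
    rotatedKernel δ (s - I * r) 1 t = rotatedKernel δ s 1 t * (t : ℂ) ^ (-(I * r)) := by
  rw [rotatedKernel, rotatedKernel, sub_eq_add_neg, cpow_add _ _ (ofReal_ne_zero.mpr ht.ne')]
  ring

lemma two_pi_mul_Gdelta {H : ℝ} (hH0 : 0 ≤ H) (δ : ℝ) {s : ℂ} (hs : -1 < s.re) :
    2 * π * Gdelta H δ s
      = ∫ r in Ioc (-H) H, hcutMellin r * ∫ t in Ioi 0, rotatedKernel δ (s - I * r) 1 t := by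
  have h_shift (r : ℝ) : hcutMellin r * ∫ t in Ioi 0, rotatedKernel δ (s - I * r) 1 t
      = ∫ t in Ioi (0 : ℝ), hcutMellin r * (rotatedKernel δ s 1 t * (t : ℂ) ^ (-(I * r))) := by
    rw [integral_const_mul]
    congr 1
    exact setIntegral_congr_fun measurableSet_Ioi fun t ht ↦ rotatedKernel_sub_I_mul δ s r ht
  have h_inner {t : ℝ} (ht : 0 < t) :
      ∫ r in Ioc (-H) H, hcutMellin r * (rotatedKernel δ s 1 t * (t : ℂ) ^ (-(I * r)))
        = rotatedKernel δ s 1 t * (2 * π * hH H t) := by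
    rw [two_pi_mul_hH hH0 ht, ← integral_const_mul]
    congr 1 with r
    ring
  have h_kernel := integrableOn_rotatedKernel δ hs (w := 1) (by simp [gaussianSector])
  simp_rw [h_shift]
  rw [integral_integral_swap (integrable_mul_cpow_prod (integrableOn_hcutMellin H) h_kernel),
    Gdelta, mellin, ← integral_const_mul]
  refine setIntegral_congr_fun measurableSet_Ioi fun t (ht : 0 < t) ↦ ?_
  have ht0 : (t : ℂ) ≠ 0 := ofReal_ne_zero.mpr ht.ne'
  refine Eq.trans ?_ (h_inner ht).symm
  simp only [smul_eq_mul, rotatedKernel, etaPlus, e2pi]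
  rw [cpow_sub _ _ ht0, cpow_one, Complex.exp_add]
  push_cast
  field_simp

lemma two_pi_mul_norm_Gdelta_le {H : ℝ} (hH0 : 0 ≤ H) (δ : ℝ) {s : ℂ} (hs : -1 < s.re) :
    2 * π * ‖Gdelta H δ s‖ ≤
      ∫ r in Ioc (-H) H, ‖hcutMellin r‖ * ‖∫ t in Ioi 0, rotatedKernel δ (s - I * r) 1 t‖ := by
  calc 2 * π * ‖Gdelta H δ s‖ = ‖2 * π * Gdelta H δ s‖ := by
        rw [norm_mul, norm_mul, norm_real, Real.norm_of_nonneg Real.pi_pos.le, norm_ofNat]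
    _ ≤ _ := by
        simp_rw [two_pi_mul_Gdelta hH0 δ hs, ← norm_mul]
        exact norm_integral_le_integral_norm _

end BandLimitedSmoothing

section HcutMellinBound

lemma mellin_hcut_eq (z : ℂ) :
    mellin (fun u : ℝ ↦ (hcut u : ℂ)) z
      = ∫ t in (0 : ℝ)..2, (t : ℂ) ^ (z + 1) * ((2 - t) ^ 3 * Real.exp (t - 1 / 2) : ℝ) := by
  have h_support : ∫ t in Ioi (0 : ℝ), (t : ℂ) ^ (z - 1) • (hcut t : ℂ)
      = ∫ t in Ioc (0 : ℝ) 2, (t : ℂ) ^ (z - 1) • (hcut t : ℂ) := by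
    refine setIntegral_eq_of_subset_of_forall_sdiff_eq_zero measurableSet_Ioi
      (fun t ht ↦ ht.1) fun t ht ↦ ?_
    rw [hcut_of_two_lt (not_le.mp fun h ↦ ht.2 ⟨ht.1, h⟩), ofReal_zero, smul_zero]
  rw [mellin, intervalIntegral.integral_of_le two_pos.le, h_support]
  refine setIntegral_congr_fun measurableSet_Ioc fun t ht ↦ ?_
  have ht0 : (t : ℂ) ≠ 0 := ofReal_ne_zero.mpr ht.1.ne'
  simp only [smul_eq_mul]
  rw [hcut_of_mem ⟨ht.1.le, ht.2⟩, cpow_sub _ _ ht0, cpow_add _ _ ht0, cpow_one]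
  push_cast
  field_simp

lemma intervalIntegrable_cpow_mul_ofReal {a : ℂ} (ha : 0 < a.re) {f : ℝ → ℝ} (hf : Continuous f)
    (b c : ℝ) : IntervalIntegrable (fun t : ℝ ↦ (t : ℂ) ^ a * (f t : ℂ)) volume b c := by
  have := continuous_ofReal_cpow_const ha
  exact Continuous.intervalIntegrable (by fun_prop) b c

lemma add_one_mul_integral_cpow_mul {a : ℂ} (ha : 0 < a.re) {f f' : ℝ → ℝ} {b : ℝ} (hb : 0 ≤ b)
    (hf : ∀ t, HasDerivAt f (f' t) t) (hf' : Continuous f') (hfb : f b = 0) :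
    (a + 1) * ∫ t in (0 : ℝ)..b, (t : ℂ) ^ a * (f t : ℂ)
      = -∫ t in (0 : ℝ)..b, (t : ℂ) ^ (a + 1) * (f' t : ℂ) := by
  have ha1 : 0 < (a + 1).re := by simpa using by linarith
  have ha0 : a + 1 ≠ 0 := fun h ↦ by simp [h] at ha1
  have hf_cont : Continuous f := continuous_iff_continuousAt.mpr fun t ↦ (hf t).continuousAt
  have h_deriv : ∀ t ∈ Ioo 0 b, HasDerivAt (fun t : ℝ ↦ (t : ℂ) ^ (a + 1) * (f t : ℂ))
      ((a + 1) * ((t : ℂ) ^ a * (f t : ℂ)) + (t : ℂ) ^ (a + 1) * (f' t : ℂ)) t := by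
    intro t ht
    have h_cpow := hasDerivAt_ofReal_cpow_const ht.1.ne' ha0
    rw [add_sub_cancel_right] at h_cpow
    exact (h_cpow.mul (hf t).ofReal_comp).congr_deriv (by ring)
  have h_cont : ContinuousOn (fun t : ℝ ↦ (t : ℂ) ^ (a + 1) * (f t : ℂ)) (Icc 0 b) := by
    have := continuous_ofReal_cpow_const ha1
    exact Continuous.continuousOn (by fun_prop)
  have h_int := (intervalIntegrable_cpow_mul_ofReal ha hf_cont 0 b).const_mul (a + 1)
  have h_int' := intervalIntegrable_cpow_mul_ofReal ha1 hf' 0 b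
  have h_ftc := intervalIntegral.integral_eq_sub_of_hasDerivAt_of_le hb h_cont h_deriv
    (h_int.add h_int')
  rw [intervalIntegral.integral_add h_int h_int', intervalIntegral.integral_const_mul, hfb,
    ofReal_zero, zero_cpow ha0] at h_ftc
  linear_combination h_ftc

/-- The weight left after integrating `t ^ (z + 1) * (2 - t)³ * exp (t - 1/2)` by parts twice; using
the factor `z + 13/4` in place of the natural `z + 3` makes it nonnegative on `[0, 2]`. -/
noncomputable def hcutRemainder (t : ℝ) : ℝ :=
  t * (2 - t) * (1 / 2 - 7 / 4 * t + 7 / 4 * t ^ 2 + t ^ 3) * Real.exp (t - 1 / 2)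

lemma hcutRemainder_nonneg {t : ℝ} (ht : t ∈ Icc (0 : ℝ) 2) : 0 ≤ hcutRemainder t := by
  obtain ⟨ht0, ht2⟩ := ht
  have h_cubic : 0 ≤ 1 / 2 - 7 / 4 * t + 7 / 4 * t ^ 2 + t ^ 3 := by
    nlinarith [sq_nonneg (t - 1 / 2), pow_nonneg ht0 3]
  have : 0 ≤ 2 - t := sub_nonneg.mpr ht2
  unfold hcutRemainder
  positivity

lemma cpow_mul_hcutRemainder (z : ℂ) {t : ℝ} (ht : t ≠ 0) :
    (t : ℂ) ^ (z + 1) * (hcutRemainder t : ℂ)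
      = 1 / 4 * ((t : ℂ) ^ (z + 1 + 1) * ((1 + t) * (2 - t) ^ 2 * Real.exp (t - 1 / 2) : ℝ))
        - (t : ℂ) ^ (z + 1 + 1 + 1)
          * ((2 - t) * (2 - 2 * t - t ^ 2) * Real.exp (t - 1 / 2) : ℝ) := by
  have ht0 : (t : ℂ) ≠ 0 := ofReal_ne_zero.mpr ht
  rw [cpow_add (z + 1 + 1) 1 ht0, cpow_add (z + 1) 1 ht0, cpow_one, hcutRemainder]
  push_cast
  ring

lemma mul_mellin_hcut_eq_integral_hcutRemainder {z : ℂ} (hz : -1 < z.re) :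
    (2 + z) * (13 / 4 + z) * mellin (fun u : ℝ ↦ (hcut u : ℂ)) z
      = ∫ t in (0 : ℝ)..2, (t : ℂ) ^ (z + 1) * (hcutRemainder t : ℂ) := by
  have hz1 : 0 < (z + 1).re := by simpa using by linarith
  have hz2 : 0 < (z + 1 + 1).re := by simpa using by linarith
  have h_exp (t : ℝ) : HasDerivAt (fun t ↦ Real.exp (t - 1 / 2)) (Real.exp (t - 1 / 2)) t := by
    simpa only [id, mul_one] using ((hasDerivAt_id t).sub_const (1 / 2)).exp
  have h_two_sub (t : ℝ) : HasDerivAt (fun t : ℝ ↦ 2 - t) (-1) t := by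
    simpa using (hasDerivAt_id t).const_sub 2
  have h_first := add_one_mul_integral_cpow_mul hz1 (b := 2)
    (f := fun t ↦ (2 - t) ^ 3 * Real.exp (t - 1 / 2))
    (f' := fun t ↦ -((1 + t) * (2 - t) ^ 2 * Real.exp (t - 1 / 2))) two_pos.le
    (fun t ↦ (((h_two_sub t).pow 3).mul (h_exp t)).congr_deriv (by simp; ring))
    (by fun_prop) (by simp)
  have h_second := add_one_mul_integral_cpow_mul hz2 (b := 2)
    (f := fun t ↦ (1 + t) * (2 - t) ^ 2 * Real.exp (t - 1 / 2))
    (f' := fun t ↦ (2 - t) * (2 - 2 * t - t ^ 2) * Real.exp (t - 1 / 2)) two_pos.le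
    (fun t ↦ ((((hasDerivAt_id t).const_add 1).mul ((h_two_sub t).pow 2)).mul
      (h_exp t)).congr_deriv (by simp; ring))
    (by fun_prop) (by simp)
  simp only [ofReal_neg, mul_neg, intervalIntegral.integral_neg, neg_neg] at h_first
  have h_int := intervalIntegrable_cpow_mul_ofReal (a := z + 1 + 1) hz2
    (f := fun t ↦ (1 + t) * (2 - t) ^ 2 * Real.exp (t - 1 / 2)) (by fun_prop) 0 2
  have h_int' := intervalIntegrable_cpow_mul_ofReal (a := z + 1 + 1 + 1)
    (by simpa using by linarith)
    (f := fun t ↦ (2 - t) * (2 - 2 * t - t ^ 2) * Real.exp (t - 1 / 2)) (by fun_prop) 0 2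
  have h_combine := intervalIntegral.integral_congr_ae (μ := volume) (a := 0) (b := 2)
    (.of_forall fun t ht ↦ cpow_mul_hcutRemainder z (uIoc_of_le two_pos.le (α := ℝ) ▸ ht).1.ne')
  rw [h_combine, intervalIntegral.integral_sub (h_int.const_mul _) h_int',
    intervalIntegral.integral_const_mul, ← neg_eq_iff_eq_neg.mpr h_second, mellin_hcut_eq]
  linear_combination (13 / 4 + z) * h_first

lemma integral_two_sub_cube_mul_exp_le :
    ∫ t in (0 : ℝ)..2, t * ((2 - t) ^ 3 * Real.exp (t - 1 / 2)) ≤ 2.0206 := by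
  have h_deriv : ∀ t ∈ uIcc (0 : ℝ) 2, HasDerivAt
      (fun t ↦ (-t ^ 4 + 10 * t ^ 3 - 42 * t ^ 2 + 92 * t - 92) * Real.exp (t - 1 / 2))
      (t * ((2 - t) ^ 3 * Real.exp (t - 1 / 2))) t := by
    intro t _
    have h_id := hasDerivAt_id t
    have h_poly := ((((h_id.pow 4).neg.add ((h_id.pow 3).const_mul 10)).sub
      ((h_id.pow 2).const_mul 42)).add (h_id.const_mul 92)).sub_const 92
    refine (h_poly.mul (h_id.sub_const (1 / 2)).exp).congr_deriv ?_
    simp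
    ring
  have h_eval : ∫ t in (0 : ℝ)..2, t * ((2 - t) ^ 3 * Real.exp (t - 1 / 2))
      = 92 * Real.exp (-(1 / 2)) - 12 * Real.exp (3 / 2) := by
    rw [intervalIntegral.integral_eq_sub_of_hasDerivAt h_deriv
      (Continuous.intervalIntegrable (by fun_prop) _ _)]
    norm_num
    ring
  have h_exp_two : Real.exp (3 / 2) = Real.exp (-(1 / 2)) * (Real.exp 1 * Real.exp 1) := by
    rw [← Real.exp_add, ← Real.exp_add]
    norm_num
  have h_sq : Real.exp (-(1 / 2)) * Real.exp (-(1 / 2)) * Real.exp 1 = 1 := by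
    rw [← Real.exp_add, ← Real.exp_add]
    norm_num
  have h_pos : 0 < Real.exp (-(1 / 2)) := Real.exp_pos _
  have h_e : 2.7182818283 < Real.exp 1 := Real.exp_one_gt_d9
  have h_half : Real.exp (-(1 / 2)) ≤ 0.606531 := by nlinarith
  rw [h_eval, h_exp_two]
  nlinarith

lemma norm_hcutMellin_le (r : ℝ) : ‖hcutMellin r‖ ≤ 2.0206 * 6.5 / (6.5 + r ^ 2) := by
  have h_norm : ‖∫ t in (0 : ℝ)..2, (t : ℂ) ^ (I * r + 1) * (hcutRemainder t : ℂ)‖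
      ≤ ∫ t in (0 : ℝ)..2, t * hcutRemainder t := by
    refine intervalIntegral.norm_integral_le_of_norm_le two_pos.le (.of_forall fun t ht ↦ ?_)
      (Continuous.intervalIntegrable (by unfold hcutRemainder; fun_prop) _ _)
    rw [norm_mul, norm_cpow_eq_rpow_re_of_pos ht.1, norm_real,
      Real.norm_of_nonneg (hcutRemainder_nonneg ⟨ht.1.le, ht.2⟩)]
    simp
  have h_zero : ∫ t in (0 : ℝ)..2, t * hcutRemainder t
      = 6.5 * ∫ t in (0 : ℝ)..2, t * ((2 - t) ^ 3 * Real.exp (t - 1 / 2)) := by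
    have h_parts := mul_mellin_hcut_eq_integral_hcutRemainder (z := 0) (by simp)
    simp only [mellin_hcut_eq, zero_add, cpow_one, add_zero, ← ofReal_mul,
      intervalIntegral.integral_ofReal] at h_parts
    refine ofReal_injective ?_
    rw [← h_parts, ofReal_mul]
    norm_num
  have h_factor : 6.5 + r ^ 2 ≤ ‖(2 + I * r) * (13 / 4 + I * r)‖ := by
    refine le_of_sq_le_sq ?_ (norm_nonneg _)
    rw [norm_mul, mul_pow, ← normSq_eq_norm_sq, ← normSq_eq_norm_sq, normSq_apply, normSq_apply]
    simp
    nlinarith [sq_nonneg r]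
  rw [le_div_iff₀ (by positivity)]
  calc ‖hcutMellin r‖ * (6.5 + r ^ 2)
      ≤ ‖hcutMellin r‖ * ‖(2 + I * r) * (13 / 4 + I * r)‖ := by gcongr
    _ = ‖∫ t in (0 : ℝ)..2, (t : ℂ) ^ (I * r + 1) * (hcutRemainder t : ℂ)‖ := by
        rw [mul_comm, ← norm_mul, hcutMellin,
          mul_mellin_hcut_eq_integral_hcutRemainder (by simp)]
    _ ≤ 2.0206 * 6.5 := by linarith [integral_two_sub_cube_mul_exp_le]

end HcutMellinBound

section LorentzWeight

variable {s H θ : ℝ}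

lemma integral_sq_div_sq_add_sq (hs : 0 < s) (a b : ℝ) :
    ∫ r in a..b, s ^ 2 / (s ^ 2 + r ^ 2)
      = s * (Real.arctan (b / s) - Real.arctan (a / s)) := by
  simp_rw [div_eq_mul_inv (s ^ 2)]
  rw [intervalIntegral.integral_const_mul, integral_inv_sq_add_sq hs.ne']
  field_simp

lemma continuous_sq_div_sq_add_sq (hs : 0 < s) : Continuous fun r : ℝ ↦ s ^ 2 / (s ^ 2 + r ^ 2) :=
  Continuous.div (by fun_prop) (by fun_prop) fun r ↦ by positivity

lemma sq_div_sq_add_sq_mul_le (hs : 0 < s) (r : ℝ) : s ^ 2 / (s ^ 2 + r ^ 2) * r ≤ s / 2 := by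
  rw [div_mul_eq_mul_div, div_le_div_iff₀ (by positivity) two_pos]
  nlinarith [mul_nonneg hs.le (sq_nonneg (r - s))]

lemma exp_neg_mul_sub_le_chord (hH : 0 < H) {r : ℝ} (hr : r ∈ Icc 0 H) :
    Real.exp (-θ * (H - r)) ≤ Real.exp (-θ * H) + (1 - Real.exp (-θ * H)) * (r / H) := by
  have h_le : r / H ≤ 1 := (div_le_one hH).mpr hr.2
  have h_convex := convexOn_exp.2 (mem_univ (-θ * H)) (mem_univ 0) (sub_nonneg.mpr h_le)
    (div_nonneg hr.1 hH.le) (by ring)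
  simp only [smul_eq_mul, mul_zero, add_zero, Real.exp_zero, mul_one] at h_convex
  rw [show -θ * (H - r) = (1 - r / H) * (-θ * H) by field_simp]
  linarith

lemma integral_lorentz_mul_exp_neg_half_le (hs : 0 < s) (hH : 0 < H) (hθ : 0 ≤ θ) :
    ∫ r in (-H)..0, s ^ 2 / (s ^ 2 + r ^ 2) * Real.exp (-θ * (H - r))
      ≤ s * (π / 2) * Real.exp (-θ * H) := by
  have h_cont := continuous_sq_div_sq_add_sq hs
  calc ∫ r in (-H)..0, s ^ 2 / (s ^ 2 + r ^ 2) * Real.exp (-θ * (H - r))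
      ≤ ∫ r in (-H)..0, s ^ 2 / (s ^ 2 + r ^ 2) * Real.exp (-θ * H) := by
        refine intervalIntegral.integral_mono_on (by linarith)
          (Continuous.intervalIntegrable (by fun_prop) _ _)
          (Continuous.intervalIntegrable (by fun_prop) _ _) fun r hr ↦ ?_
        refine mul_le_mul_of_nonneg_left (Real.exp_le_exp.mpr ?_) (by positivity)
        nlinarith [hr.2]
    _ = s * Real.arctan (H / s) * Real.exp (-θ * H) := by
        rw [intervalIntegral.integral_mul_const, integral_sq_div_sq_add_sq hs, zero_div,
          Real.arctan_zero, neg_div, Real.arctan_neg, sub_neg_eq_add, zero_add]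
    _ ≤ s * (π / 2) * Real.exp (-θ * H) := by
        gcongr
        exact (Real.arctan_lt_pi_div_two _).le

lemma integral_lorentz_mul_exp_pos_half_le (hs : 0 < s) (hH : 0 < H) (hθ : 0 ≤ θ) :
    ∫ r in (0 : ℝ)..H, s ^ 2 / (s ^ 2 + r ^ 2) * Real.exp (-θ * (H - r))
      ≤ s * (π / 2) * Real.exp (-θ * H) + s / 2 * (1 - Real.exp (-θ * H)) := by
  set E := Real.exp (-θ * H)
  have hE : 0 ≤ 1 - E := sub_nonneg.mpr (Real.exp_le_one_iff.mpr (by nlinarith))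
  have h_cont := continuous_sq_div_sq_add_sq hs
  calc ∫ r in (0 : ℝ)..H, s ^ 2 / (s ^ 2 + r ^ 2) * Real.exp (-θ * (H - r))
      ≤ ∫ r in (0 : ℝ)..H, (s ^ 2 / (s ^ 2 + r ^ 2) * E + s / 2 * (1 - E) / H) := by
        refine intervalIntegral.integral_mono_on hH.le
          (Continuous.intervalIntegrable (by fun_prop) _ _)
          (Continuous.intervalIntegrable (by fun_prop) _ _) fun r hr ↦ ?_
        calc s ^ 2 / (s ^ 2 + r ^ 2) * Real.exp (-θ * (H - r))
            ≤ s ^ 2 / (s ^ 2 + r ^ 2) * (E + (1 - E) * (r / H)) := by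
              gcongr
              exact exp_neg_mul_sub_le_chord hH hr
          _ = s ^ 2 / (s ^ 2 + r ^ 2) * E + s ^ 2 / (s ^ 2 + r ^ 2) * r * (1 - E) / H := by ring
          _ ≤ s ^ 2 / (s ^ 2 + r ^ 2) * E + s / 2 * (1 - E) / H := by
              gcongr
              exact sq_div_sq_add_sq_mul_le hs r
    _ = s * Real.arctan (H / s) * E + s / 2 * (1 - E) := by
        rw [intervalIntegral.integral_add (Continuous.intervalIntegrable (by fun_prop) _ _)
          (by simp), intervalIntegral.integral_mul_const, integral_sq_div_sq_add_sq hs,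
          intervalIntegral.integral_const, zero_div, Real.arctan_zero, smul_eq_mul]
        field_simp
        ring
    _ ≤ s * (π / 2) * E + s / 2 * (1 - E) := by
        gcongr
        exact (Real.arctan_lt_pi_div_two _).le

lemma integral_lorentz_mul_exp_le (hs : 0 < s) (hH : 0 < H) (hθ : 0 ≤ θ) :
    ∫ r in (-H)..H, s ^ 2 / (s ^ 2 + r ^ 2) * Real.exp (-θ * (H - r))
      ≤ s * π * Real.exp (-θ * H) + s / 2 * (1 - Real.exp (-θ * H)) := by
  have h_cont := continuous_sq_div_sq_add_sq hs
  rw [← intervalIntegral.integral_add_adjacent_intervals (b := 0)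
    (Continuous.intervalIntegrable (by fun_prop) _ _)
    (Continuous.intervalIntegrable (by fun_prop) _ _)]
  linarith [integral_lorentz_mul_exp_neg_half_le hs hH hθ,
    integral_lorentz_mul_exp_pos_half_le hs hH hθ]

lemma integral_hcutMellin_majorant_mul_exp_le (hH : 5 ≤ H) (hθ : 0 ≤ θ) :
    ∫ r in (-H)..H, 2.0206 * 6.5 / (6.5 + r ^ 2) * Real.exp (-θ * (H - r))
      ≤ 2.576 + 13.609 * Real.exp (-5 * θ) := by
  set s := √6.5
  have hs : 0 < s := Real.sqrt_pos.mpr (by norm_num)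
  have hs_sq : s ^ 2 = 6.5 := Real.sq_sqrt (by norm_num)
  have hs_le : 2.0206 * s ≤ 5.15155 := by nlinarith
  set E := Real.exp (-θ * H)
  have hE : 0 < E := Real.exp_pos _
  have hE_le : E ≤ Real.exp (-5 * θ) := Real.exp_le_exp.mpr (by nlinarith)
  calc ∫ r in (-H)..H, 2.0206 * 6.5 / (6.5 + r ^ 2) * Real.exp (-θ * (H - r))
      = 2.0206 * ∫ r in (-H)..H, s ^ 2 / (s ^ 2 + r ^ 2) * Real.exp (-θ * (H - r)) := by
        rw [← intervalIntegral.integral_const_mul, hs_sq]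
        congr 1 with r
        ring
    _ ≤ 2.0206 * (s * π * E + s / 2 * (1 - E)) := by
        gcongr
        exact integral_lorentz_mul_exp_le hs (by linarith) hθ
    _ = 2.0206 * s * ((π - 1 / 2) * E + 1 / 2) := by ring
    _ ≤ 5.15155 * ((3.1416 - 1 / 2) * E + 1 / 2) := by
        have : 0 ≤ (π - 1 / 2) * E := mul_nonneg (by linarith [Real.pi_gt_three]) hE.le
        gcongr
        exact Real.pi_lt_d4.le
    _ ≤ 2.576 + 13.609 * Real.exp (-5 * θ) := by linarith

end LorentzWeight

section GaussianMoments

variable {c b B σ t : ℝ}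

lemma rpow_add_rpow_one_sub_le (ht : 0 < t) (hσ0 : 0 ≤ σ) (hσ1 : σ ≤ 1) :
    t ^ σ + t ^ (1 - σ) ≤ 1 + t := by
  have h_prod : t ^ σ * t ^ (1 - σ) = t := by
    rw [← Real.rpow_add ht, add_sub_cancel, Real.rpow_one]
  suffices 0 ≤ (1 - t ^ σ) * (1 - t ^ (1 - σ)) by linarith
  have hσ1' : 0 ≤ 1 - σ := sub_nonneg.mpr hσ1
  rcases le_total t 1 with h | h
  · exact mul_nonneg (sub_nonneg.mpr (Real.rpow_le_one ht.le h hσ0))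
      (sub_nonneg.mpr (Real.rpow_le_one ht.le h hσ1'))
  · exact mul_nonneg_of_nonpos_of_nonpos (sub_nonpos.mpr (Real.one_le_rpow h hσ0))
      (sub_nonpos.mpr (Real.one_le_rpow h hσ1'))

lemma integrableOn_exp_quadratic (hc : 0 < c) (B : ℝ) :
    IntegrableOn (fun t : ℝ ↦ Real.exp (-c * t ^ 2 / 2 + B * t)) (Ioi 0) := by
  simpa only [Real.rpow_zero, one_mul] using
    integrableOn_rpow_mul_exp_quadratic hc (p := 0) (by norm_num) B

lemma integrableOn_sub_mul_exp_quadratic (hc : 0 < c) (B a : ℝ) :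
    IntegrableOn (fun t : ℝ ↦ (t - a) * Real.exp (-c * t ^ 2 / 2 + B * t)) (Ioi 0) := by
  have h_one := integrableOn_rpow_mul_exp_quadratic hc (p := 1) (by norm_num) B
  refine (h_one.sub ((integrableOn_exp_quadratic hc B).const_mul a)).congr (.of_forall fun t ↦ ?_)
  simp only [Pi.sub_apply, Real.rpow_one, sub_mul]

lemma tendsto_quadratic_atBot (hc : 0 < c) (B : ℝ) :
    Filter.Tendsto (fun t : ℝ ↦ -c * t ^ 2 / 2 + B * t) Filter.atTop Filter.atBot := by
  have h_factor : (fun t : ℝ ↦ -c * t ^ 2 / 2 + B * t) = fun t ↦ t * (B + -(c / 2) * t) := by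
    ext t
    ring
  rw [h_factor]
  exact Filter.tendsto_id.atTop_mul_atBot₀ <| Filter.tendsto_atBot_add_const_left _ _ <|
    Filter.tendsto_id.const_mul_atTop_of_neg (by linarith)

lemma integral_sub_mul_exp_quadratic (hc : 0 < c) (B : ℝ) :
    ∫ t in Ioi (0 : ℝ), (t - B / c) * Real.exp (-c * t ^ 2 / 2 + B * t) = 1 / c := by
  have h_deriv (t : ℝ) (_ : t ∈ Ici (0 : ℝ)) :
      HasDerivAt (fun t ↦ -(1 / c) * Real.exp (-c * t ^ 2 / 2 + B * t))
        ((t - B / c) * Real.exp (-c * t ^ 2 / 2 + B * t)) t := by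
    have h_exponent : HasDerivAt (fun t : ℝ ↦ -c * t ^ 2 / 2 + B * t) (-c * t + B) t := by
      refine ((((hasDerivAt_pow 2 t).const_mul (-c)).div_const 2).add
        ((hasDerivAt_id t).const_mul B)).congr_deriv ?_
      norm_num
      ring
    refine (h_exponent.exp.const_mul (-(1 / c))).congr_deriv ?_
    field_simp
    ring
  have h_tendsto := (Real.tendsto_exp_atBot.comp (tendsto_quadratic_atBot hc B)).const_mul
    (-(1 / c))
  rw [integral_Ioi_of_hasDerivAt_of_tendsto' h_deriv
    (integrableOn_sub_mul_exp_quadratic hc B (B / c)) h_tendsto]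
  simp

lemma integral_exp_quadratic_le (hc : 0 < c) (B : ℝ) :
    ∫ t in Ioi (0 : ℝ), Real.exp (-c * t ^ 2 / 2 + B * t)
      ≤ √(2 * π / c) * Real.exp (B ^ 2 / (2 * c)) := by
  have h_square (t : ℝ) : Real.exp (-c * t ^ 2 / 2 + B * t)
      = Real.exp (B ^ 2 / (2 * c)) * Real.exp (-(c / 2) * (t - B / c) ^ 2) := by
    rw [← Real.exp_add]
    congr 1
    field_simp
    ring
  have h_int : Integrable fun t : ℝ ↦
      Real.exp (B ^ 2 / (2 * c)) * Real.exp (-(c / 2) * (t - B / c) ^ 2) :=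
    ((integrable_exp_neg_mul_sq (b := c / 2) (by positivity)).comp_sub_right (B / c)).const_mul _
  simp_rw [h_square]
  refine (setIntegral_le_integral h_int (.of_forall fun t ↦ by positivity)).trans_eq ?_
  rw [integral_const_mul,
    integral_sub_right_eq_self (fun t : ℝ ↦ Real.exp (-(c / 2) * t ^ 2)) (B / c),
    integral_gaussian, mul_comm]
  congr 2
  field_simp

/-- A closed-form upper bound for `∫ (1 + t) * exp (-c t² / 2 + B t)` over `(0, ∞)`, obtained by
splitting `1 + t = (t - B / c) + (1 + B / c)`. -/
noncomputable def gaussianMomentBound (c B : ℝ) : ℝ :=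
  1 / c + (1 + B / c) * (√(2 * π / c) * Real.exp (B ^ 2 / (2 * c)))

lemma gaussianMomentBound_nonneg (hc : 0 < c) (hB : 0 ≤ B) : 0 ≤ gaussianMomentBound c B := by
  unfold gaussianMomentBound
  positivity

lemma integral_one_add_mul_exp_quadratic_le (hc : 0 < c) (hB : 0 ≤ B) :
    ∫ t in Ioi (0 : ℝ), (1 + t) * Real.exp (-c * t ^ 2 / 2 + B * t)
      ≤ gaussianMomentBound c B := by
  calc ∫ t in Ioi (0 : ℝ), (1 + t) * Real.exp (-c * t ^ 2 / 2 + B * t)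
      = (∫ t in Ioi (0 : ℝ), (t - B / c) * Real.exp (-c * t ^ 2 / 2 + B * t))
        + (1 + B / c) * ∫ t in Ioi (0 : ℝ), Real.exp (-c * t ^ 2 / 2 + B * t) := by
        rw [← integral_const_mul, ← integral_add (integrableOn_sub_mul_exp_quadratic hc B _)
          ((integrableOn_exp_quadratic hc B).const_mul _)]
        congr 1 with t
        ring
    _ ≤ gaussianMomentBound c B := by
        rw [integral_sub_mul_exp_quadratic hc, gaussianMomentBound]
        gcongr
        exact integral_exp_quadratic_le hc B

lemma gaussianMoment_nonneg (c b σ : ℝ) : 0 ≤ gaussianMoment c b σ :=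
  setIntegral_nonneg measurableSet_Ioi fun t (ht : 0 < t) ↦ by positivity

lemma gaussianMoment_add_gaussianMoment_one_sub_le (hc : 0 < c) (hbB : b ≤ B) (hB : 0 ≤ B)
    (hσ0 : 0 ≤ σ) (hσ1 : σ ≤ 1) :
    gaussianMoment c b σ + gaussianMoment c b (1 - σ) ≤ gaussianMomentBound c B := by
  refine le_trans ?_ (integral_one_add_mul_exp_quadratic_le hc hB)
  have h_int {p : ℝ} (hp : 0 ≤ p) := integrableOn_rpow_mul_exp_quadratic hc (p := p)
    (by linarith) b
  have h_int_add := (h_int hσ0).add (h_int (sub_nonneg.mpr hσ1))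
  have h_int_one_add : IntegrableOn
      (fun t : ℝ ↦ (1 + t) * Real.exp (-c * t ^ 2 / 2 + B * t)) (Ioi 0) := by
    simpa only [sub_neg_eq_add, add_comm] using integrableOn_sub_mul_exp_quadratic hc B (-1)
  rw [gaussianMoment, gaussianMoment, ← integral_add (h_int hσ0) (h_int (sub_nonneg.mpr hσ1))]
  refine setIntegral_mono_on h_int_add h_int_one_add measurableSet_Ioi fun t (ht : 0 < t) ↦ ?_
  rw [← add_mul]
  exact mul_le_mul (rpow_add_rpow_one_sub_le ht hσ0 hσ1)
    (Real.exp_le_exp.mpr (by nlinarith)) (Real.exp_pos _).le (by positivity)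

end GaussianMoments

section MellinDecay

variable {H θ : ℝ} {s : ℂ}

lemma two_pi_mul_norm_Gdelta_le_gaussianMoment (hH : 5 ≤ H) (δ : ℝ) (hs : -1 < s.re)
    (hθ0 : 0 ≤ θ) (hθ : θ < π / 4) :
    2 * π * ‖Gdelta H δ s‖ ≤ (2.576 + 13.609 * Real.exp (-5 * θ)) * (Real.exp (-θ * (s.im - H))
      * gaussianMoment (Real.cos (2 * θ)) (-2 * π * δ * Real.sin θ) s.re) := by
  set J := gaussianMoment (Real.cos (2 * θ)) (-2 * π * δ * Real.sin θ) s.re with hJ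
  have hJ0 : 0 ≤ J := gaussianMoment_nonneg ..
  have h_kernel (r : ℝ) : ‖∫ t in Ioi 0, rotatedKernel δ (s - I * r) 1 t‖
      ≤ Real.exp (-θ * (H - r)) * (Real.exp (-θ * (s.im - H)) * J) := by
    have h_re : (s - I * r).re = s.re := by simp
    have h_im : (s - I * r).im = s.im - r := by simp
    have h_rot := norm_integral_rotatedKernel_one_le δ (h_re ▸ hs) ((abs_of_nonneg hθ0).trans_lt hθ)
    rw [h_re, h_im, ← hJ] at h_rot
    rw [← mul_assoc, ← Real.exp_add]
    convert h_rot using 3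
    ring
  have h_cont : Continuous fun r : ℝ ↦ (2.0206 * 6.5 / (6.5 + r ^ 2) : ℝ) :=
    continuous_const.div (by fun_prop) fun r ↦ by positivity
  calc 2 * π * ‖Gdelta H δ s‖
      ≤ ∫ r in Ioc (-H) H, ‖hcutMellin r‖ * ‖∫ t in Ioi 0, rotatedKernel δ (s - I * r) 1 t‖ :=
        two_pi_mul_norm_Gdelta_le (by linarith) δ hs
    _ ≤ ∫ r in Ioc (-H) H, 2.0206 * 6.5 / (6.5 + r ^ 2) * Real.exp (-θ * (H - r))
          * (Real.exp (-θ * (s.im - H)) * J) := by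
        refine integral_mono_of_nonneg (.of_forall fun r ↦ by positivity)
          (Continuous.integrableOn_Ioc (by fun_prop)) (.of_forall fun r ↦ ?_)
        dsimp only
        rw [mul_assoc]
        exact mul_le_mul (norm_hcutMellin_le r) (h_kernel r) (norm_nonneg _) (by positivity)
    _ ≤ _ := by
        rw [← intervalIntegral.integral_of_le (by linarith), intervalIntegral.integral_mul_const]
        gcongr
        exact integral_hcutMellin_majorant_mul_exp_le hH hθ0

lemma norm_Gdelta_neg_conj (H δ : ℝ) (s : ℂ) : ‖Gdelta H (-δ) (conj s)‖ = ‖Gdelta H δ s‖ := by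
  rw [← norm_conj (Gdelta H δ s), Gdelta, Gdelta, mellin, mellin, ← integral_conj]
  congr 1
  refine setIntegral_congr_fun measurableSet_Ioi fun t (ht : 0 < t) ↦ ?_
  have h_arg : (t : ℂ).arg ≠ π := by
    rw [arg_ofReal_of_nonneg ht.le]
    exact Real.pi_pos.ne
  have h_cpow : conj ((t : ℂ) ^ (s - 1)) = (t : ℂ) ^ (conj s - 1) := by
    simpa using (cpow_conj (t : ℂ) (s - 1) h_arg).symm
  have h_e2pi : conj (e2pi (δ * t)) = e2pi (-δ * t) := by
    simp [e2pi, ← exp_conj, conj_ofNat]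
  simp only [smul_eq_mul, map_mul, h_cpow, conj_ofReal, h_e2pi]

lemma two_pi_mul_norm_Gdelta_add_le (hH : 5 ≤ H) (δ : ℝ) (hs0 : 0 ≤ s.re) (hs1 : s.re ≤ 1)
    (hθ0 : 0 ≤ θ) (hθ : θ < π / 4) {B : ℝ} (hB : 0 ≤ B) (hδB : -2 * π * δ * Real.sin θ ≤ B) :
    2 * π * (‖Gdelta H δ s‖ + ‖Gdelta H δ (1 - conj s)‖)
      ≤ (2.576 + 13.609 * Real.exp (-5 * θ))
        * (Real.exp (-θ * (s.im - H)) * gaussianMomentBound (Real.cos (2 * θ)) B) := by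
  have h_re : (1 - conj s).re = 1 - s.re := by simp
  have h_im : (1 - conj s).im = s.im := by simp
  have h_left := two_pi_mul_norm_Gdelta_le_gaussianMoment hH δ (s := s) (by linarith) hθ0 hθ
  have h_right := two_pi_mul_norm_Gdelta_le_gaussianMoment hH δ (s := 1 - conj s)
    (by linarith) hθ0 hθ
  rw [h_re, h_im] at h_right
  have hc : 0 < Real.cos (2 * θ) :=
    Real.cos_pos_of_mem_Ioo ⟨by linarith [Real.pi_pos], by linarith⟩
  calc 2 * π * (‖Gdelta H δ s‖ + ‖Gdelta H δ (1 - conj s)‖)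
      ≤ (2.576 + 13.609 * Real.exp (-5 * θ)) * (Real.exp (-θ * (s.im - H))
        * (gaussianMoment (Real.cos (2 * θ)) (-2 * π * δ * Real.sin θ) s.re
          + gaussianMoment (Real.cos (2 * θ)) (-2 * π * δ * Real.sin θ) (1 - s.re))) := by linarith
    _ ≤ _ := by
        gcongr
        exact gaussianMoment_add_gaussianMoment_one_sub_le hc hδB hB hs0 hs1

lemma two_pi_mul_norm_Gdelta_add_le_of_abs_eq_one (hH : 5 ≤ H) (δ : ℝ) (hs0 : 0 ≤ s.re)
    (hs1 : s.re ≤ 1) (hθ0 : 0 ≤ θ) (hθ : θ < π / 4) {ε : ℝ} (hε : |ε| = 1) {B : ℝ} (hB : 0 ≤ B)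
    (hδB : -2 * π * (ε * δ) * Real.sin θ ≤ B) :
    2 * π * (‖Gdelta H δ s‖ + ‖Gdelta H δ (1 - conj s)‖)
      ≤ (2.576 + 13.609 * Real.exp (-5 * θ))
        * (Real.exp (-θ * (ε * s.im - H)) * gaussianMomentBound (Real.cos (2 * θ)) B) := by
  rcases eq_or_eq_neg_of_abs_eq hε with rfl | rfl
  · rw [one_mul] at hδB ⊢
    exact two_pi_mul_norm_Gdelta_add_le hH δ hs0 hs1 hθ0 hθ hB hδB
  · rw [neg_one_mul] at hδB ⊢
    have h_refl : ‖Gdelta H (-δ) (1 - conj (conj s))‖ = ‖Gdelta H δ (1 - conj s)‖ := by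
      rw [← norm_Gdelta_neg_conj H δ (1 - conj s), map_sub, map_one]
    rw [← norm_Gdelta_neg_conj, ← h_refl, ← conj_im]
    exact two_pi_mul_norm_Gdelta_add_le hH (-δ) (by rwa [conj_re]) (by rwa [conj_re]) hθ0 hθ hB hδB

end MellinDecay

section HighZeroSums

lemma sum_add_mul_geometric_le {x a b : ℝ} (hx0 : 0 ≤ x) (hx1 : x < 1) (ha : 0 ≤ a) (hb : 0 ≤ b)
    (K : Finset ℕ) : ∑ k ∈ K, (a + b * k) * x ^ k ≤ a / (1 - x) + b * (x / (1 - x) ^ 2) := by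
  have h_geom := (hasSum_geometric_of_lt_one hx0 hx1).mul_left a
  have h_deriv := (hasSum_coe_mul_geometric_of_norm_lt_one
    ((Real.norm_of_nonneg hx0).trans_lt hx1)).mul_left b
  have h_sum : HasSum (fun k : ℕ ↦ (a + b * k) * x ^ k) (a / (1 - x) + b * (x / (1 - x) ^ 2)) := by
    rw [div_eq_mul_inv]
    refine (h_geom.add h_deriv).congr_fun fun k ↦ ?_
    ring
  exact sum_le_hasSum K (fun k _ ↦ by positivity) h_sum

/-- The set of nontrivial zeros `ρ` of `L(s, χ)` with `|Im ρ| > T₀`. -/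
def highZeros {q : ℕ} [NeZero q] (χ : DirichletCharacter ℂ q) (T₀ : ℝ) : Set ℂ :=
  {ρ | LFunction χ ρ = 0 ∧ 0 < ρ.re ∧ ρ.re < 1 ∧ T₀ < |ρ.im|}

variable {q : ℕ} [NeZero q] {χ : DirichletCharacter ℂ q} {H T₀ θ δ ε B : ℝ}

lemma one_sub_conj_mem_highZeros (hχ : χ.IsPrimitive) {ρ : ℂ} (hρ : ρ ∈ highZeros χ T₀) :
    1 - conj ρ ∈ highZeros χ T₀ := by
  obtain ⟨h_zero, h0, h1, h_im⟩ := hρ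
  exact ⟨LFunction_one_sub_conj_eq_zero hχ h_zero h0 h1, by simpa using h1, by simpa using h0,
    by simpa using h_im⟩

variable (q) in
lemma le_log_conductor (hT : 105 ≤ T₀) : 2.81 ≤ Real.log (q * T₀ / (2 * π)) := by
  have hq : (1 : ℝ) ≤ q := by exact_mod_cast NeZero.one_le
  have h_arg : (16.7 : ℝ) ≤ q * T₀ / (2 * π) := by
    rw [le_div_iff₀ (by positivity)]
    nlinarith [Real.pi_lt_d4]
  rw [Real.le_log_iff_exp_le (by linarith)]
  refine le_trans ?_ h_arg
  have h_exp_mul : Real.exp 2.81 * Real.exp 0.19 = Real.exp 1 ^ 3 := by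
    rw [← Real.exp_add, ← Real.exp_nat_mul]
    norm_num
  have h_exp_three : Real.exp 1 ^ 3 ≤ 20.09 :=
    (pow_le_pow_left₀ (Real.exp_pos 1).le Real.exp_one_lt_d9.le 3).trans (by norm_num)
  have h_exp_small : (1.209 : ℝ) ≤ Real.exp 0.19 :=
    le_trans (by norm_num) (quintic_le_exp (x := 0.19) (by norm_num))
  nlinarith [Real.exp_pos 2.81]

variable (q) in
lemma log_conductor_add_le {h : ℝ} (hT : 0 < T₀) (hh : 0 ≤ h) :
    Real.log (q * (T₀ + h) / (2 * π)) ≤ Real.log (q * T₀ / (2 * π)) + h / T₀ := by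
  have hq : (0 : ℝ) < q := by exact_mod_cast NeZero.pos q
  have h_factor : q * (T₀ + h) / (2 * π) = q * T₀ / (2 * π) * (1 + h / T₀) := by field_simp
  rw [h_factor, Real.log_mul (by positivity) (by positivity)]
  linarith [Real.log_le_sub_one_of_pos (show 0 < 1 + h / T₀ by positivity)]

lemma card_zeros_window_le (hχ : χ.IsPrimitive) (hT : 105 ≤ T₀) (hε : |ε| = 1) (k : ℕ)
    (W : Finset ℂ) (hW : ∀ ρ ∈ W, ρ ∈ highZeros χ T₀ ∧ |ε * ρ.im - (T₀ + (3 / 2 + 3 * k))| ≤ 3 / 2)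
    (h_refl : ∀ ρ ∈ W, 1 - conj ρ ∈ W) :
    (W.card : ℝ) ≤ (1.706 + 1.37 / T₀ * k) * Real.log (q * T₀ / (2 * π)) := by
  set u := T₀ + (3 / 2 + 3 * k) with hu
  have hT0 : 0 < T₀ := by linarith
  have hu0 : 105 ≤ u := by linarith [k.cast_nonneg (α := ℝ)]
  have h_abs : |ε * u| = u := by rw [abs_mul, hε, one_mul, abs_of_nonneg (by linarith)]
  have hε_sq : ε * ε = 1 := by rw [← abs_mul_abs_self, hε, one_mul]
  have h_dist (ρ : ℂ) : |ρ.im - ε * u| = |ε * ρ.im - u| := by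
    rw [← one_mul |ρ.im - ε * u|, ← hε, ← abs_mul]
    congr 1
    linear_combination -u * hε_sq
  have h_count := card_zeros_le (T := ε * u) (by rwa [h_abs]) hχ W (fun ρ hρ ↦ by
    obtain ⟨⟨h_zero, h0, h1, -⟩, h_window⟩ := hW ρ hρ
    exact ⟨h_zero, h0, h1, by rwa [h_dist]⟩) h_refl
  rw [h_abs] at h_count
  have h_log := log_conductor_add_le q hT0 (h := 3 / 2 + 3 * k) (by positivity)
  have h_shift : (3 / 2 + 3 * (k : ℝ)) / T₀ ≤ 3 / 2 / 105 + 3 * (k / T₀) := by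
    rw [add_div, mul_div_assoc]
    gcongr
  have hL := le_log_conductor q hT
  set L := Real.log (q * T₀ / (2 * π))
  have h_tail : 2.81 * (k / T₀) ≤ L * (k / T₀) := by gcongr
  have : 0 ≤ k / T₀ := by positivity
  rw [add_mul, show 1.37 / T₀ * k * L = 1.37 * (L * (k / T₀)) by ring]
  norm_num at h_count hL h_tail h_shift ⊢
  linarith

/-- The zeros `ρ` with `T₀ + 3k ≤ ε Im ρ < T₀ + 3(k + 1)` all get the index `k`. -/
noncomputable def windowIndex (T₀ ε : ℝ) (ρ : ℂ) : ℕ := ⌊(ε * ρ.im - T₀) / 3⌋₊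

lemma mem_window_of_windowIndex_eq {ρ : ℂ} {k : ℕ} (hρ : T₀ < ε * ρ.im)
    (hk : windowIndex T₀ ε ρ = k) : T₀ + 3 * k ≤ ε * ρ.im ∧ ε * ρ.im ≤ T₀ + 3 * k + 3 := by
  have h_le := Nat.floor_le (show 0 ≤ (ε * ρ.im - T₀) / 3 by linarith)
  have h_lt := Nat.lt_floor_add_one ((ε * ρ.im - T₀) / 3)
  rw [windowIndex] at hk
  rw [hk] at h_le h_lt
  constructor <;> linarith

lemma sum_exp_window_le (hχ : χ.IsPrimitive) (hT : 105 ≤ T₀) (hθ : 0 ≤ θ) (hε : |ε| = 1)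
    (Z : Finset ℂ) (hZ : ∀ ρ ∈ Z, ρ ∈ highZeros χ T₀) (hZε : ∀ ρ ∈ Z, T₀ < ε * ρ.im)
    (h_refl : ∀ ρ ∈ Z, 1 - conj ρ ∈ Z) (k : ℕ) :
    ∑ ρ ∈ Z with windowIndex T₀ ε ρ = k, Real.exp (-θ * (ε * ρ.im - T₀))
      ≤ (1.706 + 1.37 / T₀ * k) * Real.log (q * T₀ / (2 * π)) * Real.exp (-3 * θ) ^ k := by
  set W := Z.filter fun ρ ↦ windowIndex T₀ ε ρ = k with hW
  have h_window (ρ : ℂ) (hρ : ρ ∈ W) : T₀ + 3 * k ≤ ε * ρ.im ∧ ε * ρ.im ≤ T₀ + 3 * k + 3 := by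
    obtain ⟨hρZ, hk⟩ := Finset.mem_filter.mp hρ
    exact mem_window_of_windowIndex_eq (hZε ρ hρZ) hk
  have h_card := card_zeros_window_le hχ hT hε k W
    (fun ρ hρ ↦ ⟨hZ ρ (Finset.mem_filter.mp hρ).1, by
      rw [abs_le]
      constructor <;> linarith [h_window ρ hρ]⟩)
    (fun ρ hρ ↦ by
      rw [hW, Finset.mem_filter] at hρ ⊢
      exact ⟨h_refl ρ hρ.1, by simpa [windowIndex] using hρ.2⟩)
  calc ∑ ρ ∈ W, Real.exp (-θ * (ε * ρ.im - T₀)) ≤ ∑ _ ∈ W, Real.exp (-3 * θ) ^ k := by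
        refine Finset.sum_le_sum fun ρ hρ ↦ ?_
        rw [← Real.exp_nat_mul]
        exact Real.exp_le_exp.mpr (by nlinarith [(h_window ρ hρ).1])
    _ = W.card * Real.exp (-3 * θ) ^ k := by rw [Finset.sum_const, nsmul_eq_mul]
    _ ≤ _ := by gcongr

/-- The factor multiplying `log (q T₀ / 2π)` when `exp (-θ (|Im ρ| - T₀))` is summed over the high
zeros on one side of the real axis, three units of height at a time. -/
noncomputable def zeroSumFactor (θ T₀ : ℝ) : ℝ :=
  1.706 / (1 - Real.exp (-3 * θ))
    + 1.37 / T₀ * (Real.exp (-3 * θ) / (1 - Real.exp (-3 * θ)) ^ 2)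

lemma sum_exp_highZeros_le (hχ : χ.IsPrimitive) (hT : 105 ≤ T₀) (hθ : 0 < θ) (hε : |ε| = 1)
    (Z : Finset ℂ) (hZ : ∀ ρ ∈ Z, ρ ∈ highZeros χ T₀) (hZε : ∀ ρ ∈ Z, T₀ < ε * ρ.im)
    (h_refl : ∀ ρ ∈ Z, 1 - conj ρ ∈ Z) :
    ∑ ρ ∈ Z, Real.exp (-θ * (ε * ρ.im - T₀))
      ≤ zeroSumFactor θ T₀ * Real.log (q * T₀ / (2 * π)) := by
  have hL : 0 ≤ Real.log (q * T₀ / (2 * π)) := by linarith [le_log_conductor q hT]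
  have hx1 : Real.exp (-3 * θ) < 1 := Real.exp_lt_one_iff.mpr (by linarith)
  rw [← Finset.sum_fiberwise_of_maps_to
    (fun ρ hρ ↦ Finset.mem_image_of_mem (windowIndex T₀ ε) hρ)]
  refine (Finset.sum_le_sum fun k _ ↦
    sum_exp_window_le hχ hT hθ.le hε Z hZ hZε h_refl k).trans ?_
  simp_rw [mul_right_comm _ (Real.log _), ← Finset.sum_mul]
  gcongr
  exact sum_add_mul_geometric_le (Real.exp_pos _).le hx1 (by norm_num) (by positivity) _

lemma four_pi_mul_sum_norm_Gdelta_side_le (hχ : χ.IsPrimitive) (hH : 5 ≤ H) (hT : 105 ≤ T₀)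
    (hθ0 : 0 < θ) (hθ : θ < π / 4) (hε : |ε| = 1) (hB : 0 ≤ B)
    (hδB : -2 * π * (ε * δ) * Real.sin θ ≤ B) (Z : Finset ℂ)
    (hZ : ∀ ρ ∈ Z, ρ ∈ highZeros χ T₀) (hZε : ∀ ρ ∈ Z, T₀ < ε * ρ.im)
    (h_refl : ∀ ρ ∈ Z, 1 - conj ρ ∈ Z) :
    4 * π * ∑ ρ ∈ Z, ‖Gdelta H δ ρ‖
      ≤ (2.576 + 13.609 * Real.exp (-5 * θ))
        * (Real.exp (-θ * (T₀ - H)) * gaussianMomentBound (Real.cos (2 * θ)) B)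
        * (zeroSumFactor θ T₀ * Real.log (q * T₀ / (2 * π))) := by
  set C := (2.576 + 13.609 * Real.exp (-5 * θ))
    * (Real.exp (-θ * (T₀ - H)) * gaussianMomentBound (Real.cos (2 * θ)) B)
  have hC : 0 ≤ C := by
    have := gaussianMomentBound_nonneg (B := B)
      (Real.cos_pos_of_mem_Ioo ⟨by linarith [Real.pi_pos], by linarith⟩ : 0 < Real.cos (2 * θ)) hB
    positivity
  have h_swap : ∑ ρ ∈ Z, ‖Gdelta H δ ρ‖ = ∑ ρ ∈ Z, ‖Gdelta H δ (1 - conj ρ)‖ :=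
    Finset.sum_nbij' (fun ρ ↦ 1 - conj ρ) (fun ρ ↦ 1 - conj ρ) h_refl h_refl
      (by simp) (by simp) (by simp)
  have h_pair (ρ : ℂ) (hρ : ρ ∈ Z) : 2 * π * (‖Gdelta H δ ρ‖ + ‖Gdelta H δ (1 - conj ρ)‖)
      ≤ C * Real.exp (-θ * (ε * ρ.im - T₀)) := by
    obtain ⟨-, h0, h1, -⟩ := hZ ρ hρ
    refine (two_pi_mul_norm_Gdelta_add_le_of_abs_eq_one hH δ h0.le h1.le hθ0.le hθ hε hB
      hδB).trans_eq ?_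
    rw [show -θ * (ε * ρ.im - H) = -θ * (T₀ - H) + -θ * (ε * ρ.im - T₀) by ring, Real.exp_add]
    ring
  calc 4 * π * ∑ ρ ∈ Z, ‖Gdelta H δ ρ‖
      = ∑ ρ ∈ Z, 2 * π * (‖Gdelta H δ ρ‖ + ‖Gdelta H δ (1 - conj ρ)‖) := by
        rw [← Finset.mul_sum, Finset.sum_add_distrib, ← h_swap]
        ring
    _ ≤ C * ∑ ρ ∈ Z, Real.exp (-θ * (ε * ρ.im - T₀)) := by
        rw [Finset.mul_sum]
        exact Finset.sum_le_sum h_pair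
    _ ≤ _ := by
        gcongr
        exact sum_exp_highZeros_le hχ hT hθ0 hε Z hZ hZε h_refl

/-- The coefficient of `log (q T₀ / 2π)` in the bound for `4π ∑ |G_δ(ρ)|` over the high zeros that
results from rotating the contour by the angle `θ`. The two Gaussian moments come from the two
half-planes: the factor `e(δ t)` grows along the rotated ray in one of them only. -/
noncomputable def highZerosCoeff (H T₀ δ θ : ℝ) : ℝ :=
  (2.576 + 13.609 * Real.exp (-5 * θ))
    * (Real.exp (-θ * (T₀ - H)) * (gaussianMomentBound (Real.cos (2 * θ)) (2 * π * |δ| * Real.sin θ)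
      + gaussianMomentBound (Real.cos (2 * θ)) 0))
    * zeroSumFactor θ T₀

lemma four_pi_mul_sum_norm_Gdelta_le_of_refl (hχ : χ.IsPrimitive) (hH : 5 ≤ H) (hT : 105 ≤ T₀)
    (hθ0 : 0 < θ) (hθ : θ < π / 4) (δ : ℝ) (Z : Finset ℂ) (hZ : ∀ ρ ∈ Z, ρ ∈ highZeros χ T₀)
    (h_refl : ∀ ρ ∈ Z, 1 - conj ρ ∈ Z) :
    4 * π * ∑ ρ ∈ Z, ‖Gdelta H δ ρ‖
      ≤ highZerosCoeff H T₀ δ θ * Real.log (q * T₀ / (2 * π)) := by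
  have h_side {ε B : ℝ} (hε : |ε| = 1) (hB : 0 ≤ B) (hδB : -2 * π * (ε * δ) * Real.sin θ ≤ B) :=
    four_pi_mul_sum_norm_Gdelta_side_le hχ hH hT hθ0 hθ hε hB hδB
      (Z.filter fun ρ ↦ T₀ < ε * ρ.im) (fun ρ hρ ↦ hZ ρ (Finset.mem_filter.mp hρ).1)
      (fun ρ hρ ↦ (Finset.mem_filter.mp hρ).2) (fun ρ hρ ↦ by
        rw [Finset.mem_filter] at hρ ⊢
        exact ⟨h_refl ρ hρ.1, by simpa using hρ.2⟩)
  have h_split : ∑ ρ ∈ Z, ‖Gdelta H δ ρ‖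
      = ∑ ρ ∈ Z with T₀ < 1 * ρ.im, ‖Gdelta H δ ρ‖
        + ∑ ρ ∈ Z with T₀ < -1 * ρ.im, ‖Gdelta H δ ρ‖ := by
    rw [← Finset.sum_filter_add_sum_filter_not Z (fun ρ ↦ T₀ < 1 * ρ.im)]
    congr 2
    refine Finset.filter_congr fun ρ hρ ↦ ?_
    rcases lt_abs.mp (hZ ρ hρ).2.2.2 with h | h <;> constructor <;> intro <;> linarith
  have h_sin : 0 ≤ Real.sin θ :=
    Real.sin_nonneg_of_nonneg_of_le_pi hθ0.le (by linarith [Real.pi_pos])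
  have hB : 0 ≤ 2 * π * |δ| * Real.sin θ := by positivity
  rw [h_split, mul_add, highZerosCoeff]
  rcases abs_cases δ with ⟨h_abs, hδ⟩ | ⟨h_abs, hδ⟩
  · have h_pos : 0 ≤ π * δ * Real.sin θ := by positivity
    linarith [h_side (ε := 1) (B := 0) (by simp) le_rfl (by linarith),
      h_side (ε := -1) (by simp) hB (by rw [h_abs]; linarith)]
  · have h_pos : 0 ≤ π * -δ * Real.sin θ := by
      have := neg_pos.mpr hδ
      positivity
    linarith [h_side (ε := 1) (by simp) hB (by rw [h_abs]; linarith),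
      h_side (ε := -1) (B := 0) (by simp) le_rfl (by linarith)]

lemma four_pi_mul_sum_norm_Gdelta_le (hχ : χ.IsPrimitive) (hH : 5 ≤ H) (hT : 105 ≤ T₀)
    (hθ0 : 0 < θ) (hθ : θ < π / 4) (δ : ℝ) (Z : Finset (highZeros χ T₀)) :
    4 * π * ∑ ρ ∈ Z, ‖Gdelta H δ ρ‖
      ≤ highZerosCoeff H T₀ δ θ * Real.log (q * T₀ / (2 * π)) := by
  classical
  set Z₀ : Finset ℂ := Z.image Subtype.val
  set Z₁ : Finset ℂ := Z₀ ∪ Z₀.image fun ρ ↦ 1 - conj ρ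
  have hZ₀ (ρ : ℂ) (hρ : ρ ∈ Z₀) : ρ ∈ highZeros χ T₀ := by
    obtain ⟨σ, -, rfl⟩ := Finset.mem_image.mp hρ
    exact σ.2
  have hZ₁ (ρ : ℂ) (hρ : ρ ∈ Z₁) : ρ ∈ highZeros χ T₀ := by
    rcases Finset.mem_union.mp hρ with h | h
    · exact hZ₀ ρ h
    · obtain ⟨σ, hσ, rfl⟩ := Finset.mem_image.mp h
      exact one_sub_conj_mem_highZeros hχ (hZ₀ σ hσ)
  have h_refl (ρ : ℂ) (hρ : ρ ∈ Z₁) : 1 - conj ρ ∈ Z₁ := by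
    rcases Finset.mem_union.mp hρ with h | h
    · exact Finset.mem_union_right _ (Finset.mem_image_of_mem _ h)
    · obtain ⟨σ, hσ, rfl⟩ := Finset.mem_image.mp h
      exact Finset.mem_union_left _ (by simpa using hσ)
  have h_le : ∑ ρ ∈ Z, ‖Gdelta H δ ρ‖ ≤ ∑ ρ ∈ Z₁, ‖Gdelta H δ ρ‖ := by
    rw [← Finset.sum_image (s := Z) (f := fun ρ : ℂ ↦ ‖Gdelta H δ ρ‖) Subtype.val_injective.injOn]
    exact Finset.sum_le_sum_of_subset_of_nonneg Finset.subset_union_left fun _ _ _ ↦ norm_nonneg _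
  calc 4 * π * ∑ ρ ∈ Z, ‖Gdelta H δ ρ‖ ≤ 4 * π * ∑ ρ ∈ Z₁, ‖Gdelta H δ ρ‖ := by gcongr
    _ ≤ _ := four_pi_mul_sum_norm_Gdelta_le_of_refl hχ hH hT hθ0 hθ δ Z₁ hZ₁ h_refl

end HighZeroSums

section TaylorBounds

variable {θ b m M x : ℝ}

lemma nonneg_of_hasDerivAt_nonneg {f f' : ℝ → ℝ} (hf : ∀ x, HasDerivAt f (f' x) x) (h0 : f 0 = 0)
    (h' : ∀ x, 0 ≤ x → 0 ≤ f' x) (hx : 0 ≤ x) : 0 ≤ f x := by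
  have h_mono : MonotoneOn f (Ici 0) :=
    monotoneOn_of_hasDerivWithinAt_nonneg (convex_Ici 0)
      (fun x _ ↦ (hf x).continuousAt.continuousWithinAt) (fun x _ ↦ (hf x).hasDerivWithinAt)
      fun x hx ↦ h' x (interior_subset hx)
  simpa only [h0] using h_mono self_mem_Ici hx hx

lemma cos_le_quartic (hx : 0 ≤ x) : Real.cos x ≤ 1 - x ^ 2 / 2 + x ^ 4 / 24 := by
  refine sub_nonneg.mp (nonneg_of_hasDerivAt_nonneg
    (f := fun x ↦ 1 - x ^ 2 / 2 + x ^ 4 / 24 - Real.cos x)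
    (f' := fun x ↦ Real.sin x - (x - x ^ 3 / 6)) (fun x ↦ ?_) (by simp)
    (fun x hx ↦ sub_nonneg.mpr (Real.sin_ge_sub_cube hx)) hx)
  refine (((((hasDerivAt_pow 2 x).div_const 2).const_sub 1).add
    ((hasDerivAt_pow 4 x).div_const 24)).sub (Real.hasDerivAt_cos x)).congr_deriv ?_
  norm_num
  ring

lemma sin_le_quintic (hx : 0 ≤ x) : Real.sin x ≤ x - x ^ 3 / 6 + x ^ 5 / 120 := by
  refine sub_nonneg.mp (nonneg_of_hasDerivAt_nonneg
    (f := fun x ↦ x - x ^ 3 / 6 + x ^ 5 / 120 - Real.sin x)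
    (f' := fun x ↦ 1 - x ^ 2 / 2 + x ^ 4 / 24 - Real.cos x) (fun x ↦ ?_) (by simp)
    (fun x hx ↦ sub_nonneg.mpr (cos_le_quartic hx)) hx)
  refine ((((hasDerivAt_id x).sub ((hasDerivAt_pow 3 x).div_const 6)).add
    ((hasDerivAt_pow 5 x).div_const 120)).sub (Real.hasDerivAt_sin x)).congr_deriv ?_
  norm_num
  ring

lemma sextic_le_cos (hx : 0 ≤ x) : 1 - x ^ 2 / 2 + x ^ 4 / 24 - x ^ 6 / 720 ≤ Real.cos x := by
  refine sub_nonneg.mp (nonneg_of_hasDerivAt_nonneg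
    (f := fun x ↦ Real.cos x - (1 - x ^ 2 / 2 + x ^ 4 / 24 - x ^ 6 / 720))
    (f' := fun x ↦ x - x ^ 3 / 6 + x ^ 5 / 120 - Real.sin x) (fun x ↦ ?_) (by simp)
    (fun x hx ↦ sub_nonneg.mpr (sin_le_quintic hx)) hx)
  refine ((Real.hasDerivAt_cos x).sub (((((hasDerivAt_pow 2 x).div_const 2).const_sub 1).add
    ((hasDerivAt_pow 4 x).div_const 24)).sub ((hasDerivAt_pow 6 x).div_const 720))).congr_deriv ?_
  norm_num
  ring

lemma le_cos_of_le_sextic (h0 : 0 ≤ x) (hb : x ≤ b) (hbπ : b ≤ π)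
    (hm : m ≤ 1 - b ^ 2 / 2 + b ^ 4 / 24 - b ^ 6 / 720) : m ≤ Real.cos x :=
  calc m ≤ _ := hm
    _ ≤ Real.cos b := sextic_le_cos (h0.trans hb)
    _ ≤ Real.cos x := Real.cos_le_cos_of_nonneg_of_le_pi h0 hbπ hb

lemma sin_sq_le_mul_cos_two_mul (h0 : 0 ≤ θ) (hθ : θ ≤ 0.28245) :
    Real.sin θ ^ 2 ≤ 1.1535 * θ ^ 2 * Real.cos (2 * θ) := by
  have h_sin : Real.sin θ ^ 2 = (1 - Real.cos (2 * θ)) / 2 := by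
    rw [Real.cos_two_mul, Real.sin_sq]
    ring
  have h_poly : 1 ≤ (1 - (2 * θ) ^ 2 / 2 + (2 * θ) ^ 4 / 24 - (2 * θ) ^ 6 / 720)
      * (1 + 2 * 1.1535 * θ ^ 2) := by
    obtain ⟨t, ht⟩ : ∃ t, t = θ ^ 2 := ⟨_, rfl⟩
    have ht0 : 0 ≤ t := ht ▸ sq_nonneg θ
    have ht1 : t ≤ 0.07978 := by nlinarith
    have h_factor : (1 - (2 * θ) ^ 2 / 2 + (2 * θ) ^ 4 / 24 - (2 * θ) ^ 6 / 720)
        * (1 + 2 * 1.1535 * θ ^ 2) - 1 = t * (0.307 - (2 * 2.307 - 2 / 3) * t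
          + (2.307 * 2 / 3 - 4 / 45) * t ^ 2 - 2.307 * 4 / 45 * t ^ 3) := by
      rw [ht]
      ring
    have h_cubic : 0 ≤ 0.307 - (2 * 2.307 - 2 / 3) * t
        + (2.307 * 2 / 3 - 4 / 45) * t ^ 2 - 2.307 * 4 / 45 * t ^ 3 := by
      nlinarith [mul_nonneg ht0 (sub_nonneg.mpr ht1),
        mul_nonneg (mul_nonneg ht0 ht0) (sub_nonneg.mpr ht1), sq_nonneg (t - 0.07978)]
    linarith [mul_nonneg ht0 h_cubic]
  have h_cos : _ ≤ Real.cos (2 * θ) * (1 + 2 * 1.1535 * θ ^ 2) :=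
    mul_le_mul_of_nonneg_right (sextic_le_cos (x := 2 * θ) (by positivity)) (by positivity)
  linarith

lemma exp_neg_le_of_le_mul_quintic (h0 : 0 ≤ x) (hm : 0 ≤ m)
    (h : 1 ≤ m * (1 + x + x ^ 2 / 2 + x ^ 3 / 6 + x ^ 4 / 24 + x ^ 5 / 120)) :
    Real.exp (-x) ≤ m := by
  rw [Real.exp_neg, inv_le_iff_one_le_mul₀ (Real.exp_pos x)]
  exact h.trans (mul_le_mul_of_nonneg_left (quintic_le_exp h0) hm)

lemma le_mul_one_sub_exp_neg (h0 : 0 < θ) (hb : θ ≤ b) (hM : 0 ≤ M)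
    (h : b ≤ M * (1 - Real.exp (-3 * b))) : θ ≤ M * (1 - Real.exp (-3 * θ)) := by
  have hb0 : 0 < b := h0.trans_le hb
  have h_chord : Real.exp (-3 * θ) ≤ 1 - θ / b + θ / b * Real.exp (-3 * b) := by
    have h_convex := convexOn_exp.2 (mem_univ (0 : ℝ)) (mem_univ (-3 * b))
      (sub_nonneg.mpr ((div_le_one hb0).mpr hb)) (show 0 ≤ θ / b by positivity) (by ring)
    have h_arg : θ / b * (-3 * b) = -3 * θ := by field_simp
    simpa only [smul_eq_mul, mul_zero, zero_add, Real.exp_zero, mul_one, h_arg] using h_convex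
  calc θ = θ / b * b := by field_simp
    _ ≤ θ / b * (M * (1 - Real.exp (-3 * b))) := by gcongr
    _ = M * (θ / b * (1 - Real.exp (-3 * b))) := by ring
    _ ≤ M * (1 - Real.exp (-3 * θ)) := mul_le_mul_of_nonneg_left (by linarith) hM

lemma le_mul_one_sub_exp_neg_of_le (h0 : 0 < θ) (hb : θ ≤ b) (hM : 0 ≤ M) (hm : 0 ≤ m)
    (h_quintic : 1 ≤ m * (1 + 3 * b + (3 * b) ^ 2 / 2 + (3 * b) ^ 3 / 6 + (3 * b) ^ 4 / 24
      + (3 * b) ^ 5 / 120)) (h : b ≤ M * (1 - m)) :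
    θ ≤ M * (1 - Real.exp (-3 * θ)) := by
  refine le_mul_one_sub_exp_neg h0 hb hM (h.trans (mul_le_mul_of_nonneg_left ?_ hM))
  have h_exp := exp_neg_le_of_le_mul_quintic (x := 3 * b) (by linarith) hm h_quintic
  rw [neg_mul]
  linarith

end TaylorBounds

section CoefficientBounds

variable {H T₀ δ θ y c c₀ B B₀ R a E₁ E₂ K M N γ φ β S : ℝ}

lemma zeroSumFactor_nonneg (hθ : 0 < θ) (hT : 0 ≤ T₀) : 0 ≤ zeroSumFactor θ T₀ := by
  have h_exp : 0 ≤ 1 - Real.exp (-3 * θ) :=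
    sub_nonneg.mpr (Real.exp_le_one_iff.mpr (by linarith))
  unfold zeroSumFactor
  positivity

lemma zeroSumFactor_le (hθ : 0 < θ) (hM : θ ≤ M * (1 - Real.exp (-3 * θ))) (hβ : 1.37 / T₀ ≤ β)
    (hβ0 : 0 ≤ β) : zeroSumFactor θ T₀ ≤ 1.706 * (M / θ) + β * (M / θ) ^ 2 := by
  have h_exp : Real.exp (-3 * θ) < 1 := Real.exp_lt_one_iff.mpr (by linarith)
  have h_den : 0 < 1 - Real.exp (-3 * θ) := sub_pos.mpr h_exp
  have h_inv : (1 - Real.exp (-3 * θ))⁻¹ ≤ M / θ := by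
    rwa [inv_eq_one_div, div_le_div_iff₀ h_den hθ, one_mul]
  have : 0 ≤ (1 - Real.exp (-3 * θ))⁻¹ := by positivity
  calc zeroSumFactor θ T₀
      = 1.706 * (1 - Real.exp (-3 * θ))⁻¹
        + 1.37 / T₀ * (Real.exp (-3 * θ) * (1 - Real.exp (-3 * θ))⁻¹ ^ 2) := by
        rw [zeroSumFactor, inv_pow]
        ring
    _ ≤ 1.706 * (M / θ) + β * (1 * (M / θ) ^ 2) := by gcongr
    _ = 1.706 * (M / θ) + β * (M / θ) ^ 2 := by rw [one_mul]

lemma highZerosCoeff_le (hθ0 : 0 < θ) (hθ : θ < π / 4) (hT : 0 ≤ T₀)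
    (hφ : 2.576 + 13.609 * Real.exp (-5 * θ) ≤ φ)
    (hN : Real.exp (-θ * (T₀ - H)) * (gaussianMomentBound (Real.cos (2 * θ))
      (2 * π * |δ| * Real.sin θ) + gaussianMomentBound (Real.cos (2 * θ)) 0) ≤ N)
    (hS : zeroSumFactor θ T₀ ≤ S) : highZerosCoeff H T₀ δ θ ≤ φ * N * S := by
  have h_cos : 0 < Real.cos (2 * θ) := Real.cos_pos_of_mem_Ioo ⟨by linarith, by linarith⟩
  have h_sin : 0 ≤ Real.sin θ := Real.sin_nonneg_of_nonneg_of_le_pi hθ0.le (by linarith)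
  have h_moment := add_nonneg
    (gaussianMomentBound_nonneg (B := 2 * π * |δ| * Real.sin θ) h_cos (by positivity))
    (gaussianMomentBound_nonneg h_cos le_rfl)
  have h_factor := zeroSumFactor_nonneg hθ0 hT
  have hφ0 : 0 ≤ φ := le_trans (by positivity) hφ
  have hN0 : 0 ≤ N := le_trans (by positivity) hN
  unfold highZerosCoeff
  gcongr

lemma exp_mul_gaussianMomentBound_add_le (hc₀ : 0 < c₀) (hc : c₀ ≤ c) (hB : 0 ≤ B) (hB₀ : B ≤ B₀)
    (hR0 : 0 ≤ R) (hR : 6.28319 ≤ R ^ 2 * c₀) (hE₁ : Real.exp a ≤ E₁)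
    (hE₂ : Real.exp a * Real.exp (B ^ 2 / (2 * c)) ≤ E₂) :
    Real.exp a * (gaussianMomentBound c B + gaussianMomentBound c 0)
      ≤ E₁ * (2 / c₀ + R) + (1 + B₀ / c₀) * R * E₂ := by
  have hc0 : 0 < c := hc₀.trans_le hc
  have h_sqrt : √(2 * π / c) ≤ R := by
    rw [Real.sqrt_le_left hR0, div_le_iff₀ hc0]
    calc 2 * π ≤ R ^ 2 * c₀ := by linarith [Real.pi_lt_d6]
      _ ≤ R ^ 2 * c := by gcongr
  have h_expand : Real.exp a * (gaussianMomentBound c B + gaussianMomentBound c 0)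
      = Real.exp a * (2 / c + √(2 * π / c))
        + (1 + B / c) * √(2 * π / c) * (Real.exp a * Real.exp (B ^ 2 / (2 * c))) := by
    simp only [gaussianMomentBound, ne_eq, OfNat.ofNat_ne_zero, not_false_eq_true, zero_pow,
      zero_div, Real.exp_zero]
    ring
  have hB₀0 : 0 ≤ B₀ := hB.trans hB₀
  have hE₁0 : 0 ≤ E₁ := (Real.exp_pos a).le.trans hE₁
  rw [h_expand]
  gcongr

lemma sq_two_pi_mul_sin_le {X : ℝ} (hδ : 1.5 * (π * |δ|) ^ 2 ≤ X) (θ : ℝ) :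
    (2 * π * |δ| * Real.sin θ) ^ 2 ≤ 4 / 3 * (1 - Real.cos (2 * θ)) * X :=
  calc (2 * π * |δ| * Real.sin θ) ^ 2
      = 4 / 3 * (1 - Real.cos (2 * θ)) * (1.5 * (π * |δ|) ^ 2) := by
        rw [Real.cos_two_mul, Real.cos_sq']
        ring
    _ ≤ 4 / 3 * (1 - Real.cos (2 * θ)) * X :=
        mul_le_mul_of_nonneg_left hδ (by linarith [Real.cos_le_one (2 * θ)])

lemma moment_term_le_of_sq_le (hX : 100 ≤ T₀ - H) (hδ : 1.5 * (π * |δ|) ^ 2 ≤ T₀ - H) :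
    Real.exp (-0.28245 * (T₀ - H)) * (gaussianMomentBound (Real.cos (2 * 0.28245))
        (2 * π * |δ| * Real.sin 0.28245) + gaussianMomentBound (Real.cos (2 * 0.28245)) 0)
      ≤ 2.4 * (√(T₀ - H) * Real.exp (-0.1598 * (T₀ - H))) := by
  have h_cos : 0.84464 ≤ Real.cos (2 * 0.28245) :=
    le_cos_of_le_sextic (by norm_num) le_rfl (by linarith [Real.pi_gt_three]) (by norm_num)
  have h_sin : 0 ≤ Real.sin 0.28245 :=
    Real.sin_nonneg_of_nonneg_of_le_pi (by norm_num) (by linarith [Real.pi_gt_three])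
  have hB_sq := sq_two_pi_mul_sin_le hδ 0.28245
  have hB0 : 0 ≤ 2 * π * |δ| * Real.sin 0.28245 := by positivity
  generalize Real.cos (2 * 0.28245) = c at *
  generalize 2 * π * |δ| * Real.sin 0.28245 = B at *
  generalize T₀ - H = X at *
  have h_sqrt : 10 ≤ √X := Real.le_sqrt_of_sq_le (by linarith)
  have hB : B ≤ 0.46 * √X := by
    refine (sq_le_sq₀ hB0 (by positivity)).mp ?_
    rw [mul_pow, Real.sq_sqrt (by linarith)]
    nlinarith
  have h_exponent : B ^ 2 / (2 * c) ≤ 0.12265 * X := by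
    rw [div_le_iff₀ (by linarith)]
    nlinarith
  have h_exp : Real.exp (-0.28245 * X) * Real.exp (B ^ 2 / (2 * c)) ≤ Real.exp (-0.1598 * X) := by
    rw [← Real.exp_add]
    exact Real.exp_le_exp.mpr (by linarith)
  calc Real.exp (-0.28245 * X) * (gaussianMomentBound c B + gaussianMomentBound c 0)
      ≤ Real.exp (-0.1598 * X) * (2 / (5 / 6) + 2.746)
        + (1 + 0.46 * √X / (5 / 6)) * 2.746 * Real.exp (-0.1598 * X) :=
        exp_mul_gaussianMomentBound_add_le (by norm_num) (by linarith) hB0 hB (by norm_num)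
          (by norm_num) (Real.exp_le_exp.mpr (by linarith)) h_exp
    _ = (7.892 + 1.515792 * √X) * Real.exp (-0.1598 * X) := by ring
    _ ≤ 2.4 * √X * Real.exp (-0.1598 * X) := by
        gcongr
        linarith
    _ = _ := mul_assoc _ _ _

lemma highZerosCoeff_le_of_sq_le (hT : 105 ≤ T₀) (hX : 100 ≤ T₀ - H)
    (hδ : 1.5 * (π * |δ|) ^ 2 ≤ T₀ - H) :
    highZerosCoeff H T₀ δ 0.28245 ≤ 100 * (√(T₀ - H) * Real.exp (-0.1598 * (T₀ - H))) := by
  have h_M : 0.28245 ≤ 0.4945 * (1 - Real.exp (-3 * 0.28245)) :=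
    le_mul_one_sub_exp_neg_of_le (m := 0.4287) (by norm_num) le_rfl (by norm_num) (by norm_num)
      (by norm_num) (by norm_num)
  have h_β : 1.37 / T₀ ≤ 0.0131 := by
    rw [div_le_iff₀ (by linarith)]
    linarith
  have h_factor : zeroSumFactor 0.28245 T₀ ≤ 3.1 :=
    (zeroSumFactor_le (by norm_num) h_M h_β (by norm_num)).trans (by norm_num)
  have h_φ : 2.576 + 13.609 * Real.exp (-5 * 0.28245) ≤ 6 := by
    have := exp_neg_le_of_le_mul_quintic (x := 5 * 0.28245) (m := 0.25) (by norm_num)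
      (by norm_num) (by norm_num)
    rw [neg_mul]
    linarith
  have h_nonneg : 0 ≤ √(T₀ - H) * Real.exp (-0.1598 * (T₀ - H)) := by positivity
  linarith [highZerosCoeff_le (by norm_num) (by linarith [Real.pi_gt_three]) (by linarith) h_φ
    (moment_term_le_of_sq_le hX hδ) h_factor]

lemma moment_term_le_of_sin_sq_le (hθ : 0 < θ) (h_sin : 0 ≤ Real.sin θ) (hy : 12.566 ≤ y)
    (hc₀ : 0 < c₀) (hc : c₀ ≤ Real.cos (2 * θ))
    (hK : Real.sin θ ^ 2 ≤ K * θ ^ 2 * Real.cos (2 * θ))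
    (hγ : Real.exp (-((0.0818 - 2 * 0.1883 ^ 2 * K) * y ^ 2)) ≤ γ)
    (hR0 : 0 ≤ R) (hR : 6.28319 ≤ R ^ 2 * c₀) :
    Real.exp (-(0.1883 * y ^ 2)) * (gaussianMomentBound (Real.cos (2 * θ))
        (2 * 0.1883 * y * (Real.sin θ / θ)) + gaussianMomentBound (Real.cos (2 * θ)) 0)
      ≤ (0.001 * (2 / c₀ + R) / 12.566 + (1 / 12.566 + 0.3766 / c₀) * R * γ)
        * (y * Real.exp (-(0.1065 * y ^ 2))) := by
  generalize Real.cos (2 * θ) = c at *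
  set E := Real.exp (-(0.1065 * y ^ 2))
  set B := 2 * 0.1883 * y * (Real.sin θ / θ) with hB_def
  have hc0 : 0 < c := hc₀.trans_le hc
  have : 0 < y := by linarith
  have hy_sq : 157.9 ≤ y ^ 2 := by nlinarith
  have hγ0 : 0 ≤ γ := (Real.exp_pos _).le.trans hγ
  have hB : B ≤ 0.3766 * y := by
    have h_le_one : Real.sin θ / θ ≤ 1 := (div_le_one hθ).mpr (Real.sin_le hθ.le)
    linarith [mul_le_mul_of_nonneg_left h_le_one (show 0 ≤ 2 * 0.1883 * y by positivity)]
  have h_exponent : B ^ 2 / (2 * c) ≤ 2 * 0.1883 ^ 2 * K * y ^ 2 := by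
    have h_sq : (Real.sin θ / θ) ^ 2 ≤ K * c := by
      rw [div_pow, div_le_iff₀ (by positivity)]
      linarith
    rw [div_le_iff₀ (by positivity), hB_def, mul_pow]
    linarith [mul_le_mul_of_nonneg_left h_sq (sq_nonneg (2 * 0.1883 * y))]
  have h_exp : Real.exp (-(0.1883 * y ^ 2)) ≤ 0.001 * E := by
    have h_small := exp_neg_le_of_le_mul_quintic (x := 12) (m := 0.001) (by norm_num) (by norm_num)
      (by norm_num)
    refine le_trans ?_ (mul_le_mul_of_nonneg_right h_small (Real.exp_pos _).le)
    rw [← Real.exp_add]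
    exact Real.exp_le_exp.mpr (by linarith)
  have h_exp_mul : Real.exp (-(0.1883 * y ^ 2)) * Real.exp (B ^ 2 / (2 * c)) ≤ γ * E := by
    refine le_trans ?_ (mul_le_mul_of_nonneg_right hγ (Real.exp_pos _).le)
    rw [← Real.exp_add, ← Real.exp_add]
    exact Real.exp_le_exp.mpr (by linarith)
  have h_one_le : 1 ≤ y / 12.566 := (one_le_div (by norm_num)).mpr hy
  calc _ ≤ 0.001 * E * (2 / c₀ + R) + (1 + 0.3766 * y / c₀) * R * (γ * E) :=
        exp_mul_gaussianMomentBound_add_le hc₀ hc (by positivity) hB hR0 hR h_exp h_exp_mul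
    _ = 0.001 * E * (2 / c₀ + R) * 1 + (1 + 0.3766 * y / c₀) * R * (γ * E) := by rw [mul_one]
    _ ≤ 0.001 * E * (2 / c₀ + R) * (y / 12.566)
        + (y / 12.566 + 0.3766 * y / c₀) * R * (γ * E) := by gcongr
    _ = _ := by ring

lemma highZerosCoeff_le_of_sin_sq_le (hH : 0 ≤ H) (hθ0 : 0 < θ) (hθ : θ < π / 4)
    (hy : 12.566 ≤ y) (hX : θ * (T₀ - H) = 0.1883 * y ^ 2) (hδ : π * |δ| = 0.1883 * y / θ)
    (hc₀ : 0 < c₀) (hc : c₀ ≤ Real.cos (2 * θ)) (hM : θ ≤ M * (1 - Real.exp (-3 * θ)))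
    (hφ : 2.576 + 13.609 * Real.exp (-5 * θ) ≤ φ)
    (hK : Real.sin θ ^ 2 ≤ K * θ ^ 2 * Real.cos (2 * θ))
    (hγ : Real.exp (-((0.0818 - 2 * 0.1883 ^ 2 * K) * y ^ 2)) ≤ γ)
    (hR0 : 0 ≤ R) (hR : 6.28319 ≤ R ^ 2 * c₀)
    (h_num : φ * (0.001 * (2 / c₀ + R) / 12.566 + (1 / 12.566 + 0.3766 / c₀) * R * γ)
      * (1.706 * M + 0.0462 * M ^ 2) ≤ 8.5) :
    highZerosCoeff H T₀ δ θ ≤ 8.5 * (y / θ * Real.exp (-(0.1065 * y ^ 2))) := by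
  have : 0 < y := by linarith
  have h_sin : 0 ≤ Real.sin θ := Real.sin_nonneg_of_nonneg_of_le_pi hθ0.le (by linarith)
  have hT : 0.1883 * y ^ 2 ≤ T₀ * θ := by nlinarith
  have hT0 : 0 < T₀ := pos_of_mul_pos_left (lt_of_lt_of_le (by positivity) hT) hθ0.le
  have h_β : 1.37 / T₀ ≤ 0.0462 * θ := by
    rw [div_le_iff₀ hT0]
    nlinarith
  have h_exponent : -θ * (T₀ - H) = -(0.1883 * y ^ 2) := by linarith
  have h_slope : 2 * π * |δ| * Real.sin θ = 2 * 0.1883 * y * (Real.sin θ / θ) := by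
    rw [mul_assoc 2, hδ]
    ring
  have h_moment := moment_term_le_of_sin_sq_le hθ0 h_sin hy hc₀ hc hK hγ hR0 hR
  rw [← h_exponent, ← h_slope] at h_moment
  calc highZerosCoeff H T₀ δ θ ≤ _ := highZerosCoeff_le hθ0 hθ hT0.le hφ h_moment
        (zeroSumFactor_le hθ0 hM h_β (by positivity))
    _ = φ * (0.001 * (2 / c₀ + R) / 12.566 + (1 / 12.566 + 0.3766 / c₀) * R * γ)
          * (1.706 * M + 0.0462 * M ^ 2) * (y / θ * Real.exp (-(0.1065 * y ^ 2))) := by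
        field_simp
    _ ≤ _ := by gcongr

lemma highZerosCoeff_le_of_le_one_fifth (hH : 0 ≤ H) (hθ0 : 0 < θ) (hθ : θ ≤ 0.2)
    (hy : 12.566 ≤ y) (hX : θ * (T₀ - H) = 0.1883 * y ^ 2) (hδ : π * |δ| = 0.1883 * y / θ) :
    highZerosCoeff H T₀ δ θ ≤ 8.5 * (y / θ * Real.exp (-(0.1065 * y ^ 2))) := by
  have h_pi := Real.pi_gt_three
  have h_cos : 0.921 ≤ Real.cos (2 * θ) :=
    le_cos_of_le_sextic (b := 2 * 0.2) (by linarith) (by linarith) (by linarith) (by norm_num)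
  have h_one_sub_exp : θ ≤ 0.4435 * (1 - Real.exp (-3 * θ)) :=
    le_mul_one_sub_exp_neg_of_le (m := 0.54885) hθ0 hθ (by norm_num) (by norm_num)
      (by norm_num) (by norm_num)
  have h_φ : 2.576 + 13.609 * Real.exp (-5 * θ) ≤ 16.185 := by
    have h_le_one : Real.exp (-5 * θ) ≤ 1 := Real.exp_le_one_iff.mpr (by linarith)
    linarith
  have h_sin_sq : Real.sin θ ^ 2 ≤ 1.0858 * θ ^ 2 * Real.cos (2 * θ) := by
    have h_le : Real.sin θ ^ 2 ≤ θ ^ 2 := Real.sin_sq_le_sq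
    nlinarith [mul_le_mul_of_nonneg_left h_cos (sq_nonneg θ)]
  have h_γ : Real.exp (-((0.0818 - 2 * 0.1883 ^ 2 * 1.0858) * y ^ 2)) ≤ 0.5 :=
    (Real.exp_le_exp.mpr (by nlinarith)).trans (exp_neg_le_of_le_mul_quintic (x := 0.75)
      (by norm_num) (by norm_num) (by norm_num))
  exact highZerosCoeff_le_of_sin_sq_le (R := 2.612) hH hθ0 (by linarith) hy hX hδ (by norm_num)
    h_cos h_one_sub_exp h_φ h_sin_sq h_γ (by norm_num) (by norm_num) (by norm_num)

lemma highZerosCoeff_le_of_mul_eq (hH : 0 ≤ H) (hθ0 : 0 < θ) (hθ : θ ≤ 0.28245)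
    (hy : 12.566 ≤ y) (hX : θ * (T₀ - H) = 0.1883 * y ^ 2) (hδ : π * |δ| = 0.1883 * y / θ) :
    highZerosCoeff H T₀ δ θ ≤ 8.5 * (y / θ * Real.exp (-(0.1065 * y ^ 2))) := by
  have h_pi := Real.pi_gt_three
  have hθπ : θ < π / 4 := by linarith
  have h_sin_sq := sin_sq_le_mul_cos_two_mul hθ0.le hθ
  have h_γ : Real.exp (-((0.0818 - 2 * 0.1883 ^ 2 * 1.1535) * y ^ 2)) ≤ 1 :=
    Real.exp_le_one_iff.mpr (by nlinarith)
  rcases le_total θ 0.2 with h | h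
  · exact highZerosCoeff_le_of_le_one_fifth hH hθ0 h hy hX hδ
  rcases le_total θ 0.24 with h' | h'
  · refine highZerosCoeff_le_of_sin_sq_le (c₀ := 0.8869) (M := 0.4678) (φ := 7.585) (R := 2.662)
      hH hθ0 hθπ hy hX hδ (by norm_num) (le_cos_of_le_sextic (b := 2 * 0.24) (by linarith)
        (by linarith) (by linarith) (by norm_num))
      (le_mul_one_sub_exp_neg_of_le (m := 0.4869) hθ0 h' (by norm_num) (by norm_num)
        (by norm_num) (by norm_num)) ?_ h_sin_sq h_γ (by norm_num) (by norm_num) (by norm_num)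
    have : Real.exp (-5 * θ) ≤ Real.exp (-1) := Real.exp_le_exp.mpr (by linarith)
    linarith [Real.exp_neg_one_lt_d9]
  · refine highZerosCoeff_le_of_sin_sq_le (c₀ := 0.8446) (M := 0.4945) (φ := 6.683) (R := 2.728)
      hH hθ0 hθπ hy hX hδ (by norm_num) (le_cos_of_le_sextic (b := 2 * 0.28245) (by linarith)
        (by linarith) (by linarith) (by norm_num))
      (le_mul_one_sub_exp_neg_of_le (m := 0.4287) hθ0 hθ (by norm_num) (by norm_num)
        (by norm_num) (by norm_num)) ?_ h_sin_sq h_γ (by norm_num) (by norm_num) (by norm_num)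
    have h_mono : Real.exp (-5 * θ) ≤ Real.exp (-1.2) := Real.exp_le_exp.mpr (by linarith)
    linarith [exp_neg_le_of_le_mul_quintic (x := 1.2) (m := 0.3017) (by norm_num) (by norm_num)
      (by norm_num)]

lemma exists_highZerosCoeff_le_of_lt_sq (hH : 0 ≤ H) (hX : 0 < T₀ - H)
    (hXδ : 4 * π ^ 2 * |δ| ≤ T₀ - H) (hδ : T₀ - H < 1.5 * (π * |δ|) ^ 2) :
    ∃ θ, 0 < θ ∧ θ < π / 4 ∧ highZerosCoeff H T₀ δ θ
      ≤ 4 * π * (11.287 * |δ| * Real.exp (-0.1065 * ((T₀ - H) / (π * δ)) ^ 2)) := by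
  have hδ0 : 0 < π * |δ| := by
    refine lt_of_le_of_ne (by positivity) fun h ↦ ?_
    rw [← h] at hδ
    linarith
  set y := (T₀ - H) / (π * |δ|) with hy_def
  set θ := 0.1883 * y / (π * |δ|) with hθ_def
  have hy0 : 0 < y := by positivity
  have hθ0 : 0 < θ := by positivity
  have hθ : θ ≤ 0.28245 := by
    rw [hθ_def, hy_def, div_le_iff₀ hδ0, mul_div_assoc', div_le_iff₀ hδ0]
    linarith
  have hy : 12.566 ≤ y := by
    rw [hy_def, le_div_iff₀ hδ0]
    nlinarith [Real.pi_gt_d4]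
  have h_theta_mul : θ * (T₀ - H) = 0.1883 * y ^ 2 := by
    rw [hθ_def, hy_def]
    ring
  have h_delta : π * |δ| = 0.1883 * y / θ := by
    rw [hθ_def]
    field_simp
  have h_exponent : -0.1065 * ((T₀ - H) / (π * δ)) ^ 2 = -(0.1065 * y ^ 2) := by
    rw [hy_def, div_pow, div_pow, mul_pow, mul_pow, sq_abs, neg_mul]
  refine ⟨θ, hθ0, by linarith [Real.pi_gt_three], ?_⟩
  rw [h_exponent]
  have h_nonneg : 0 ≤ y / θ * Real.exp (-(0.1065 * y ^ 2)) := by positivity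
  calc highZerosCoeff H T₀ δ θ ≤ 8.5 * (y / θ * Real.exp (-(0.1065 * y ^ 2))) :=
        highZerosCoeff_le_of_mul_eq hH hθ0 hθ hy h_theta_mul h_delta
    _ ≤ 4 * 11.287 * (0.1883 * (y / θ * Real.exp (-(0.1065 * y ^ 2)))) := by linarith
    _ = 4 * 11.287 * (0.1883 * y / θ) * Real.exp (-(0.1065 * y ^ 2)) := by ring
    _ = _ := by
        rw [← h_delta]
        ring

lemma exists_highZerosCoeff_le (hH : 0 ≤ H) (hT : 105 ≤ T₀) (hX : 100 ≤ T₀ - H)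
    (hXδ : 4 * π ^ 2 * |δ| ≤ T₀ - H) :
    ∃ θ, 0 < θ ∧ θ < π / 4 ∧ highZerosCoeff H T₀ δ θ
      ≤ 4 * π * (9.462 * √(T₀ - H) * Real.exp (-0.1598 * (T₀ - H))
        + 11.287 * |δ| * Real.exp (-0.1065 * ((T₀ - H) / (π * δ)) ^ 2)) := by
  have h_first : 0 ≤ √(T₀ - H) * Real.exp (-0.1598 * (T₀ - H)) := by positivity
  have h_second : 0 ≤ 4 * π * (11.287 * |δ| * Real.exp (-0.1065 * ((T₀ - H) / (π * δ)) ^ 2)) := by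
    positivity
  rcases le_or_gt (1.5 * (π * |δ|) ^ 2) (T₀ - H) with hδ | hδ
  · refine ⟨0.28245, by norm_num, by linarith [Real.pi_gt_three], ?_⟩
    nlinarith [highZerosCoeff_le_of_sq_le hT hX hδ, Real.pi_gt_d4]
  · obtain ⟨θ, hθ0, hθ, h_le⟩ := exists_highZerosCoeff_le_of_lt_sq hH (by linarith) hXδ hδ
    refine ⟨θ, hθ0, hθ, h_le.trans ?_⟩
    nlinarith [mul_nonneg Real.pi_pos.le h_first]

end CoefficientBounds

end HighZeros

open HighZeros in
theorem sum_Gdelta_etaPlus_high_zeros_bound_general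
    (H : ℝ) (hH5 : 5 ≤ H) (δ : ℝ)
    (q : ℕ) [NeZero q] (χ : DirichletCharacter ℂ q) (hχ : χ.IsPrimitive)
    (T₀ : ℝ) (hT₀ : H + max (4 * Real.pi ^ 2 * |δ|) 100 ≤ T₀) :
    Summable (fun ρ : {ρ : ℂ // χ.LFunction ρ = 0 ∧ 0 < ρ.re ∧ ρ.re < 1 ∧ T₀ < |ρ.im|} ↦
        ‖mellin (fun t ↦ (etaPlus H t : ℂ) * e2pi (δ * t)) ρ‖) ∧
    (∑' ρ : {ρ : ℂ // χ.LFunction ρ = 0 ∧ 0 < ρ.re ∧ ρ.re < 1 ∧ T₀ < |ρ.im|},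
        ‖mellin (fun t ↦ (etaPlus H t : ℂ) * e2pi (δ * t)) ρ‖)
      ≤ (9.462 * Real.sqrt (T₀ - H) * Real.exp (-0.1598 * (T₀ - H))
          + 11.287 * |δ| * Real.exp (-0.1065 * ((T₀ - H) / (Real.pi * δ)) ^ 2))
        * Real.log (q * T₀ / (2 * Real.pi)) := by
  have hX := le_max_right (4 * Real.pi ^ 2 * |δ|) 100
  have hXδ := le_max_left (4 * Real.pi ^ 2 * |δ|) 100
  have hT : 105 ≤ T₀ := by linarith
  obtain ⟨θ, hθ0, hθ, h_coeff⟩ := exists_highZerosCoeff_le (δ := δ) (by linarith) hT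
    (show 100 ≤ T₀ - H by linarith) (by linarith)
  have h_log : 0 ≤ Real.log (q * T₀ / (2 * Real.pi)) :=
    le_trans (by norm_num) (le_log_conductor q hT)
  have h_sum (Z : Finset (highZeros χ T₀)) := le_of_mul_le_mul_left
    (calc 4 * Real.pi * ∑ ρ ∈ Z, ‖Gdelta H δ ρ‖
        ≤ highZerosCoeff H T₀ δ θ * Real.log (q * T₀ / (2 * Real.pi)) :=
          four_pi_mul_sum_norm_Gdelta_le hχ hH5 hT hθ0 hθ δ Z
      _ ≤ _ := by
          rw [← mul_assoc]
          exact mul_le_mul_of_nonneg_right h_coeff h_log)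
    (by positivity : 0 < 4 * Real.pi)
  exact ⟨summable_of_sum_le (fun _ ↦ norm_nonneg _) h_sum,
    Real.tsum_le_of_sum_le (fun _ ↦ norm_nonneg _) h_sum⟩

/-- **Lemma 4.10**: bound on the sum of `|G_δ(ρ)|` over high nontrivial zeros, for
the smoothing `η₊`. -/
theorem sum_Gdelta_etaPlus_high_zeros_bound
    (H : ℝ) (hH5 : 5 ≤ H) (δ : ℝ)
    (q : ℕ) [NeZero q] (χ : DirichletCharacter ℂ q) (hχ : χ.IsPrimitive)
    (T₀ : ℝ) (hT₀ : H + max (4 * Real.pi^2 * |δ|) 100 ≤ T₀)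
    (hGRH : ∀ ρ : ℂ, χ.LFunction ρ = 0 → 0 < ρ.re → ρ.re < 1 → |ρ.im| ≤ T₀ →
      ρ.re = 1/2) :
    (∑' ρ : {ρ : ℂ // χ.LFunction ρ = 0 ∧ 0 < ρ.re ∧ ρ.re < 1 ∧ T₀ < |ρ.im|},
        ‖mellin (fun t => (etaPlus H t : ℂ) * e2pi (δ * t)) ρ‖)
      ≤ (9.462 * Real.sqrt (T₀ - H) * Real.exp (-0.1598 * (T₀ - H))
          + 11.287 * |δ| * Real.exp (-0.1065 * ((T₀ - H) / (Real.pi * δ))^2))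
        * Real.log (q * T₀ / (2 * Real.pi)) :=
  (sum_Gdelta_etaPlus_high_zeros_bound_general H hH5 δ q χ hχ T₀ hT₀).2
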